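/- arXiv:2201.00306 — 7 statements merged into one kernel-verified Lean document; each statement's English description precedes it below -/
import Mathlib

section
/- Let n ≥ 3, let 1 ≤ m < n, and let k ≥ 1. Let F(k) be the subgroup of SL_n(ℤ) generated by U⁺(kℤ), U⁻(kℤ) and M(kℤ), and let Γ_k be the intersection of all congruence subgroups of SL_n(ℤ) containing F(k). Then the commutator subgroup [Γ_k, Γ_k] is contained in F(k). -/
/-!
Write `E(N)` for the relative elementary subgroup `E_n(ℤ, Nℤ)`, the normal closure in `SL_n(ℤ)` of
the elementary matrices `1 + N c E_{ij}`. The theorem follows from two facts, valid for `n ≥ 3`.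

* `E(k²) ≤ F(k)` (`relElem_le`, `elem_mem_Fgroup`). A conjugate of an elementary matrix in `E(k²)`
  is a transvection `1 + k² v wᵀ` with `v` unimodular and `w ⬝ v = 0`. Such a `w` is a sum of
  multiples of Koszul relations `v_b e_a - v_a e_b`. For one of these the transvection splits into a
  part with `v` and `w` of disjoint supports, which is a product of elementary matrices with entries
  in `kℤ`, and a part in the `(a, b)`-plane, which a third index `p` exhibits as a commutator of two
  such products (`tv_planePart_eq_commutator`); this commutator is what consumes the factor `k²`.

* `SL_n(Nℤ)` is central modulo `E(N)` (`principal_central`). The same decomposition, applied to the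
  conjugate of an elementary matrix by some `g ≡ 1` modulo `N`, shows that this conjugate and the
  elementary matrix agree modulo `E(N)` (`conj_elem_eq`); and the elementary matrices generate
  `SL_n(ℤ)` by Euclid's algorithm (`eq_top_of_elementary`).

Since `F(k) SL_n(k²ℤ)` is a congruence subgroup containing `F(k)`, it contains `Γ_k`. Modulo `E(k²)`
the factors in `SL_n(k²ℤ)` are central and drop out of commutators, so every commutator of elements
of `Γ_k` is a commutator of elements of `F(k)` times an element of `E(k²) ≤ F(k)`.
-/

open Matrix

/-- `U⁺(kℤ)`: matrices `I + X` in `SL_n(ℤ)` with `X` supported in the top-right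
`m × (n−m)` block and all entries of `X` divisible by `k`. -/
def Uplus (n m k : ℕ) : Set (Matrix.SpecialLinearGroup (Fin n) ℤ) :=
  {g | ∀ i j : Fin n, if i = j then g.1 i j = 1
      else if (i : ℕ) < m ∧ m ≤ (j : ℕ) then (k : ℤ) ∣ g.1 i j
      else g.1 i j = 0}

/-- `U⁻(kℤ)`: matrices `I + X` in `SL_n(ℤ)` with `X` supported in the bottom-left
`(n−m) × m` block and all entries of `X` divisible by `k`. -/
def Uminus (n m k : ℕ) : Set (Matrix.SpecialLinearGroup (Fin n) ℤ) :=
  {g | ∀ i j : Fin n, if i = j then g.1 i j = 1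
      else if m ≤ (i : ℕ) ∧ (j : ℕ) < m then (k : ℤ) ∣ g.1 i j
      else g.1 i j = 0}

/-- `M(kℤ)`: block diagonal matrices `diag(A, B)` in `SL_n(ℤ)` with `A ∈ SL_m(ℤ)`,
`B ∈ SL_{n−m}(ℤ)`, and both `A` and `B` congruent to the identity mod `k`. -/
def Mblock (n m k : ℕ) (h : m ≤ n) : Set (Matrix.SpecialLinearGroup (Fin n) ℤ) :=
  {g | (∀ i j : Fin n, ¬((i : ℕ) < m ↔ (j : ℕ) < m) → g.1 i j = 0) ∧
       (∀ i j : Fin n, (k : ℤ) ∣ (g.1 i j - if i = j then 1 else 0)) ∧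
       (Matrix.of fun i j : Fin m => g.1 (Fin.castLE h i) (Fin.castLE h j)).det = 1 ∧
       (Matrix.of fun i j : Fin (n - m) =>
          g.1 ⟨m + (i : ℕ), by have := i.2; omega⟩ ⟨m + (j : ℕ), by have := j.2; omega⟩).det = 1}

/-- `F(k)`: the subgroup of `SL_n(ℤ)` generated by `U⁺(kℤ)`, `U⁻(kℤ)` and `M(kℤ)`. -/
def Fgroup (n m k : ℕ) (h : m ≤ n) : Subgroup (Matrix.SpecialLinearGroup (Fin n) ℤ) :=
  Subgroup.closure (Uplus n m k ∪ Uminus n m k ∪ Mblock n m k h)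

/-- A subgroup of `SL_n(ℤ)` is a congruence subgroup if it contains a principal congruence
subgroup `SL_n(Nℤ)` for some `N ≥ 1`. -/
def IsCongruenceSubgroup (n : ℕ) (H : Subgroup (Matrix.SpecialLinearGroup (Fin n) ℤ)) : Prop :=
  ∃ N : ℕ, 1 ≤ N ∧ ∀ g : Matrix.SpecialLinearGroup (Fin n) ℤ,
    (∀ i j : Fin n, (N : ℤ) ∣ (g.1 i j - if i = j then 1 else 0)) → g ∈ H

/-- `Γ_k`: the intersection of all congruence subgroups of `SL_n(ℤ)` containing `F(k)`. -/
def GammaCl (n m k : ℕ) (h : m ≤ n) : Subgroup (Matrix.SpecialLinearGroup (Fin n) ℤ) :=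
  sInf {H | IsCongruenceSubgroup n H ∧ Fgroup n m k h ≤ H}

/-! ### Transvections -/

/-- The transvection `1 + v wᵀ` in `SL_n(ℤ)` attached to a column `v` and a row `w` with
`w ⬝ v = 0`; the junk value `1` is used when `w ⬝ v ≠ 0`. -/
noncomputable def tv {n : ℕ} (v w : Fin n → ℤ) : Matrix.SpecialLinearGroup (Fin n) ℤ :=
  if h : w ⬝ᵥ v = 0 then
    ⟨1 + vecMulVec v w, by
      rw [vecMulVec_eq Unit, det_one_add_replicateCol_mul_replicateRow, h, add_zero]⟩
  else 1

/-- The standard basis vector `e_i`. -/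
abbrev bv {n : ℕ} (i : Fin n) : Fin n → ℤ := Pi.single i 1

section tv

open scoped commutatorElement

variable {n : ℕ}

lemma tv_coe {v w : Fin n → ℤ} (h : w ⬝ᵥ v = 0) : (tv v w).1 = 1 + vecMulVec v w := by
  simp [tv, h]

lemma tv_add_right {v w w' : Fin n → ℤ} (h : w ⬝ᵥ v = 0) (h' : w' ⬝ᵥ v = 0) :
    tv v (w + w') = tv v w * tv v w' := by
  apply Subtype.ext
  have h2 : (w + w') ⬝ᵥ v = 0 := by rw [add_dotProduct, h, h', add_zero]
  rw [Matrix.SpecialLinearGroup.coe_mul, tv_coe h, tv_coe h', tv_coe h2, add_mul, mul_add, mul_add,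
    vecMulVec_mul_vecMulVec, h, vecMulVec_add]
  simp [add_assoc, add_comm]

lemma tv_add_left {v v' w : Fin n → ℤ} (h : w ⬝ᵥ v = 0) (h' : w ⬝ᵥ v' = 0) :
    tv (v + v') w = tv v w * tv v' w := by
  apply Subtype.ext
  have h2 : w ⬝ᵥ (v + v') = 0 := by rw [dotProduct_add, h, h', add_zero]
  rw [Matrix.SpecialLinearGroup.coe_mul, tv_coe h, tv_coe h', tv_coe h2, add_mul, mul_add, mul_add,
    vecMulVec_mul_vecMulVec, h', add_vecMulVec]
  simp [add_assoc, add_comm]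

lemma tv_eq_one {v w : Fin n → ℤ} (h : vecMulVec v w = 0) : tv v w = 1 := by
  by_cases hw : w ⬝ᵥ v = 0
  · apply Subtype.ext
    rw [tv_coe hw, h, add_zero, Matrix.SpecialLinearGroup.coe_one]
  · simp [tv, hw]

lemma tv_smul_left {v w : Fin n → ℤ} (c : ℤ) (h : w ⬝ᵥ v = 0) :
    tv (c • v) w = tv v (c • w) := by
  apply Subtype.ext
  rw [tv_coe (by rw [dotProduct_smul, h, smul_zero]), tv_coe (by rw [smul_dotProduct, h, smul_zero]),
    smul_vecMulVec, vecMulVec_smul]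

lemma tv_conj (g : Matrix.SpecialLinearGroup (Fin n) ℤ) {v w : Fin n → ℤ} (h : w ⬝ᵥ v = 0) :
    (w ᵥ* (g⁻¹).1) ⬝ᵥ (g.1 *ᵥ v) = 0 ∧
      g * tv v w * g⁻¹ = tv (g.1 *ᵥ v) (w ᵥ* (g⁻¹).1) := by
  have hg : (g⁻¹).1 * g.1 = 1 := by
    rw [← Matrix.SpecialLinearGroup.coe_mul, inv_mul_cancel, Matrix.SpecialLinearGroup.coe_one]
  have hg' : g.1 * (g⁻¹).1 = 1 := by
    rw [← Matrix.SpecialLinearGroup.coe_mul, mul_inv_cancel, Matrix.SpecialLinearGroup.coe_one]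
  have h2 : (w ᵥ* (g⁻¹).1) ⬝ᵥ (g.1 *ᵥ v) = 0 := by
    rw [dotProduct_mulVec, vecMul_vecMul, hg, vecMul_one, h]
  refine ⟨h2, Subtype.ext ?_⟩
  rw [Matrix.SpecialLinearGroup.coe_mul, Matrix.SpecialLinearGroup.coe_mul, tv_coe h, tv_coe h2, mul_add, add_mul,
    mul_one, hg', mul_vecMulVec, vecMulVec_mul]

/-- With `A = v qᵀ` and `B = p wᵀ` the hypotheses say `A² = B² = BA = 0`, whence the commutator of
`1 + A` and `1 + B` is `1 + AB`. -/
lemma tv_commutator {v q p w : Fin n → ℤ} (h1 : q ⬝ᵥ v = 0) (h2 : w ⬝ᵥ p = 0)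
    (h3 : w ⬝ᵥ v = 0) : ⁅tv v q, tv p w⁆ = tv v ((q ⬝ᵥ p) • w) := by
  have e4 : ((q ⬝ᵥ p) • w) ⬝ᵥ v = 0 := by rw [smul_dotProduct, h3, smul_zero]
  rw [commutatorElement_def, mul_inv_eq_iff_eq_mul, mul_inv_eq_iff_eq_mul]
  apply Subtype.ext
  simp only [Matrix.SpecialLinearGroup.coe_mul]
  rw [tv_coe h1, tv_coe h2, tv_coe e4]
  simp only [add_mul, mul_add, one_mul, mul_one, vecMulVec_mul_vecMulVec, h2, h3,
    smul_mul_assoc, vecMulVec_smul, zero_smul, smul_zero, vecMulVec_zero, add_zero]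
  abel

lemma tv_sum_right_mem (H : Subgroup (Matrix.SpecialLinearGroup (Fin n) ℤ)) {ι : Type*} (s : Finset ι)
    (v : Fin n → ℤ) (w : ι → Fin n → ℤ) (h : ∀ i ∈ s, w i ⬝ᵥ v = 0)
    (hH : ∀ i ∈ s, tv v (w i) ∈ H) : tv v (∑ i ∈ s, w i) ∈ H := by
  classical
  induction s using Finset.induction_on with
  | empty => simpa using (tv_eq_one (v := v) (w := 0) (by simp)) ▸ H.one_mem
  | insert a s ha ih =>
    rw [Finset.sum_insert ha, tv_add_right (h a (by simp))]
    · exact H.mul_mem (hH a (by simp)) (ih (fun i hi => h i (by simp [hi]))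
        (fun i hi => hH i (by simp [hi])))
    · rw [sum_dotProduct]
      exact Finset.sum_eq_zero fun i hi => h i (by simp [hi])

lemma tv_sum_left_mem (H : Subgroup (Matrix.SpecialLinearGroup (Fin n) ℤ)) {ι : Type*} (s : Finset ι)
    (v : ι → Fin n → ℤ) (w : Fin n → ℤ) (h : ∀ i ∈ s, w ⬝ᵥ v i = 0)
    (hH : ∀ i ∈ s, tv (v i) w ∈ H) : tv (∑ i ∈ s, v i) w ∈ H := by
  classical
  induction s using Finset.induction_on with
  | empty => simpa using (tv_eq_one (v := 0) (w := w) (by simp)) ▸ H.one_mem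
  | insert a s ha ih =>
    rw [Finset.sum_insert ha, tv_add_left (h a (by simp))]
    · exact H.mul_mem (hH a (by simp)) (ih (fun i hi => h i (by simp [hi]))
        (fun i hi => hH i (by simp [hi])))
    · rw [dotProduct_sum]
      exact Finset.sum_eq_zero fun i hi => h i (by simp [hi])

lemma dot_eq_zero_of_disjoint {v w : Fin n → ℤ} (h : ∀ i, v i = 0 ∨ w i = 0) : w ⬝ᵥ v = 0 := by
  refine Finset.sum_eq_zero fun i _ => ?_
  rcases h i with h | h <;> simp [h]

/-- If `H` contains the elementary matrices with off-diagonal entry in `kℤ`, it contains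
`1 + k v wᵀ` whenever `v` and `w` have disjoint supports. -/
lemma tv_mem_of_disjoint (H : Subgroup (Matrix.SpecialLinearGroup (Fin n) ℤ)) (k : ℤ)
    (hH : ∀ i j, i ≠ j → ∀ c : ℤ, tv (bv i) ((k * c) • bv j) ∈ H) {v w : Fin n → ℤ}
    (h : ∀ i, v i = 0 ∨ w i = 0) : tv v (k • w) ∈ H := by
  have hv : v = ∑ i, v i • bv i := by
    ext j; simp [Finset.sum_apply, Pi.single_apply]
  have hw : w = ∑ i, w i • bv i := by
    ext j; simp [Finset.sum_apply, Pi.single_apply]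
  have hd : ∀ i, (k • w) ⬝ᵥ (v i • bv i) = 0 := fun i => by
    rw [smul_dotProduct, dotProduct_smul]
    rcases h i with h | h <;> simp [h]
  rw [hv]
  refine tv_sum_left_mem H _ _ _ (fun i _ => hd i) fun i _ => ?_
  by_cases hi : v i = 0
  · rw [tv_eq_one (by simp [hi])]
    exact H.one_mem
  have hwi : w i = 0 := (h i).resolve_left hi
  rw [tv_smul_left _ (by simp [hwi]), hw, Finset.smul_sum, Finset.smul_sum]
  have aux : ∀ j, (v i • k • w j • bv j) = (k * (v i * w j)) • bv j := fun j => by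
    simp only [smul_smul]; congr 1; ring
  refine tv_sum_right_mem H _ _ _ (fun j _ => ?_) fun j _ => ?_
  · rw [aux]
    by_cases hij : j = i
    · subst hij; simp [hwi]
    · simp [hij]
  · rw [aux]
    by_cases hij : i = j
    · subst hij
      rw [tv_eq_one (by simp [hwi])]
      exact H.one_mem
    · exact hH i j hij _

end tv

/-! ### Generation of `SL_n(ℤ)` by elementary matrices -/

section generation

variable {n : ℕ}

/-- The elementary matrix `1 + c E_{ij}` acts on the left by adding `c` times row `j` to row `i`. -/
lemma tv_bv_mul_apply {i j : Fin n} (hij : i ≠ j) (c : ℤ) (A : Matrix.SpecialLinearGroup (Fin n) ℤ)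
    (x y : Fin n) :
    (tv (bv i) (c • bv j) * A).1 x y = A.1 x y + if x = i then c * A.1 j y else 0 := by
  have h : (c • bv j) ⬝ᵥ bv i = 0 := by simp [hij.symm]
  rw [Matrix.SpecialLinearGroup.coe_mul, tv_coe h, add_mul, one_mul, vecMulVec_mul, Matrix.add_apply,
    vecMulVec_apply, smul_vecMul]
  by_cases hx : x = i
  · subst hx; simp [Matrix.row]
  · simp [hx]

/-- Equality with the identity outside the rows and columns indexed by `s`. -/
def IdOutside (s : Finset (Fin n)) (A : Matrix.SpecialLinearGroup (Fin n) ℤ) : Prop :=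
  ∀ i j, (i ∉ s ∨ j ∉ s) → A.1 i j = (1 : Matrix (Fin n) (Fin n) ℤ) i j

lemma IdOutside.row_op {s : Finset (Fin n)} {A : Matrix.SpecialLinearGroup (Fin n) ℤ}
    (hA : IdOutside s A) {i j : Fin n} (hij : i ≠ j) (hi : i ∈ s) (hj : j ∈ s) (c : ℤ) :
    IdOutside s (tv (bv i) (c • bv j) * A) := by
  intro x y hxy
  rw [tv_bv_mul_apply hij, hA x y hxy]
  by_cases hx : x = i
  · subst hx
    have hy : y ∉ s := hxy.resolve_left (by simpa using hi)
    have : A.1 j y = 0 := by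
      rw [hA j y (Or.inr hy), Matrix.one_apply_ne]
      rintro rfl; exact hy hj
    simp [this]
  · simp [hx]

/-- Euclid's algorithm on column `a`: row operations among the rows `insert a t` clear the entries
of that column in the rows `t`. -/
lemma exists_clear_column (S : Subgroup (Matrix.SpecialLinearGroup (Fin n) ℤ))
    (hS : ∀ i j, i ≠ j → ∀ c : ℤ, tv (bv i) (c • bv j) ∈ S) {a : Fin n} {t : Finset (Fin n)}
    (ha : a ∉ t) (N : ℕ) : ∀ A : Matrix.SpecialLinearGroup (Fin n) ℤ, IdOutside (insert a t) A →
      ∑ i ∈ t, (A.1 i a).natAbs = N →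
      ∃ g ∈ S, IdOutside (insert a t) (g * A) ∧ ∀ i ∈ t, (g * A).1 i a = 0 := by
  induction N using Nat.strong_induction_on with
  | _ N ih =>
    intro A hA hN
    by_cases h0 : ∀ i ∈ t, A.1 i a = 0
    · exact ⟨1, S.one_mem, by rwa [one_mul], by simpa using h0⟩
    push Not at h0
    obtain ⟨i, hi, hx⟩ := h0
    have hai : a ≠ i := by rintro rfl; exact ha hi
    set x := A.1 i a with hxdef
    set y := A.1 a a with hydef
    -- The first operation turns the pivot `y` into `d = ((y - 1) mod x) + 1`, so `0 < d ≤ |x|`;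
    -- the second one replaces `x` by `x mod d`.
    set d := (y - 1) % x + 1 with hd
    have hd0 : 0 < d := by have := Int.emod_nonneg (y - 1) hx; omega
    have hdx : d ≤ x.natAbs := by
      have := Int.emod_lt_abs (y - 1) hx
      rw [Int.abs_eq_natAbs] at this
      omega
    set B := tv (bv a) ((-((y - 1) / x)) • bv i) * A with hB
    set C := tv (bv i) ((-(x / d)) • bv a) * B with hC
    have hBI : IdOutside (insert a t) B := hA.row_op hai (by simp) (by simp [hi]) _
    have hCI : IdOutside (insert a t) C := hBI.row_op hai.symm (by simp [hi]) (by simp) _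
    have hBa : B.1 a a = d := by
      rw [hB, tv_bv_mul_apply hai, if_pos rfl, ← hxdef, ← hydef, hd, Int.emod_def]; ring
    have hBj : ∀ j, j ≠ a → B.1 j a = A.1 j a := fun j hj => by
      rw [hB, tv_bv_mul_apply hai, if_neg hj, add_zero]
    have hCi : C.1 i a = x % d := by
      rw [hC, tv_bv_mul_apply hai.symm, if_pos rfl, hBa, hBj i hai.symm, ← hxdef, Int.emod_def]; ring
    have hCj : ∀ j ∈ t, j ≠ i → C.1 j a = A.1 j a := fun j hj hji => by
      rw [hC, tv_bv_mul_apply hai.symm, if_neg hji, add_zero, hBj]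
      rintro rfl; exact ha hj
    have hlt : ∑ j ∈ t, (C.1 j a).natAbs < N := by
      rw [← hN]
      refine Finset.sum_lt_sum (fun j hj => ?_) ⟨i, hi, ?_⟩
      · by_cases hji : j = i
        · subst hji
          rw [hCi, ← hxdef]
          have h1 := Int.emod_nonneg x hd0.ne'
          have h2 := Int.emod_lt_of_pos x hd0
          omega
        · rw [hCj j hj hji]
      · rw [hCi, ← hxdef]
        have h1 := Int.emod_nonneg x hd0.ne'
        have h2 := Int.emod_lt_of_pos x hd0
        omega
    obtain ⟨g, hg, hgI, hg0⟩ := ih _ hlt C hCI rfl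
    refine ⟨g * (tv (bv i) ((-(x / d)) • bv a) * tv (bv a) ((-((y - 1) / x)) • bv i)),
      S.mul_mem hg (S.mul_mem (hS _ _ hai.symm _) (hS _ _ hai _)), ?_, ?_⟩
    · simpa only [mul_assoc] using hgI
    · simpa only [mul_assoc] using hg0

/-- Induction on `s`: clear column and row `a` to pass from `insert a t` to `t`. -/
lemma mem_of_idOutside (S : Subgroup (Matrix.SpecialLinearGroup (Fin n) ℤ))
    (hS : ∀ i j, i ≠ j → ∀ c : ℤ, tv (bv i) (c • bv j) ∈ S) (s : Finset (Fin n)) :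
    ∀ A, IdOutside s A → A ∈ S := by
  induction s using Finset.induction_on with
  | empty =>
    intro A hA
    have : A = 1 := by
      ext i j; exact hA i j (by simp)
    exact this ▸ S.one_mem
  | insert a t ha ih =>
    -- Once column `a` is the basis vector `e_a`, column operations clear row `a`.
    have key : ∀ A, IdOutside (insert a t) A → (∀ i ∈ t, A.1 i a = 0) → A.1 a a = 1 → A ∈ S := by
      intro A hA h0 h1
      have hcol : ∀ x, A.1 x a = (1 : Matrix (Fin n) (Fin n) ℤ) x a := by
        intro x
        by_cases hx : x = a
        · subst hx; simp [h1]
        · rw [Matrix.one_apply_ne hx]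
          by_cases hxt : x ∈ t
          · exact h0 x hxt
          · rw [hA x a (by simp [hx, hxt]), Matrix.one_apply_ne hx]
      set w : Fin n → ℤ := fun j => (1 : Matrix (Fin n) (Fin n) ℤ) a j - A.1 a j with hw
      have hwa : w a = 0 := by simp [hw, h1]
      have hg : tv (bv a) w ∈ S := by
        have := tv_mem_of_disjoint S 1 (by simpa using hS) (v := bv a) (w := w) (fun i => by
          by_cases hi : i = a
          · subst hi; exact Or.inr hwa
          · left; simp [hi])
        simpa using this
      have hcolv : A.1 *ᵥ bv a = bv a := by
        ext x; simp [hcol, Matrix.one_apply, Pi.single_apply]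
      have hprod : (A * tv (bv a) w).1 = A.1 + vecMulVec (bv a) w := by
        rw [Matrix.SpecialLinearGroup.coe_mul, tv_coe (by simp [hwa]), mul_add, mul_one,
          mul_vecMulVec, hcolv]
      rw [← S.mul_mem_cancel_right hg]
      refine ih _ fun i j hij => ?_
      rw [hprod, Matrix.add_apply, vecMulVec_apply]
      by_cases hi : i = a
      · subst hi; simp [hw]
      · simp only [Pi.single_apply, hi, if_false, zero_mul, add_zero]
        by_cases hj : j = a
        · subst hj; exact hcol i
        · exact hA i j (by simpa [hi, hj] using hij)
    intro A hA
    rcases t.eq_empty_or_nonempty with rfl | ⟨i, hi⟩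
    · refine key A hA (by simp) ?_
      have hdiag : A.1 = Matrix.diagonal (fun i => if i = a then A.1 a a else 1) := by
        ext x y
        by_cases h : x = a ∧ y = a
        · obtain ⟨rfl, rfl⟩ := h; simp
        · rw [hA x y (by simp; tauto)]
          by_cases hxy : x = y
          · subst hxy
            have : x ≠ a := fun h' => h ⟨h', h'⟩
            simp [this]
          · simp [hxy]
      have hdet := A.2
      rw [hdiag, Matrix.det_diagonal] at hdet
      simpa using hdet
    · have hai : a ≠ i := by rintro rfl; exact ha hi
      obtain ⟨g, hg, hgI, hg0⟩ := exists_clear_column S hS ha _ A hA rfl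
      rw [← S.mul_mem_cancel_left hg]
      generalize g * A = B at hgI hg0
      have hunit : IsUnit (B.1 a a) := by
        have h1 : ((B⁻¹).1 * B.1) a a = 1 := by
          rw [← Matrix.SpecialLinearGroup.coe_mul, inv_mul_cancel,
            Matrix.SpecialLinearGroup.coe_one, Matrix.one_apply_eq]
        rw [Matrix.mul_apply, Finset.sum_eq_single a] at h1
        · exact IsUnit.of_mul_eq_one_right _ h1
        · intro x _ hx
          by_cases hxt : x ∈ t
          · rw [hg0 x hxt, mul_zero]
          · rw [hgI x a (by simp [hx, hxt]), Matrix.one_apply_ne hx, mul_zero]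
        · simp
      rcases Int.isUnit_iff.1 hunit with h1 | h1
      · exact key B hgI hg0 h1
      · -- Three row operations take `(-1, 0)` to `(-1, -1)`, `(1, -1)` and `(1, 0)`.
        have e1 := hS i a hai.symm 1
        have e2 := hS a i hai (-2)
        rw [← S.mul_mem_cancel_left e1, ← S.mul_mem_cancel_left e2, ← S.mul_mem_cancel_left e1]
        have m1 : i ∈ insert a t := by simp [hi]
        have m2 : a ∈ insert a t := by simp
        refine key _ (((hgI.row_op hai.symm m1 m2 _).row_op hai m2 m1 _).row_op hai.symm m1 m2 _)
          (fun j hj => ?_) ?_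
        · have hja : j ≠ a := by rintro rfl; exact ha hj
          have hjz := hg0 j hj
          have hiz := hg0 i hi
          by_cases hji : j = i
          · subst hji
            simp only [tv_bv_mul_apply hai, tv_bv_mul_apply hai.symm]
            simp [hai, hja, h1, hiz]
          · simp only [tv_bv_mul_apply hai, tv_bv_mul_apply hai.symm]
            simp [hja, hji, hjz]
        · simp only [tv_bv_mul_apply hai, tv_bv_mul_apply hai.symm]
          simp [hai, h1, hg0 i hi]

lemma eq_top_of_elementary (S : Subgroup (Matrix.SpecialLinearGroup (Fin n) ℤ))
    (hS : ∀ i j, i ≠ j → ∀ c : ℤ, tv (bv i) (c • bv j) ∈ S) : S = ⊤ :=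
  (Subgroup.eq_top_iff' S).2 fun A => mem_of_idOutside S hS Finset.univ A (by simp [IdOutside])

end generation

/-! ### Relative elementary subgroups -/

section relative

open scoped commutatorElement

variable {n : ℕ}

/-- The relative elementary subgroup `E_n(ℤ, Nℤ)`: the normal closure in `SL_n(ℤ)` of the
elementary matrices with off-diagonal entry divisible by `N`. -/
def relElem (n : ℕ) (N : ℤ) : Subgroup (Matrix.SpecialLinearGroup (Fin n) ℤ) :=
  Subgroup.normalClosure {g | ∃ i j, i ≠ j ∧ ∃ c : ℤ, g = tv (bv i) ((N * c) • bv j)}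

instance relElem_normal (N : ℤ) : (relElem n N).Normal := Subgroup.normalClosure_normal

lemma elem_mem_relElem (N : ℤ) (i j : Fin n) (hij : i ≠ j) (c : ℤ) :
    tv (bv i) ((N * c) • bv j) ∈ relElem n N :=
  Subgroup.subset_normalClosure ⟨i, j, hij, c, rfl⟩

/-- The Koszul relation `v_b e_a - v_a e_b` among the coordinates of `v`. -/
def koszul (v : Fin n → ℤ) (a b : Fin n) : Fin n → ℤ := v b • bv a - v a • bv b

lemma koszul_dot (v : Fin n → ℤ) (a b : Fin n) : koszul v a b ⬝ᵥ v = 0 := by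
  simp only [koszul, sub_dotProduct, smul_dotProduct, single_one_dotProduct, smul_eq_mul]
  ring

lemma koszul_apply_of_ne (v : Fin n → ℤ) {a b p : Fin n} (ha : p ≠ a) (hb : p ≠ b) :
    koszul v a b p = 0 := by
  simp [koszul, ha, hb]

/-- The projection of `v` to the plane spanned by `e_a` and `e_b` (for `a ≠ b`). -/
def planePart (v : Fin n → ℤ) (a b : Fin n) : Fin n → ℤ := v a • bv a + v b • bv b

lemma planePart_apply_of_ne (v : Fin n → ℤ) {a b p : Fin n} (ha : p ≠ a) (hb : p ≠ b) :
    planePart v a b p = 0 := by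
  simp [planePart, ha, hb]

lemma koszul_dot_planePart (v : Fin n → ℤ) {a b : Fin n} (hab : a ≠ b) :
    koszul v a b ⬝ᵥ planePart v a b = 0 := by
  simp only [koszul, planePart, dotProduct_add, sub_dotProduct, smul_dotProduct, dotProduct_smul,
    single_one_dotProduct]
  simp [hab, hab.symm]
  ring

lemma sub_planePart_apply (v : Fin n → ℤ) {a b : Fin n} (hab : a ≠ b) :
    (v - planePart v a b) a = 0 ∧ (v - planePart v a b) b = 0 := by
  simp [planePart, hab, hab.symm]

lemma disjoint_sub_planePart (v : Fin n → ℤ) {a b : Fin n} (hab : a ≠ b) (i : Fin n) :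
    (v - planePart v a b) i = 0 ∨ koszul v a b i = 0 := by
  by_cases ha : i = a
  · subst ha; exact Or.inl (sub_planePart_apply v hab).1
  by_cases hb : i = b
  · subst hb; exact Or.inl (sub_planePart_apply v hab).2
  exact Or.inr (koszul_apply_of_ne v ha hb)

/-- In the first factor the column and the row have disjoint supports; the second lives in the
`(a, b)`-plane. -/
lemma tv_koszul_split (v : Fin n → ℤ) {a b : Fin n} (hab : a ≠ b) (c : ℤ) :
    tv v (c • koszul v a b) =
      tv (v - planePart v a b) (c • koszul v a b) * tv (planePart v a b) (c • koszul v a b) := by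
  have h1 : (c • koszul v a b) ⬝ᵥ planePart v a b = 0 := by
    rw [smul_dotProduct, koszul_dot_planePart v hab, smul_zero]
  rw [← tv_add_left _ h1, sub_add_cancel]
  rw [dotProduct_sub, h1, smul_dotProduct, koszul_dot, smul_zero, sub_zero]

/-- A third index `p` writes the transvection in the `(a, b)`-plane as a commutator. -/
lemma tv_planePart_eq_commutator (v : Fin n → ℤ) {a b p : Fin n} (hab : a ≠ b) (ha : p ≠ a)
    (hb : p ≠ b) (s c : ℤ) :
    tv (planePart v a b) ((s * c) • koszul v a b) =
      ⁅tv (planePart v a b) (s • bv p), tv (bv p) (c • koszul v a b)⁆ := by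
  rw [tv_commutator]
  · congr 1
    simp [mul_smul]
  · rw [smul_dotProduct, single_one_dotProduct, planePart_apply_of_ne v ha hb, smul_zero]
  · rw [smul_dotProduct, dotProduct_single_one, koszul_apply_of_ne v ha hb, smul_zero]
  · rw [smul_dotProduct, koszul_dot_planePart v hab, smul_zero]

lemma exists_third (hn : 3 ≤ n) (a b : Fin n) : ∃ p, p ≠ a ∧ p ≠ b := by
  by_contra! h
  have hsub : (Finset.univ : Finset (Fin n)) ⊆ {a, b} := fun p _ => by
    by_cases hp : p = a
    · simp [hp]
    · simp [h p hp]
  have h1 := Finset.card_le_card hsub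
  have h2 : Finset.card {a, b} ≤ 2 := Finset.card_le_two
  rw [Finset.card_univ, Fintype.card_fin] at h1
  omega

/-- Any `w` orthogonal to a unimodular `v` is a combination of Koszul relations. -/
lemma eq_sum_koszul {u v w : Fin n → ℤ} (hu : u ⬝ᵥ v = 1) (hw : w ⬝ᵥ v = 0) :
    w = ∑ p : Fin n × Fin n, (w p.1 * u p.2) • koszul v p.1 p.2 := by
  ext x
  rw [Fintype.sum_prod_type, Finset.sum_apply]
  simp only [Finset.sum_apply, koszul, Pi.smul_apply, Pi.sub_apply, Pi.single_apply, smul_eq_mul,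
    mul_sub, Finset.sum_sub_distrib, mul_ite, mul_one, mul_zero]
  rw [Finset.sum_comm]
  simp only [Finset.sum_ite_eq, Finset.mem_univ, if_true]
  have e1 : ∑ y, w x * u y * v y = w x * (u ⬝ᵥ v) := by
    rw [dotProduct, Finset.mul_sum]; exact Finset.sum_congr rfl fun _ _ => by ring
  have e2 : ∑ y, w y * u x * v y = u x * (w ⬝ᵥ v) := by
    rw [dotProduct, Finset.mul_sum]; exact Finset.sum_congr rfl fun _ _ => by ring
  rw [e1, e2, hu, hw]
  ring

/-- The decomposition of `w` into Koszul relations, each handled by `tv_koszul_split` and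
`tv_planePart_eq_commutator`. -/
lemma tv_mem_of_unimodular (hn : 3 ≤ n) (H : Subgroup (Matrix.SpecialLinearGroup (Fin n) ℤ)) (k : ℤ)
    (hH : ∀ i j, i ≠ j → ∀ c : ℤ, tv (bv i) ((k * c) • bv j) ∈ H) {u v w : Fin n → ℤ}
    (hu : u ⬝ᵥ v = 1) (hw : w ⬝ᵥ v = 0) : tv v ((k * k) • w) ∈ H := by
  rw [eq_sum_koszul hu hw, Finset.smul_sum]
  refine tv_sum_right_mem H _ _ _ (fun p _ => ?_) fun p _ => ?_
  · rw [smul_dotProduct, smul_dotProduct, koszul_dot, smul_zero, smul_zero]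
  obtain ⟨a, b⟩ := p
  generalize w (a, b).1 * u (a, b).2 = c
  change tv v ((k * k) • c • koszul v a b) ∈ H
  by_cases hab : a = b
  · subst hab
    rw [tv_eq_one (by simp [koszul])]
    exact H.one_mem
  obtain ⟨p, hpa, hpb⟩ := exists_third hn a b
  rw [smul_smul, tv_koszul_split v hab, mul_assoc, tv_planePart_eq_commutator v hab hpa hpb]
  have m1 : tv (v - planePart v a b) ((k * (k * c)) • koszul v a b) ∈ H := by
    rw [mul_smul]
    refine tv_mem_of_disjoint H k hH fun i => ?_
    rcases disjoint_sub_planePart v hab i with h | h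
    · exact Or.inl h
    · right; simp [h]
  have m2 : tv (planePart v a b) (k • bv p) ∈ H := by
    refine tv_mem_of_disjoint H k hH fun i => ?_
    by_cases hi : i = p
    · subst hi; exact Or.inl (planePart_apply_of_ne v hpa hpb)
    · right; simp [hi]
  have m3 : tv (bv p) ((k * c) • koszul v a b) ∈ H := by
    rw [mul_smul]
    refine tv_mem_of_disjoint H k hH fun i => ?_
    by_cases hi : i = p
    · subst hi; right; simp [koszul_apply_of_ne v hpa hpb]
    · left; simp [hi]
  rw [commutatorElement_def]
  exact H.mul_mem m1 (H.mul_mem (H.mul_mem (H.mul_mem m2 m3) (H.inv_mem m2)) (H.inv_mem m3))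

/-- A subgroup containing all elementary matrices with off-diagonal entry in `kℤ` contains
`E_n(ℤ, k²ℤ)`. -/
lemma relElem_le (hn : 3 ≤ n) (H : Subgroup (Matrix.SpecialLinearGroup (Fin n) ℤ)) (k : ℤ)
    (hH : ∀ i j, i ≠ j → ∀ c : ℤ, tv (bv i) ((k * c) • bv j) ∈ H) : relElem n (k * k) ≤ H := by
  rw [relElem, Subgroup.normalClosure, Subgroup.closure_le]
  intro x hx
  obtain ⟨_, ⟨i, j, hij, c, rfl⟩, hconj⟩ := Group.mem_conjugatesOfSet_iff.1 hx
  obtain ⟨g, rfl⟩ := isConj_iff.1 hconj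
  have hd : (c • bv j) ⬝ᵥ bv i = 0 := by simp [hij.symm]
  have hd2 : ((k * k * c) • bv j) ⬝ᵥ bv i = 0 := by simp [hij.symm]
  rw [(tv_conj g hd2).2, mul_smul, smul_vecMul]
  refine tv_mem_of_unimodular hn H k hH (u := bv i ᵥ* (g⁻¹).1) ?_ (tv_conj g hd).1
  rw [dotProduct_mulVec, vecMul_vecMul, ← Matrix.SpecialLinearGroup.coe_mul, inv_mul_cancel,
    Matrix.SpecialLinearGroup.coe_one, vecMul_one]
  simp

/-- `1 + N v wᵀ` lies in `E_n(ℤ, Nℤ)` when `v` is a column of an element of `SL_n(ℤ)`. -/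
lemma tv_mem_relElem (N : ℤ) (g : Matrix.SpecialLinearGroup (Fin n) ℤ) (i : Fin n) {w : Fin n → ℤ}
    (hw : w ⬝ᵥ (g.1 *ᵥ bv i) = 0) : tv (g.1 *ᵥ bv i) (N • w) ∈ relElem n N := by
  have hd : (w ᵥ* g.1) ⬝ᵥ bv i = 0 := by rw [← dotProduct_mulVec, hw]
  have hd' : (N • (w ᵥ* g.1)) ⬝ᵥ bv i = 0 := by rw [smul_dotProduct, hd, smul_zero]
  have h1 := (tv_conj g hd').2
  rw [smul_vecMul, vecMul_vecMul, ← Matrix.SpecialLinearGroup.coe_mul, mul_inv_cancel,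
    Matrix.SpecialLinearGroup.coe_one, vecMul_one] at h1
  rw [← h1]
  refine (relElem_normal N).conj_mem _ ?_ g
  refine tv_mem_of_disjoint _ N (elem_mem_relElem N) fun x => ?_
  by_cases hx : x = i
  · subst hx; right; simpa using hd
  · left; simp [hx]

/-- Modulo `E_n(ℤ, Nℤ)`, an element congruent to `1` modulo `N` commutes with every elementary
matrix. -/
lemma conj_elem_eq (hn : 3 ≤ n) {N : ℤ} (hN : N ≠ 0) (g : Matrix.SpecialLinearGroup (Fin n) ℤ)
    (hg : ∀ i j, N ∣ g.1 i j - (1 : Matrix (Fin n) (Fin n) ℤ) i j)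
    (hg' : ∀ i j, N ∣ (g⁻¹).1 i j - (1 : Matrix (Fin n) (Fin n) ℤ) i j)
    {i j : Fin n} (hij : i ≠ j) (c : ℤ) :
    (QuotientGroup.mk' (relElem n N)) (g * tv (bv i) (c • bv j) * g⁻¹) =
      QuotientGroup.mk' (relElem n N) (tv (bv i) (c • bv j)) := by
  set π := QuotientGroup.mk' (relElem n N) with hπ
  have hone : ∀ x ∈ relElem n N, π x = 1 := fun x hx => (QuotientGroup.eq_one_iff x).2 hx
  have hdj : ∀ {v w : Fin n → ℤ}, (∀ x, v x = 0 ∨ w x = 0) → π (tv v (N • w)) = 1 :=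
    fun h => hone _ (tv_mem_of_disjoint _ N (elem_mem_relElem N) h)
  obtain ⟨p, hpj, hpi⟩ := exists_third hn j i
  have hd : (c • bv j) ⬝ᵥ bv i = 0 := by simp [hij.symm]
  obtain ⟨hdot, hconj⟩ := tv_conj g hd
  rw [hconj]
  choose γ hγ using fun x => hg x i
  choose δ hδ using fun x => hg' j x
  set v := g.1 *ᵥ bv i with hv
  have hvx : ∀ x, v x = (1 : Matrix (Fin n) (Fin n) ℤ) x i + N * γ x := fun x => by
    rw [← hγ x, hv]; simp
  have hvi : v i = 1 + N * γ i := by rw [hvx, Matrix.one_apply_eq]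
  have hvj : v j = N * γ j := by rw [hvx, Matrix.one_apply_ne hij.symm, zero_add]
  have hr : koszul v j i = bv j + N • (γ i • bv j - γ j • bv i) := by
    rw [koszul, hvi, hvj]
    module
  have hpl : planePart v j i = bv i + N • (γ j • bv j + γ i • bv i) := by
    rw [planePart, hvi, hvj]
    module
  -- `w` differs from `c` times the Koszul relation by a multiple of `N`
  set w := (c • bv j) ᵥ* (g⁻¹).1 with hw
  set w' : Fin n → ℤ := c • (δ - (γ i • bv j - γ j • bv i)) with hw'
  have hww : w = c • koszul v j i + N • w' := by
    have : w = c • (bv j + N • δ) := by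
      ext x
      have h2 : (g⁻¹).1 j x = (bv j + N • δ) x := by
        simp only [Pi.add_apply, Pi.smul_apply, smul_eq_mul, ← hδ x, Matrix.one_apply,
          Pi.single_apply, eq_comm (a := x)]
        ring
      rw [hw, smul_vecMul, Pi.smul_apply, Pi.smul_apply, ← h2]
      simp [Matrix.row]
    rw [this, hr, hw']
    module
  have hck : ∀ c : ℤ, (c • koszul v j i) ⬝ᵥ v = 0 := fun c => by
    rw [smul_dotProduct, koszul_dot, smul_zero]
  have hNw' : (N • w') ⬝ᵥ v = 0 := by
    rw [hww, add_dotProduct, hck, zero_add] at hdot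
    exact hdot
  have hw'v : w' ⬝ᵥ v = 0 := by
    rw [smul_dotProduct, smul_eq_mul] at hNw'
    exact (mul_eq_zero.1 hNw').resolve_left hN
  rw [hww, tv_add_right (hck c) hNw', map_mul, hone _ (tv_mem_relElem N g i hw'v), mul_one,
    tv_koszul_split v hij.symm, map_mul]
  have hout : v - planePart v j i = N • (γ - (γ j • bv j + γ i • bv i)) := by
    have : v = bv i + N • γ := by
      ext x; rw [hvx]; simp [Matrix.one_apply, Pi.single_apply]
    rw [hpl]
    nth_rewrite 1 [this]
    module
  have h1 : π (tv (v - planePart v j i) (c • koszul v j i)) = 1 := by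
    have hdis : ∀ x, (γ - (γ j • bv j + γ i • bv i)) x = 0 ∨ (c • koszul v j i) x = 0 := by
      intro x
      have := disjoint_sub_planePart v hij.symm x
      rw [hout] at this
      rcases this with h | h
      · left
        rw [Pi.smul_apply, smul_eq_mul] at h
        exact (mul_eq_zero.1 h).resolve_left hN
      · right; simp [h]
    rw [hout, tv_smul_left _ (dot_eq_zero_of_disjoint hdis)]
    exact hdj hdis
  rw [h1, one_mul]
  have h2 := tv_planePart_eq_commutator v hij.symm hpj hpi 1 c
  rw [one_mul, one_smul] at h2
  rw [h2, map_commutatorElement]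
  have h3 : π (tv (planePart v j i) (bv p)) = π (tv (bv i) (bv p)) := by
    have hz : ∀ x, (γ j • bv j + γ i • bv i) x = 0 ∨ bv p x = 0 := fun x => by
      by_cases hx : x = p
      · subst hx; left; simp [hpj, hpi]
      · right; simp [hx]
    have hz0 := dot_eq_zero_of_disjoint hz
    rw [hpl, tv_add_left (by simp [hpi.symm]) (by rw [dotProduct_smul, hz0, smul_zero]), map_mul,
      tv_smul_left _ hz0, hdj hz, mul_one]
  have h4 : π (tv (bv p) (c • koszul v j i)) = π (tv (bv p) (c • bv j)) := by
    have hz : ∀ x, bv p x = 0 ∨ (c • (γ i • bv j - γ j • bv i)) x = 0 := fun x => by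
      by_cases hx : x = p
      · subst hx; right; simp [hpj, hpi]
      · left; simp [hx]
    have hz0 := dot_eq_zero_of_disjoint hz
    rw [hr, smul_add, smul_comm c N, tv_add_right (by simp [hpj.symm])
      (by rw [smul_dotProduct, hz0, smul_zero]), map_mul, hdj hz, mul_one]
  rw [h3, h4, ← map_commutatorElement, tv_commutator (by simp [hpi]) (by simp [hpj.symm]) hd]
  simp

end relative

/-! ### Elementary matrices in `F(k)` and the principal congruence subgroup -/

section final

open scoped commutatorElement

variable {n : ℕ}

lemma tv_bv_apply {i j : Fin n} (hij : i ≠ j) (c : ℤ) (x y : Fin n) :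
    (tv (bv i) (c • bv j)).1 x y = (if x = y then 1 else 0) + if x = i ∧ y = j then c else 0 := by
  have h := tv_bv_mul_apply hij c 1 x y
  rw [mul_one, Matrix.SpecialLinearGroup.coe_one, Matrix.one_apply, Matrix.one_apply] at h
  rw [h]
  by_cases hx : x = i <;> by_cases hy : y = j <;> simp [hx, hy, eq_comm (a := j)]

/-- Restricting an elementary matrix along an injection of index sets gives an elementary matrix
or the identity, so the determinant stays `1`. -/
lemma det_submatrix_tv {l : ℕ} (f : Fin l → Fin n) (hf : Function.Injective f) {i j : Fin n}
    (hij : i ≠ j) (c : ℤ) :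
    (Matrix.of fun x y : Fin l => (tv (bv i) (c • bv j)).1 (f x) (f y)).det = 1 := by
  by_cases h : ∃ a b, f a = i ∧ f b = j
  · obtain ⟨a, b, rfl, rfl⟩ := h
    have hab : a ≠ b := fun h => hij (by rw [h])
    refine Eq.trans (congrArg Matrix.det ?_) (Matrix.det_transvection_of_ne a b hab c)
    ext x y
    rw [Matrix.of_apply, tv_bv_apply hij]
    simp [Matrix.transvection, Matrix.one_apply, Matrix.single_apply, hf.eq_iff, eq_comm]
  · refine Eq.trans (congrArg Matrix.det ?_) (Matrix.det_one (n := Fin l) (R := ℤ))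
    ext x y
    rw [Matrix.of_apply, tv_bv_apply hij, if_neg fun hxy => h ⟨x, y, hxy⟩]
    simp [Matrix.one_apply, hf.eq_iff]

lemma elem_mem_Fgroup {m k : ℕ} (h : m ≤ n) {i j : Fin n} (hij : i ≠ j) (c : ℤ) :
    tv (bv i) (((k : ℤ) * c) • bv j) ∈ Fgroup n m k h := by
  apply Subgroup.subset_closure
  have hdvd : ∀ x y : Fin n, (k : ℤ) ∣ if x = i ∧ y = j then (k : ℤ) * c else 0 := fun x y => by
    split_ifs <;> simp
  have hoff : ∀ x y : Fin n, x = y → ¬(x = i ∧ y = j) := by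
    rintro x _ rfl ⟨rfl, rfl⟩
    exact hij rfl
  by_cases hblock : (i : ℕ) < m ↔ (j : ℕ) < m
  · refine Or.inr ⟨fun x y hxy => ?_, fun x y => ?_, det_submatrix_tv _ ?_ hij _,
      det_submatrix_tv _ ?_ hij _⟩
    · rw [tv_bv_apply hij, if_neg, if_neg, add_zero]
      · rintro ⟨rfl, rfl⟩; exact hxy hblock
      · rintro rfl; exact hxy Iff.rfl
    · rw [tv_bv_apply hij, add_sub_cancel_left]
      exact hdvd x y
    · exact Fin.castLE_injective h
    · intro a b hab
      simp only [Fin.mk.injEq] at hab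
      exact Fin.ext (by omega)
  · refine Or.inl ?_
    by_cases hi : (i : ℕ) < m
    · refine Or.inl fun x y => ?_
      rw [tv_bv_apply hij]
      by_cases hxy : x = y
      · rw [if_pos hxy, if_pos hxy, if_neg (hoff x y hxy), add_zero]
      · rw [if_neg hxy, if_neg hxy, zero_add]
        split_ifs with h1 h2 h2
        · simp
        · simp
        · obtain ⟨rfl, rfl⟩ := h2
          exact absurd ⟨hi, by omega⟩ h1
        · rfl
    · refine Or.inr fun x y => ?_
      rw [tv_bv_apply hij]
      by_cases hxy : x = y
      · rw [if_pos hxy, if_pos hxy, if_neg (hoff x y hxy), add_zero]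
      · rw [if_neg hxy, if_neg hxy, zero_add]
        split_ifs with h1 h2 h2
        · simp
        · simp
        · obtain ⟨rfl, rfl⟩ := h2
          exact absurd ⟨by omega, by omega⟩ h1
        · rfl

/-- The principal congruence subgroup `SL_n(Nℤ)`, as the kernel of reduction modulo `N`. -/
def principal (n N : ℕ) : Subgroup (Matrix.SpecialLinearGroup (Fin n) ℤ) :=
  (Matrix.SpecialLinearGroup.map (n := Fin n) (Int.castRingHom (ZMod N))).ker

instance principal_normal (N : ℕ) : (principal n N).Normal := MonoidHom.normal_ker _

lemma mem_principal {N : ℕ} {g : Matrix.SpecialLinearGroup (Fin n) ℤ} :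
    g ∈ principal n N ↔ ∀ i j, (N : ℤ) ∣ g.1 i j - (1 : Matrix (Fin n) (Fin n) ℤ) i j := by
  rw [principal, MonoidHom.mem_ker, Matrix.SpecialLinearGroup.ext_iff]
  refine forall_congr' fun i => forall_congr' fun j => ?_
  rw [← ZMod.intCast_eq_intCast_iff_dvd_sub, eq_comm]
  by_cases hij : i = j
  · subst hij; simp
  · simp [hij]

/-- `SL_n(Nℤ)` is central modulo `E_n(ℤ, Nℤ)`. -/
lemma principal_central (hn : 3 ≤ n) {N : ℕ} (hN : N ≠ 0) {s : Matrix.SpecialLinearGroup (Fin n) ℤ}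
    (hs : s ∈ principal n N) :
    QuotientGroup.mk' (relElem n N) s ∈ Subgroup.center (_ ⧸ relElem n N) := by
  rw [Subgroup.mem_center_iff]
  intro q
  obtain ⟨g, rfl⟩ := QuotientGroup.mk'_surjective (relElem n N) q
  have htop := eq_top_of_elementary
    ((Subgroup.centralizer {QuotientGroup.mk' (relElem n N) s}).comap
      (QuotientGroup.mk' (relElem n N))) fun i j hij c => by
    rw [Subgroup.mem_comap, Subgroup.mem_centralizer_singleton_iff]
    have h := conj_elem_eq hn (Int.natCast_ne_zero.2 hN) s (mem_principal.1 hs)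
      (mem_principal.1 ((principal n N).inv_mem hs)) hij c
    rw [map_mul, map_mul, map_inv, mul_inv_eq_iff_eq_mul] at h
    exact h.symm
  have hg : g ∈ (⊤ : Subgroup (Matrix.SpecialLinearGroup (Fin n) ℤ)) := Subgroup.mem_top g
  rw [← htop, Subgroup.mem_comap, Subgroup.mem_centralizer_singleton_iff] at hg
  exact hg

lemma GammaCl_le {m k : ℕ} (h : m ≤ n) {N : ℕ} (hN : 1 ≤ N) :
    GammaCl n m k h ≤ Fgroup n m k h ⊔ principal n N := by
  refine sInf_le ⟨⟨N, hN, fun g hg => ?_⟩, le_sup_left⟩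
  refine (le_sup_right : principal n N ≤ _) (mem_principal.2 fun i j => ?_)
  rw [Matrix.one_apply]
  exact hg i j

lemma commutator_mul_central {G : Type*} [Group G] {a b s t : G} (hs : s ∈ Subgroup.center G)
    (ht : t ∈ Subgroup.center G) : ⁅a * s, b * t⁆ = ⁅a, b⁆ := by
  rw [Subgroup.mem_center_iff] at hs ht
  have hconj : ∀ x, a * s * x * (a * s)⁻¹ = a * x * a⁻¹ := fun x => by
    rw [mul_inv_eq_iff_eq_mul, mul_assoc a s x, ← hs x]
    group
  rw [commutatorElement_def, hconj, commutatorElement_def, mul_inv_eq_iff_eq_mul]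
  calc a * (b * t) * a⁻¹ = a * b * (t * a⁻¹) := by group
    _ = a * b * (a⁻¹ * t) := by rw [ht]
    _ = a * b * a⁻¹ * b⁻¹ * (b * t) := by group

/-- Modulo `E_n(ℤ, k²ℤ)`, which lies in `F(k)`, a commutator of elements of
`Γ_k ≤ F(k) SL_n(k²ℤ)` equals a commutator of elements of `F(k)`. -/
lemma commutatorElement_mem {m k : ℕ} (h : m ≤ n) (hn : 3 ≤ n) (hk : 1 ≤ k)
    {x y : Matrix.SpecialLinearGroup (Fin n) ℤ} (hx : x ∈ GammaCl n m k h)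
    (hy : y ∈ GammaCl n m k h) : ⁅x, y⁆ ∈ Fgroup n m k h := by
  have hN : 1 ≤ k * k := Nat.mul_pos hk hk
  have hE : relElem n ((k * k : ℕ) : ℤ) ≤ Fgroup n m k h := by
    rw [Nat.cast_mul]
    exact relElem_le hn _ k fun i j hij c => elem_mem_Fgroup h hij c
  obtain ⟨f, hf, s, hs, rfl⟩ := Subgroup.mem_sup_of_normal_right.1 (GammaCl_le h hN hx)
  obtain ⟨f', hf', s', hs', rfl⟩ := Subgroup.mem_sup_of_normal_right.1 (GammaCl_le h hN hy)
  have hcomm : QuotientGroup.mk' (relElem n ((k * k : ℕ) : ℤ)) (⁅f * s, f' * s'⁆) =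
      QuotientGroup.mk' (relElem n ((k * k : ℕ) : ℤ)) (⁅f, f'⁆) := by
    rw [map_commutatorElement, map_commutatorElement, map_mul, map_mul]
    exact commutator_mul_central (principal_central hn (by omega) hs)
      (principal_central hn (by omega) hs')
  have hff : ⁅f, f'⁆ ∈ Fgroup n m k h := by
    rw [commutatorElement_def]
    exact mul_mem (mul_mem (mul_mem hf hf') (inv_mem hf)) (inv_mem hf')
  have hmem := hE (QuotientGroup.eq.1 hcomm.symm)
  exact (Subgroup.mul_mem_cancel_left _ (inv_mem hff)).1 hmem

end final

/-- For `n ≥ 3`, `1 ≤ m < n`, `k ≥ 1`: the commutator subgroup of the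
congruence closure `Γ_k` of `F(k)` is contained in `F(k)`. -/
theorem commutator_of_congruence_closure_le (n m k : ℕ)
    (hn : 3 ≤ n) (hm : 1 ≤ m) (hmn : m < n) (hk : 1 ≤ k) :
    ⁅GammaCl n m k hmn.le, GammaCl n m k hmn.le⁆ ≤ Fgroup n m k hmn.le :=
  Subgroup.commutator_le.2 fun _ hx _ hy => commutatorElement_mem hmn.le hn hk hx hy
end

section
/- Let n ≥ 2, let 1 ≤ m < n, let p be a prime and let k ≥ 1 be an integer. Then there exists an integer N ≥ 1 such that every g ∈ SL_n(ℤ_p) with g ≡ 1 mod p^N can be written as g = v·q, where v ∈ SL_n(ℤ_p) is of the form I + X with X supported in the bottom-left (n−m)×m block and all entries of X lying in kℤ_p, and q ∈ SL_n(ℤ_p) is block upper triangular (its bottom-left (n−m)×m block is zero) and satisfies q ≡ 1 mod k. -/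
/-!
Write `g` in block form with blocks `A, B, C, D`, with `A` the upper left `m × m` block. Choose `N`
with `k ∣ p ^ N` and `p ∣ p ^ N`. If `g ≡ 1 mod p ^ N`, then `A ≡ 1 mod p`, so `A` is invertible
over the local ring `ℤ_[p]`. Put `X = C A⁻¹`, whose entries are divisible by `p ^ N` because those
of `C` are; then `v = 1 + X` and `q = (1 - X) g` are the required factors, since the lower left
block of `(1 - X) g` is `C - X A = 0`.

Blocks are expressed inside the full matrix ring through the diagonal idempotent `P` onto the
first `m` coordinates; `A` is replaced by `M = P g P + (1 - P)`, which is invertible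
(`isUnit_one_add_smul`) and commutes with `P`. The factorization at this level is
`exists_block_elimination`.
-/

open Matrix

/-- A matrix congruent to `1` modulo a non-unit of a local ring is invertible: its determinant
reduces to `1` in the residue field. -/
lemma isUnit_one_add_smul {n : Type*} [Fintype n] [DecidableEq n] {R : Type*} [CommRing R]
    [IsLocalRing R] {c : R} (hc : ¬ IsUnit c) (F : Matrix n n R) :
    IsUnit (1 + c • F) := by
  rw [Matrix.isUnit_iff_isUnit_det]
  have h0 : IsLocalRing.residue R c = 0 := by
    rw [IsLocalRing.residue_eq_zero_iff]
    exact hc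
  have h1 : IsLocalRing.residue R (1 + c • F).det = 1 := by
    rw [RingHom.map_det]
    have : (IsLocalRing.residue R).mapMatrix (1 + c • F) = 1 := by
      ext i j
      by_cases hij : i = j <;> simp [Matrix.one_apply, hij, h0]
    rw [this, det_one]
  rw [← IsLocalRing.residue_ne_zero_iff_isUnit, h1]
  exact one_ne_zero

/-- Block elimination relative to an idempotent `P`: if `g = 1 + c • E` with `c` a non-unit, there
is a matrix `c • Y`, mapping the image of `P` to that of `1 - P`, such that `(1 - c • Y) * g` has
vanishing `(1 - P, P)` block. -/
lemma exists_block_elimination {n : Type*} [Fintype n] [DecidableEq n] {R : Type*} [CommRing R]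
    [IsLocalRing R] {c : R} (hc : ¬ IsUnit c) (P E : Matrix n n R) (hP : P * P = P) :
    ∃ Y : Matrix n n R, (1 - P) * Y * P = Y ∧
      (1 - P) * ((1 - c • Y) * (1 + c • E)) * P = 0 := by
  obtain ⟨u, hu⟩ := isUnit_one_add_smul hc (P * E * P)
  have hQP : (1 - P) * P = 0 := by rw [sub_mul, hP, one_mul, sub_self]
  have hQQ : (1 - P) * (1 - P) = 1 - P := by rw [mul_sub, hQP, mul_one, sub_zero]
  have hcomm : Commute (u : Matrix n n R) P := by
    rw [hu]
    refine (Commute.one_left P).add_left (Commute.smul_left ?_ c)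
    change P * E * P * P = P * (P * E * P)
    simp only [mul_assoc, hP]
    simp only [← mul_assoc, hP]
  have hinv : (↑u⁻¹ : Matrix n n R) * P = P * (↑u⁻¹ : Matrix n n R) :=
     hcomm.units_inv_left
  set W : Matrix n n R := ↑u⁻¹ with hW
  have hY : (1 - P) * ((1 - P) * E * P * W) * P = (1 - P) * E * P * W := by
    calc (1 - P) * ((1 - P) * E * P * W) * P
        = ((1 - P) * (1 - P)) * E * P * (W * P) := by simp only [mul_assoc]
      _ = (1 - P) * E * (P * P) * W := by rw [hQQ, hinv]; simp only [mul_assoc]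
      _ = (1 - P) * E * P * W := by rw [hP]
  refine ⟨(1 - P) * E * P * W, hY, ?_⟩
  set Y := (1 - P) * E * P * W with hYdef
  have hQY : (1 - P) * Y = Y := by
    rw [hYdef]; simp only [← mul_assoc, hQQ]
  have hYP : Y * P = Y := by rw [← hY, mul_assoc, hP]
  -- `Y * g * P = Y * (P * g * P) = Y * M * P`, and `Y * M` is the `(1 - P, P)` block of `E`.
  have key : Y * (1 + c • E) * P = (1 - P) * E * P := by
    calc Y * (1 + c • E) * P = Y * P * (1 + c • E) * P := by rw [hYP]
      _ = Y * (P * P + c • (P * E * P)) := by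
        simp only [mul_add, add_mul, mul_one, mul_smul_comm, smul_mul_assoc, mul_assoc]
      _ = Y * P * (1 + c • (P * E * P)) := by
        rw [hP, mul_add, mul_add, mul_one, hYP]
      _ = (1 - P) * E * P * (W * u) := by rw [hYP, ← hu, hYdef]; simp only [mul_assoc]
      _ = (1 - P) * E * P := by rw [hW, Units.inv_mul, mul_one]
  calc (1 - P) * ((1 - c • Y) * (1 + c • E)) * P
      = (1 - P) * P + c • ((1 - P) * E * P) - c • ((1 - P) * Y * (1 + c • E) * P) := by
        rw [sub_mul (1 : Matrix n n R) (c • Y), one_mul, mul_sub, sub_mul, mul_add, add_mul,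
          mul_one]
        simp only [mul_smul_comm, smul_mul_assoc, mul_assoc]
    _ = 0 := by rw [hQP, hQY, key, zero_add, sub_self]

/-- For `n ≥ 2`, `1 ≤ m < n`, a prime `p` and `k ≥ 1`, there is an `N ≥ 1`
such that every `g ∈ SL_n(ℤ_p)` with `g ≡ 1 mod p^N` factors as `g = v·q` with
`v ∈ U⁻(kℤ_p)` (i.e. `v = I + X`, `X` supported in the bottom-left `(n−m) × m` block with
entries in `kℤ_p`) and `q ∈ P(kℤ_p)` (block upper triangular and `q ≡ 1 mod k`). -/
theorem big_cell_contains_compact_open (n m k p : ℕ) [Fact p.Prime]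
    (hn : 2 ≤ n) (hm : 1 ≤ m) (hmn : m < n) (hk : 1 ≤ k) :
    ∃ N : ℕ, 1 ≤ N ∧
      ∀ g : Matrix.SpecialLinearGroup (Fin n) ℤ_[p],
        (∀ i j : Fin n, ((p : ℤ_[p]) ^ N) ∣ (g.1 i j - if i = j then 1 else 0)) →
        ∃ v q : Matrix.SpecialLinearGroup (Fin n) ℤ_[p],
          (∀ i j : Fin n, if i = j then v.1 i j = 1
              else if m ≤ (i : ℕ) ∧ (j : ℕ) < m then (k : ℤ_[p]) ∣ v.1 i j
              else v.1 i j = 0) ∧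
          (∀ i j : Fin n, m ≤ (i : ℕ) → (j : ℕ) < m → q.1 i j = 0) ∧
          (∀ i j : Fin n, (k : ℤ_[p]) ∣ (q.1 i j - if i = j then 1 else 0)) ∧
          g = v * q := by
  have hk0 : (k : ℤ_[p]) ≠ 0 := by exact_mod_cast (by omega : k ≠ 0)
  -- `k` is a unit times `p ^ v(k)`; one extra factor `p` makes `p ^ N` a non-unit.
  refine ⟨(k : ℤ_[p]).valuation + 1, by omega, fun g hg => ?_⟩
  set c : ℤ_[p] := (p : ℤ_[p]) ^ ((k : ℤ_[p]).valuation + 1) with hcdef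
  have hkc : (k : ℤ_[p]) ∣ c := by
    have h := PadicInt.unitCoeff_spec hk0
    have h2 : (k : ℤ_[p]) ∣ (p : ℤ_[p]) ^ (k : ℤ_[p]).valuation :=
      Associated.dvd' ⟨PadicInt.unitCoeff hk0, by rw [mul_comm]; exact h.symm⟩
    exact h2.trans (pow_dvd_pow _ (Nat.le_succ _))
  have hc : ¬ IsUnit c := by
    rw [hcdef, isUnit_pow_iff (Nat.succ_ne_zero _)]
    exact PadicInt.prime_p.not_isUnit
  choose E hE using hg
  have hgE : g.1 = 1 + c • Matrix.of E := by
    ext i j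
    have := hE i j
    simp only [Matrix.add_apply, Matrix.one_apply, Matrix.smul_apply, Matrix.of_apply, smul_eq_mul]
    rw [← this]; ring
  let d : Fin n → ℤ_[p] := fun i => if (i : ℕ) < m then 1 else 0
  have hP : diagonal d * diagonal d = diagonal d := by
    rw [diagonal_mul_diagonal]
    congr 1; funext i; simp [d]
  -- the entries of the `(1 - P, P)` block of a matrix
  have hblock : ∀ (Z : Matrix (Fin n) (Fin n) ℤ_[p]) (i j : Fin n),
      ((1 - diagonal d) * Z * diagonal d) i j
        = if m ≤ (i : ℕ) ∧ (j : ℕ) < m then Z i j else 0 := by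
    intro Z i j
    rw [mul_diagonal, sub_mul, one_mul, Matrix.sub_apply, diagonal_mul]
    by_cases hi : (i : ℕ) < m <;> by_cases hj : (j : ℕ) < m <;>
      simp [d, hi, hj, not_le.mpr, not_lt.mp]
  obtain ⟨Y, hY, hq⟩ := exists_block_elimination hc (diagonal d) (Matrix.of E) hP
  have hY0 : ∀ i j : Fin n, ¬ (m ≤ (i : ℕ) ∧ (j : ℕ) < m) → Y i j = 0 := by
    intro i j h
    rw [← hY, hblock, if_neg h]
  have hdet : (1 + c • Y).det = 1 := by
    rw [det_of_isLowerTriangular]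
    · refine Finset.prod_eq_one fun i _ => ?_
      simp [hY0 i i (by omega)]
    · intro i j hij
      have hij' : i < j := hij
      simp [hij'.ne, hY0 i j (by have : (i : ℕ) < j := hij'; omega)]
  have hYY : Y * Y = 0 := by
    ext i j
    rw [Matrix.mul_apply]
    refine Finset.sum_eq_zero fun l _ => ?_
    by_cases hl : (l : ℕ) < m
    · rw [hY0 l j (by omega), mul_zero]
    · rw [hY0 i l (by omega), zero_mul]
  have hvi : (1 + c • Y) * (1 - c • Y) = 1 := by
    have : (c • Y) * (c • Y) = 0 := by
      rw [smul_mul_assoc, mul_smul_comm, hYY, smul_zero, smul_zero]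
    rw [add_mul, mul_sub, mul_sub, this]; simp
  have hgq : g.1 = (1 + c • Y) * ((1 - c • Y) * g.1) := by
    rw [← mul_assoc, hvi, one_mul]
  have hdetq : ((1 - c • Y) * g.1).det = 1 := by
    have h := congrArg det hgq
    rw [det_mul, hdet, one_mul, g.2] at h
    exact h.symm
  refine ⟨⟨1 + c • Y, hdet⟩, ⟨(1 - c • Y) * g.1, hdetq⟩, ?_, ?_, ?_, Subtype.ext hgq⟩
  · intro i j
    split_ifs with hij h
    · subst hij
      simp [hY0 i i (by omega)]
    · simpa [hij] using hkc.mul_right (Y i j)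
    · simp [hij, hY0 i j h]
  · intro i j hi hj
    have h := hblock ((1 - c • Y) * (1 + c • Matrix.of E)) i j
    rw [hq, if_pos ⟨hi, hj⟩, ← hgE] at h
    exact h.symm
  · intro i j
    have h : (1 - c • Y) * g.1 - 1 = c • (Matrix.of E - Y * g.1) := by
      rw [sub_mul, one_mul, smul_sub, smul_mul_assoc]
      nth_rewrite 1 [hgE]
      abel
    have h' := congrFun (congrFun h i) j
    rw [Matrix.sub_apply, Matrix.one_apply] at h'
    change (k : ℤ_[p]) ∣ ((1 - c • Y) * g.1) i j - _
    rw [h']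
    exact hkc.mul_right _
end

section
/- Let n ≥ 3, let 1 ≤ m < n, and let k ≥ 1. Let F(k) be the subgroup of SL_n(ℤ) generated by U⁺(kℤ), U⁻(kℤ) and M(kℤ). Then F(k) is Zariski dense in SL_n in the following sense: every polynomial f with rational coefficients in the n² matrix entries which vanishes at every element of F(k) vanishes at every element of SL_n(ℚ). -/
/-!
Write `E i j t` for the transvection `1 + t • e_{ij}`. Let `Z` be the Zariski closure of `F(k)` in
the space of rational `n × n` matrices, and let `T` be the monoid of matrices `A` with `A Z ⊆ Z`
(`zariskiStab`). As `1 ∈ Z`, also `T ⊆ Z`, so it suffices that `SL_n(ℚ) ⊆ T`.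

* If `i` and `j` lie in different blocks, then `E i j (k z) ∈ F(k)` for every integer `z`, hence
  `E i j (k z) ∈ T`. For `B ∈ Z` and a polynomial `f` vanishing on `F(k)`, the function
  `t ↦ f (E i j t * B)` is a polynomial in one variable with infinitely many roots, so it is zero;
  hence `E i j t ∈ T` for all rational `t` (`transvection_mem_of_int`).
* If `i ≠ j` lie in the same block, choose `l` in the other one: `E i j t` is the commutator of
  `E i l t` and `E l j 1`, so it is in `T` as well.
* A submonoid containing all transvections contains `SL_n(ℚ)` (`det_one_mem_of_transvection_mem`):
  Gaussian elimination reduces this to diagonal matrices of determinant one, and these are products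
  of matrices `diag(1, …, u, …, u⁻¹, …, 1)`, each a product of six transvections.
-/

open Matrix

/-! ### Submonoids containing all transvections -/

/-- The identity `w(u) w(-1) = h(u)` in the copy of `SL₂` attached to the indices `i ≠ a`, where
`w(u) = E_{ia}(u) E_{ai}(-u⁻¹) E_{ia}(u)` and `h(u)` is diagonal with entries `u`, `u⁻¹`. -/
lemma diagonal_eq_transvections {n : ℕ} {i a : Fin n} (h : i ≠ a) {u : ℚ} (hu : u ≠ 0) :
    diagonal (Pi.mulSingle i u * Pi.mulSingle a u⁻¹ : Fin n → ℚ) =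
      transvection i a u * transvection a i (-u⁻¹) * transvection i a u *
        (transvection i a (-1) * transvection a i 1 * transvection i a (-1)) := by
  have h' : a ≠ i := h.symm
  simp only [transvection, add_mul, mul_add, one_mul, mul_one, single_mul_single_same,
    single_mul_single_of_ne _ _ _ _ h, single_mul_single_of_ne _ _ _ _ h', add_zero]
  ext p q
  by_cases hpq : p = q
  · subst hpq
    by_cases h1 : p = i
    · subst h1
      simp [h, h', hu]
    · by_cases h2 : p = a
      · subst h2
        simp [h, h', hu]
      · simp [h1, h2, Ne.symm h1, Ne.symm h2]
  · by_cases h1 : i = p <;> by_cases h2 : i = q <;> by_cases h3 : a = p <;> by_cases h4 : a = q <;>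
      simp_all

lemma transvection_commutator {n : ℕ} {i j l : Fin n} (hij : i ≠ j) (hil : i ≠ l) (hlj : l ≠ j)
    (t : ℚ) :
    transvection i j t =
      transvection i l t * transvection l j 1 * transvection i l (-t) * transvection l j (-1) := by
  simp only [transvection, add_mul, mul_add, one_mul, mul_one, single_mul_single_same,
    single_mul_single_of_ne _ _ _ _ hil.symm, single_mul_single_of_ne _ _ _ _ hlj.symm,
    single_mul_single_of_ne _ _ _ _ hij.symm, add_zero, ← single_neg, neg_mul, mul_neg]
  abel

lemma det_one_mem_of_transvection_mem {n : ℕ} (S : Submonoid (Matrix (Fin n) (Fin n) ℚ))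
    (hS : ∀ (i j : Fin n), i ≠ j → ∀ t : ℚ, transvection i j t ∈ S)
    (M : Matrix (Fin n) (Fin n) ℚ) (hM : M.det = 1) : M ∈ S := by
  refine diagonal_transvection_induction (· ∈ S) M ?_ (fun t => hS _ _ t.hij _)
    (fun _ _ hA hB => S.mul_mem hA hB)
  intro D hD
  rw [hM, det_diagonal] at hD
  rcases isEmpty_or_nonempty (Fin n) with he | ⟨⟨a⟩⟩
  · convert S.one_mem
    exact Subsingleton.elim _ _
  have hD0 : ∀ i, D i ≠ 0 := fun i h0 => by
    rw [Finset.prod_eq_zero (Finset.mem_univ i) h0] at hD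
    exact zero_ne_one hD
  -- The second factors only affect position `a`, where they multiply to `∏ i, (D i)⁻¹ = 1`.
  have hprod : D = ∏ i, (Pi.mulSingle i (D i) * Pi.mulSingle a (D i)⁻¹ : Fin n → ℚ) := by
    rw [Finset.prod_mul_distrib, Finset.univ_prod_mulSingle]
    have : ∏ i, (Pi.mulSingle a (D i)⁻¹ : Fin n → ℚ) = 1 := by
      have := map_prod (MonoidHom.mulSingle (fun _ : Fin n => ℚ) a) (fun i => (D i)⁻¹) Finset.univ
      rw [Finset.prod_inv_distrib, hD, inv_one, map_one] at this
      exact this.symm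
    rw [this, mul_one]
  have key : D ∈ S.comap (diagonalRingHom (Fin n) ℚ).toMonoidHom := by
    rw [hprod]
    refine Submonoid.prod_mem _ fun i _ => ?_
    by_cases hi : i = a
    · subst hi
      rw [← Pi.mulSingle_mul, mul_inv_cancel₀ (hD0 i), Pi.mulSingle_one]
      exact Submonoid.one_mem _
    · change diagonal _ ∈ S
      rw [diagonal_eq_transvections hi (hD0 i)]
      have hi' : a ≠ i := Ne.symm hi
      exact S.mul_mem (S.mul_mem (S.mul_mem (hS _ _ hi _) (hS _ _ hi' _)) (hS _ _ hi _))
        (S.mul_mem (S.mul_mem (hS _ _ hi _) (hS _ _ hi' _)) (hS _ _ hi _))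
  exact key

/-! ### The Zariski closure and its stabilizer -/

/-- The value of a polynomial in the matrix entries at a rational matrix. -/
noncomputable def evalMat {n : ℕ} (A : Matrix (Fin n) (Fin n) ℚ)
    (f : MvPolynomial (Fin n × Fin n) ℚ) : ℚ :=
  MvPolynomial.eval (fun p : Fin n × Fin n => A p.1 p.2) f

/-- The Zariski closure, inside all rational `n × n` matrices, of a set of matrices. -/
def zariskiClosure {n : ℕ} (Y : Set (Matrix (Fin n) (Fin n) ℚ)) :
    Set (Matrix (Fin n) (Fin n) ℚ) :=
  {B | ∀ f, (∀ A ∈ Y, evalMat A f = 0) → evalMat B f = 0}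

/-- The matrices whose left multiplication preserves the Zariski closure of `Y`. -/
def zariskiStab {n : ℕ} (Y : Set (Matrix (Fin n) (Fin n) ℚ)) :
    Submonoid (Matrix (Fin n) (Fin n) ℚ) where
  carrier := {A | ∀ B ∈ zariskiClosure Y, A * B ∈ zariskiClosure Y}
  one_mem' B hB := by simpa using hB
  mul_mem' {A A'} hA hA' B hB := by
    rw [mul_assoc]
    exact hA _ (hA' _ hB)

lemma mem_zariskiStab_of_mul_mem {n : ℕ} {Y : Set (Matrix (Fin n) (Fin n) ℚ)}
    {A : Matrix (Fin n) (Fin n) ℚ} (hA : ∀ B ∈ Y, A * B ∈ Y) : A ∈ zariskiStab Y := by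
  intro B hB f hf
  -- `f'` is the polynomial function `C ↦ f (A * C)`.
  let f' : MvPolynomial (Fin n × Fin n) ℚ := MvPolynomial.bind₁
    (fun p : Fin n × Fin n => ∑ l, MvPolynomial.C (A p.1 l) * MvPolynomial.X (l, p.2)) f
  have hf' : ∀ C, evalMat C f' = evalMat (A * C) f := by
    intro C
    simp only [evalMat, f']
    rw [← MvPolynomial.coe_aeval_eq_eval, ← MvPolynomial.coe_aeval_eq_eval, RingHom.coe_coe,
      RingHom.coe_coe, MvPolynomial.aeval_bind₁]
    simp [mul_apply]
  rw [← hf']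
  exact hB f' fun C hC => by rw [hf']; exact hf _ (hA C hC)

/-- Along the line `t ↦ E i j t * B` a polynomial in the entries is a one-variable polynomial, so
vanishing at the multiples of `k` forces vanishing for every `t`. -/
lemma transvection_mem_of_int {n k : ℕ} (hk : 1 ≤ k) {Y : Set (Matrix (Fin n) (Fin n) ℚ)}
    {i j : Fin n}
    (h : ∀ z : ℤ, transvection i j ((k * z : ℤ) : ℚ) ∈ zariskiStab Y) (t : ℚ) :
    transvection i j t ∈ zariskiStab Y := by
  intro B hB f hf
  let P : Polynomial ℚ := MvPolynomial.aeval (fun p : Fin n × Fin n =>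
    Polynomial.C (B p.1 p.2) +
      Polynomial.X * Polynomial.C ((single i j (1 : ℚ) * B) p.1 p.2)) f
  have hP : ∀ s, P.eval s = evalMat (transvection i j s * B) f := by
    intro s
    have hs : (single i j s : Matrix (Fin n) (Fin n) ℚ) = s • single i j 1 := by
      simp [smul_single]
    simp only [evalMat, P, transvection, add_mul, one_mul, hs, smul_mul_assoc]
    rw [← Polynomial.coe_aeval_eq_eval, ← MvPolynomial.coe_aeval_eq_eval]
    simp only [RingHom.coe_coe]
    rw [MvPolynomial.comp_aeval_apply]
    congr 2
    ext p
    simp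
    exact mul_comm _ _
  have hP0 : P = 0 := by
    refine Polynomial.eq_zero_of_infinite_isRoot P ?_
    refine (Set.infinite_range_of_injective (f := fun z : ℤ => ((k * z : ℤ) : ℚ)) ?_).mono ?_
    · intro x y hxy
      have hxy' : (k : ℤ) * x = k * y := Int.cast_injective (α := ℚ) hxy
      exact mul_left_cancel₀ (by omega) hxy'
    · rintro _ ⟨z, rfl⟩
      change P.eval _ = 0
      rw [hP]
      exact h z B hB f hf
  rw [← hP, hP0, Polynomial.eval_zero]

/-! ### Transvections in `F(k)` -/

lemma transvection_mem_Fgroup {n m k : ℕ} (h : m ≤ n) {i j : Fin n} (hij : i ≠ j)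
    (hb : ¬((i : ℕ) < m ↔ (j : ℕ) < m)) (z : ℤ) :
    SpecialLinearGroup.transvection hij ((k : ℤ) * z) ∈ Fgroup n m k h := by
  refine Subgroup.subset_closure (Or.inl ?_)
  have hE : ∀ p q : Fin n, p ≠ q →
      transvection i j ((k : ℤ) * z) p q = if i = p ∧ j = q then (k : ℤ) * z else 0 := by
    intro p q hpq
    simp [transvection, single_apply, hpq]
  have hD : ∀ p : Fin n, transvection i j ((k : ℤ) * z) p p = 1 := by
    intro p
    have : ¬(i = p ∧ j = p) := fun hp => hij (hp.1.trans hp.2.symm)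
    simp [transvection, this]
  by_cases hi : (i : ℕ) < m
  · left
    intro p q
    change if p = q then transvection i j ((k : ℤ) * z) p q = 1 else
      if _ then _ ∣ transvection i j ((k : ℤ) * z) p q else
        transvection i j ((k : ℤ) * z) p q = 0
    split_ifs with h1 h2
    · subst h1; exact hD p
    · rw [hE p q h1]; split_ifs <;> simp
    · rw [hE p q h1, if_neg]
      rintro ⟨rfl, rfl⟩
      omega
  · right
    intro p q
    change if p = q then transvection i j ((k : ℤ) * z) p q = 1 else
      if _ then _ ∣ transvection i j ((k : ℤ) * z) p q else
        transvection i j ((k : ℤ) * z) p q = 0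
    split_ifs with h1 h2
    · subst h1; exact hD p
    · rw [hE p q h1]; split_ifs <;> simp
    · rw [hE p q h1, if_neg]
      rintro ⟨rfl, rfl⟩
      omega

/-- For `n ≥ 3`, `1 ≤ m < n`, `k ≥ 1`, the group `F(k)` is Zariski dense in
`SL_n`: every polynomial with rational coefficients in the matrix entries vanishing on
`F(k)` vanishes on all of `SL_n(ℚ)`. -/
theorem Fgroup_zariski_dense (n m k : ℕ)
    (hn : 3 ≤ n) (hm : 1 ≤ m) (hmn : m < n) (hk : 1 ≤ k)
    (f : MvPolynomial (Fin n × Fin n) ℚ)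
    (hf : ∀ g ∈ Fgroup n m k hmn.le,
      MvPolynomial.eval (fun p : Fin n × Fin n => ((g.1 p.1 p.2 : ℤ) : ℚ)) f = 0) :
    ∀ g : Matrix.SpecialLinearGroup (Fin n) ℚ,
      MvPolynomial.eval (fun p : Fin n × Fin n => g.1 p.1 p.2) f = 0 := by
  intro g
  let Y : Set (Matrix (Fin n) (Fin n) ℚ) :=
    {A | ∃ g ∈ Fgroup n m k hmn.le, A = g.1.map (Int.cast : ℤ → ℚ)}
  have hcross : ∀ i j : Fin n, ¬((i : ℕ) < m ↔ (j : ℕ) < m) → ∀ t : ℚ,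
      transvection i j t ∈ zariskiStab Y := by
    intro i j hb t
    have hij : i ≠ j := by rintro rfl; exact hb Iff.rfl
    refine transvection_mem_of_int hk (fun z => mem_zariskiStab_of_mul_mem ?_) t
    rintro _ ⟨g', hg', rfl⟩
    refine ⟨_, mul_mem (transvection_mem_Fgroup hmn.le hij hb z) hg', ?_⟩
    have hmap : transvection i j (((k : ℤ) * z : ℤ) : ℚ) =
        (transvection i j ((k : ℤ) * z)).map (Int.castRingHom ℚ) := by
      rw [transvection, transvection, Matrix.map_add _ (map_add _), map_single,
        Matrix.map_one _ (map_zero _) (map_one _)]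
      rfl
    rw [hmap]
    exact (Matrix.map_mul (f := Int.castRingHom ℚ)).symm
  have hall : ∀ i j : Fin n, i ≠ j → ∀ t : ℚ, transvection i j t ∈ zariskiStab Y := by
    intro i j hij t
    by_cases hb : (i : ℕ) < m ↔ (j : ℕ) < m
    · obtain ⟨l, hl⟩ : ∃ l : Fin n, ¬((i : ℕ) < m ↔ (l : ℕ) < m) := by
        by_cases hi : (i : ℕ) < m
        · exact ⟨⟨m, hmn⟩, by simp [hi]⟩
        · exact ⟨⟨0, by omega⟩, by simp only [hi, false_iff, not_not]; omega⟩
      have hl' : ¬((l : ℕ) < m ↔ (j : ℕ) < m) := by tauto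
      have hil : i ≠ l := by rintro rfl; exact hl Iff.rfl
      have hlj : l ≠ j := by rintro rfl; exact hl' Iff.rfl
      rw [transvection_commutator hij hil hlj]
      exact mul_mem (mul_mem (mul_mem (hcross _ _ hl _) (hcross _ _ hl' _)) (hcross _ _ hl _))
        (hcross _ _ hl' _)
    · exact hcross i j hb t
  have hone : (1 : Matrix (Fin n) (Fin n) ℚ) ∈ zariskiClosure Y := fun f hf =>
    hf 1 ⟨1, one_mem _, (Matrix.map_one (Int.castRingHom ℚ) (map_zero _) (map_one _)).symm⟩
  have hg := det_one_mem_of_transvection_mem (zariskiStab Y) hall g.1 g.2 1 hone f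
    (by rintro _ ⟨g', hg', rfl⟩; exact hf g' hg')
  rwa [mul_one] at hg
end

section
/- Let n ≥ 2 and let a, b be coprime positive integers. Then the subgroup of SL_n(ℤ) generated by the principal congruence subgroups SL_n(aℤ) and SL_n(bℤ) is all of SL_n(ℤ). -/
/-!
The group `SL_n(ℤ)` is generated by the transvections `1 + c E_{ij}` (`top_of_transvection_mem`).
By Bézout, write `1 = a x + b y`; then `1 + c E_{ij} = (1 + c a x E_{ij}) (1 + c b y E_{ij})`,
whose first factor is congruent to `1` modulo `a` and whose second is congruent to `1` modulo `b`.

Generation by transvections is Gaussian elimination over `ℤ`, one column at a time. Suppose that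
the columns of `g` before column `k` are already standard basis vectors. Row operations that add
multiples of a row `j ≥ k` to another row preserve this. An entry of minimal nonzero absolute
value that such operations can produce in column `k`, at or below the diagonal, divides every
entry of that part of the column, hence is a unit because `g` is invertible
(`isUnit_of_dvd_column`). A unit entry is used to put a `1` on the diagonal (for the last column
this entry is `det g = 1`) and then to clear the rest of the column.
-/

namespace CoprimeCongruence

open Matrix

variable {n : ℕ}

/-- The first `k` columns of `g` are the first `k` standard basis vectors. -/
def StdCols (k : ℕ) (g : SpecialLinearGroup (Fin n) ℤ) : Prop :=
  ∀ i j : Fin n, j.1 < k → g.1 i j = if i = j then 1 else 0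

lemma transvection_mul_apply {i j : Fin n} (hij : i ≠ j) (c : ℤ)
    (g : SpecialLinearGroup (Fin n) ℤ) (p q : Fin n) :
    (SpecialLinearGroup.transvection hij c * g).1 p q =
      g.1 p q + if p = i then c * g.1 j q else 0 := by
  change (Matrix.transvection i j c * g.1) p q = _
  split_ifs with h
  · subst h
    simp
  · simp [h]

lemma StdCols.transvection_mul {k : ℕ} {g : SpecialLinearGroup (Fin n) ℤ} (hg : StdCols k g)
    {i j : Fin n} (hij : i ≠ j) (hj : k ≤ j.1) (c : ℤ) :
    StdCols k (SpecialLinearGroup.transvection hij c * g) := by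
  intro p q hq
  have hjq : j ≠ q := by
    rintro rfl
    omega
  rw [transvection_mul_apply, hg p q hq, hg j q hq, if_neg hjq]
  simp

/-- A common divisor of the entries of column `k` on and below the diagonal is a unit: row `k` of
`g⁻¹` vanishes before column `k`, so its product with column `k` of `g` expresses `1` as a
combination of these entries. -/
lemma isUnit_of_dvd_column {k : Fin n} {g : SpecialLinearGroup (Fin n) ℤ} (hg : StdCols k.1 g)
    {d : ℤ} (hd : ∀ i, k ≤ i → d ∣ g.1 i k) : IsUnit d := by
  have hinv : ∀ j, ∑ i, (g⁻¹).1 k i * g.1 i j = if k = j then 1 else 0 := by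
    intro j
    have h : (g⁻¹ * g).1 k j = (1 : Matrix (Fin n) (Fin n) ℤ) k j := by
      rw [inv_mul_cancel]; rfl
    rw [Matrix.one_apply] at h
    rw [← h]
    exact (Matrix.mul_apply (M := (g⁻¹).1) (N := g.1)).symm
  have hzero : ∀ j, j < k → (g⁻¹).1 k j = 0 := by
    intro j hj
    have h := hinv j
    rw [if_neg hj.ne'] at h
    simpa [hg _ j hj] using h
  have hone := hinv k
  rw [if_pos rfl] at hone
  apply isUnit_of_dvd_one
  rw [← hone]
  refine Finset.dvd_sum fun i _ => ?_
  rcases lt_or_ge i k with hi | hi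
  · rw [hzero i hi, zero_mul]
    exact dvd_zero _
  · exact (hd i hi).mul_left _

section Elimination

variable {H : Subgroup (SpecialLinearGroup (Fin n) ℤ)}

/-- The Euclidean algorithm on column `k`, phrased as descent on the absolute value of a nonzero
entry. -/
lemma exists_unit_entry
    (hH : ∀ (i j : Fin n) (hij : i ≠ j) (c : ℤ), SpecialLinearGroup.transvection hij c ∈ H)
    {k : Fin n} (m : ℕ) :
    ∀ g : SpecialLinearGroup (Fin n) ℤ, StdCols k.1 g →
      ∀ p, k ≤ p → g.1 p k ≠ 0 → (g.1 p k).natAbs = m →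
      ∃ h ∈ H, StdCols k.1 (h * g) ∧ ∃ q, k ≤ q ∧ IsUnit ((h * g).1 q k) := by
  induction m using Nat.strong_induction_on with
  | _ m ih =>
    intro g hg p hp hne hm
    by_cases hall : ∀ i, k ≤ i → g.1 p k ∣ g.1 i k
    · exact ⟨1, H.one_mem, by rwa [one_mul], p, hp, by
        rw [one_mul]; exact isUnit_of_dvd_column hg hall⟩
    · push Not at hall
      obtain ⟨i, hi, hndvd⟩ := hall
      have hip : i ≠ p := by
        rintro rfl
        exact hndvd dvd_rfl
      -- Replace the entry in row `i` by its remainder modulo the entry in row `p`.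
      set t := SpecialLinearGroup.transvection hip (-(g.1 i k / g.1 p k)) with ht
      have hval : (t * g).1 i k = g.1 i k % g.1 p k := by
        rw [ht, transvection_mul_apply, if_pos rfl, Int.emod_def]
        ring
      have hlt : ((t * g).1 i k).natAbs < m := by
        rw [hval, ← hm]
        have h1 := Int.emod_nonneg (g.1 i k) hne
        have h2 := Int.emod_lt_abs (g.1 i k) hne
        rw [Int.abs_eq_natAbs] at h2
        omega
      obtain ⟨h, hh, hstd, q, hq, hu⟩ := ih _ hlt (t * g)
        (hg.transvection_mul hip hp _) i hi
        (by rw [hval]; exact fun h0 => hndvd (Int.dvd_of_emod_eq_zero h0)) rfl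
      refine ⟨h * t, H.mul_mem hh (hH _ _ _ _), ?_, q, hq, ?_⟩
      · rwa [mul_assoc]
      · rwa [mul_assoc]

/-- A unit entry below the diagonal produces a diagonal entry `1`. -/
lemma exists_diag_one_of_lt
    (hH : ∀ (i j : Fin n) (hij : i ≠ j) (c : ℤ), SpecialLinearGroup.transvection hij c ∈ H)
    {k q : Fin n} {g : SpecialLinearGroup (Fin n) ℤ}
    (hg : StdCols k.1 g) (hq : k < q) (hu : IsUnit (g.1 q k)) :
    ∃ h ∈ H, StdCols k.1 (h * g) ∧ (h * g).1 k k = 1 := by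
  refine ⟨SpecialLinearGroup.transvection hq.ne ((1 - g.1 k k) * g.1 q k), hH _ _ _ _,
    hg.transvection_mul _ hq.le _, ?_⟩
  rw [transvection_mul_apply, if_pos rfl, mul_assoc, Int.isUnit_mul_self hu]
  ring

lemma exists_diag_one
    (hH : ∀ (i j : Fin n) (hij : i ≠ j) (c : ℤ), SpecialLinearGroup.transvection hij c ∈ H)
    {k : Fin n} {g : SpecialLinearGroup (Fin n) ℤ} (hg : StdCols k.1 g) :
    ∃ h ∈ H, StdCols k.1 (h * g) ∧ (h * g).1 k k = 1 := by
  by_cases hlast : ∃ q, k < q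
  · obtain ⟨r, hr⟩ := hlast
    obtain ⟨p, hp, hpne⟩ : ∃ p, k ≤ p ∧ g.1 p k ≠ 0 := by
      by_contra! hcon
      exact not_isUnit_zero
        (isUnit_of_dvd_column hg (d := 0) fun i hi => by rw [hcon i hi])
    obtain ⟨h, hh, hstd, q, hq, hu⟩ := exists_unit_entry hH _ g hg p hp hpne rfl
    rcases hq.lt_or_eq with hlt | rfl
    · obtain ⟨h', hh', hstd', hone⟩ := exists_diag_one_of_lt hH hstd hlt hu
      exact ⟨h' * h, H.mul_mem hh' hh, by rwa [mul_assoc], by rwa [mul_assoc]⟩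
    -- The unit is on the diagonal, possibly `-1`: copy a `1` to row `r` first.
    · set t := SpecialLinearGroup.transvection hr.ne'
        ((1 - (h * g).1 r k) * (h * g).1 k k) with ht
      have hr1 : (t * (h * g)).1 r k = 1 := by
        rw [ht, transvection_mul_apply, if_pos rfl, mul_assoc, Int.isUnit_mul_self hu]
        ring
      obtain ⟨h', hh', hstd', hone⟩ := exists_diag_one_of_lt hH
        (hstd.transvection_mul hr.ne' le_rfl _) hr (by rw [hr1]; exact isUnit_one)
      refine ⟨h' * (t * h), H.mul_mem hh' (H.mul_mem (hH _ _ _ _) hh), ?_, ?_⟩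
      · simpa only [mul_assoc] using hstd'
      · simpa only [mul_assoc] using hone
  -- `k` is the last index, so `g` is upper triangular with determinant `g k k`.
  · push Not at hlast
    refine ⟨1, H.one_mem, by rwa [one_mul], ?_⟩
    rw [one_mul]
    have htri : g.1.BlockTriangular id := by
      intro i j hji
      have hjk : j < k := lt_of_lt_of_le hji (hlast i)
      rw [hg i j hjk, if_neg (ne_of_gt (show j < i from hji))]
    have hdet : g.1.det = 1 := g.2
    rw [Matrix.det_of_isUpperTriangular htri, Finset.prod_eq_single k] at hdet
    · exact hdet
    · intro j _ hj
      rw [hg j j (show j < k from lt_of_le_of_ne (hlast j) hj), if_pos rfl]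
    · simp

lemma exists_clear
    (hH : ∀ (i j : Fin n) (hij : i ≠ j) (c : ℤ), SpecialLinearGroup.transvection hij c ∈ H)
    {k : Fin n} {g : SpecialLinearGroup (Fin n) ℤ} (hg : StdCols k.1 g)
    (hone : g.1 k k = 1) (S : Finset (Fin n)) :
    ∃ h ∈ H, StdCols k.1 (h * g) ∧ (h * g).1 k k = 1 ∧
      ∀ i ∈ S, i ≠ k → (h * g).1 i k = 0 := by
  induction S using Finset.induction_on with
  | empty => exact ⟨1, H.one_mem, by rwa [one_mul], by rwa [one_mul], by simp⟩
  | insert s S _ ih =>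
    obtain ⟨h, hh, hstd, h1, h0⟩ := ih
    by_cases hsk : s = k
    · refine ⟨h, hh, hstd, h1, fun i hi hik => ?_⟩
      rcases Finset.mem_insert.1 hi with rfl | hi
      · exact absurd hsk hik
      · exact h0 i hi hik
    · refine ⟨SpecialLinearGroup.transvection hsk (-(h * g).1 s k) * h,
        H.mul_mem (hH _ _ _ _) hh, ?_, ?_, fun i hi hik => ?_⟩
      · rw [mul_assoc]
        exact hstd.transvection_mul hsk le_rfl _
      · rw [mul_assoc, transvection_mul_apply, h1, if_neg (Ne.symm hsk), add_zero]
      · rw [mul_assoc, transvection_mul_apply, h1]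
        split_ifs with his
        · rw [his]
          ring
        · rw [add_zero]
          exact h0 i ((Finset.mem_insert.1 hi).resolve_left his) hik

lemma exists_stdCols
    (hH : ∀ (i j : Fin n) (hij : i ≠ j) (c : ℤ), SpecialLinearGroup.transvection hij c ∈ H)
    (g : SpecialLinearGroup (Fin n) ℤ) (k : ℕ) (hk : k ≤ n) :
    ∃ h ∈ H, StdCols k (h * g) := by
  induction k with
  | zero => exact ⟨1, H.one_mem, fun i j hj => absurd hj (Nat.not_lt_zero _)⟩
  | succ k ih =>
    obtain ⟨h, hh, hstd⟩ := ih (by omega)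
    obtain ⟨h', hh', hstd', hone⟩ := exists_diag_one hH (k := ⟨k, hk⟩) hstd
    obtain ⟨h'', hh'', hstd'', hone', hzero⟩ := exists_clear hH hstd' hone Finset.univ
    refine ⟨h'' * (h' * h), H.mul_mem hh'' (H.mul_mem hh' hh), fun i j hj => ?_⟩
    simp only [mul_assoc]
    rcases Nat.lt_succ_iff_lt_or_eq.1 hj with hj | hj
    · exact hstd'' i j hj
    · obtain rfl : j = ⟨k, hk⟩ := Fin.ext hj
      split_ifs with hi
      · rw [hi]
        exact hone'
      · exact hzero i (Finset.mem_univ _) hi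

lemma top_of_transvection_mem
    (hH : ∀ (i j : Fin n) (hij : i ≠ j) (c : ℤ), SpecialLinearGroup.transvection hij c ∈ H) :
    H = ⊤ := by
  rw [Subgroup.eq_top_iff']
  intro g
  obtain ⟨h, hh, hstd⟩ := exists_stdCols hH g n le_rfl
  have hg : h * g = 1 := by
    ext i j
    exact (hstd i j j.2).trans (Matrix.one_apply).symm
  rw [← inv_eq_of_mul_eq_one_right hg]
  exact H.inv_mem hh

end Elimination

lemma transvection_congr {i j : Fin n} (hij : i ≠ j) {m c : ℤ} (hc : m ∣ c) (p q : Fin n) :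
    m ∣ ((SpecialLinearGroup.transvection hij c).1 p q - if p = q then 1 else 0) := by
  have h := transvection_mul_apply hij c 1 p q
  rw [mul_one] at h
  have h1 : (1 : SpecialLinearGroup (Fin n) ℤ).1 p q = if p = q then 1 else 0 :=
    Matrix.one_apply
  rw [h, h1, add_sub_cancel_left]
  split_ifs
  · exact hc.mul_right _
  · exact dvd_zero _

end CoprimeCongruence

/-- For `n ≥ 2` and coprime positive integers `a`, `b`, the principal
congruence subgroups `SL_n(aℤ)` and `SL_n(bℤ)` generate all of `SL_n(ℤ)`. -/
theorem coprime_congruence_subgroups_generate (n a b : ℕ)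
    (hn : 2 ≤ n) (ha : 1 ≤ a) (hb : 1 ≤ b) (hab : Nat.Coprime a b) :
    Subgroup.closure
      ({g : Matrix.SpecialLinearGroup (Fin n) ℤ |
          ∀ i j : Fin n, (a : ℤ) ∣ (g.1 i j - if i = j then 1 else 0)} ∪
       {g : Matrix.SpecialLinearGroup (Fin n) ℤ |
          ∀ i j : Fin n, (b : ℤ) ∣ (g.1 i j - if i = j then 1 else 0)}) = ⊤ := by
  apply CoprimeCongruence.top_of_transvection_mem
  intro i j hij c
  obtain ⟨x, y, hxy⟩ := Nat.isCoprime_iff_coprime.2 hab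
  have hc : c = c * (x * a) + c * (y * b) := by rw [← mul_add, hxy, mul_one]
  rw [hc, Matrix.SpecialLinearGroup.transvection_add]
  refine Subgroup.mul_mem _ (Subgroup.subset_closure (Or.inl ?_))
    (Subgroup.subset_closure (Or.inr ?_))
  · exact CoprimeCongruence.transvection_congr hij ⟨c * x, by ring⟩
  · exact CoprimeCongruence.transvection_congr hij ⟨c * y, by ring⟩
end

section
/- Let n ≥ 1 and let a, b be coprime positive integers. Let Sp_{2n}(ℤ) denote the group of 2n×2n integer matrices g with gᵀ J g = J, where J = (0, I_n; −I_n, 0). Then the subgroup of Sp_{2n}(ℤ) generated by the principal congruence subgroups {g ∈ Sp_{2n}(ℤ) : g ≡ 1 mod a} and {g ∈ Sp_{2n}(ℤ) : g ≡ 1 mod b} is all of Sp_{2n}(ℤ). -/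
/-!
The proof shows that `Sp_{2n}(ℤ)` is generated by the symplectic transvections
`T_{z,t} : x ↦ x + t ω(z,x) z` with `z ∈ ℤ^{2n}`, `t ∈ ℤ`, where `ω(x,y) = xᵀ J y`. This suffices:
`T_{z,s+t} = T_{z,s} T_{z,t}`, the transvection `T_{z,t}` is congruent to `1` modulo `t`, and every
integer is a sum of a multiple of `a` and a multiple of `b`.

For an additive subgroup `L` of `ℤ^{2n}`, let `G_L` be the group generated by the `T_{z,t}` with
`z ∈ L`. It fixes every vector orthogonal to `L`. If `v, w ∈ L` and `ω(w,v) = ±1`, then `T_{v-w,±1}`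
carries `w` to `v` (`exists_map_of_isUnit`). Call `w ∈ L` unimodular if `ω(z,w) = 1` for some
`z ∈ L`. Then `G_L` is transitive on unimodular vectors (`exists_map_of_unimodular`): with
`d = ω(w,v)`, either `d` is a unit, or some `z ∈ L` satisfies `ω(z,w) = 1` and `d ∤ ω(z,v)`; in the
latter case `w` is carried to `z - q w` for any `q`, and the right `q` makes the pairing with `v` a
nonzero remainder modulo `d`, so that a Euclidean descent on `|d|` applies. Two more transvections
make `G_L` transitive on hyperbolic pairs (`exists_map_pair`).

Given `g ∈ Sp_{2n}(ℤ)`, the standard hyperbolic pairs `(e_j, f_j)` are now treated one by one: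
if `g` fixes the pairs indexed by `S`, then for `j ∉ S` the pairs `(g e_j, g f_j)` and `(e_j, f_j)`
both lie in the orthogonal complement `L` of the pairs indexed by `S`, and an element of `G_L`
carries the first to the second without moving the pairs already fixed.
-/

open Matrix

/-- The standard symplectic form `J = (0, I_n; −I_n, 0)` as a block matrix. -/
def Jstd (n : ℕ) : Matrix (Fin n ⊕ Fin n) (Fin n ⊕ Fin n) ℤ :=
  Matrix.fromBlocks 0 1 (-1) 0

/-- The integral symplectic group `Sp_{2n}(ℤ)`: invertible `2n × 2n` integer matrices `g`
with `gᵀ * J * g = J`. -/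
def SpZ (n : ℕ) : Subgroup (GL (Fin n ⊕ Fin n) ℤ) where
  carrier := {g | (g.val)ᵀ * Jstd n * g.val = Jstd n}
  one_mem' := by simp
  mul_mem' := by
    intro a b ha hb
    simp only [Set.mem_setOf_eq, Units.val_mul, Matrix.transpose_mul] at *
    calc (b.val)ᵀ * (a.val)ᵀ * Jstd n * (a.val * b.val)
        = (b.val)ᵀ * ((a.val)ᵀ * Jstd n * a.val) * b.val := by
          simp only [Matrix.mul_assoc]
      _ = (b.val)ᵀ * Jstd n * b.val := by rw [ha]
      _ = Jstd n := hb
  inv_mem' := by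
    intro a ha
    simp only [Set.mem_setOf_eq] at *
    have hmul : a.val * (a⁻¹).val = 1 := by
      rw [← Units.val_mul, mul_inv_cancel, Units.val_one]
    calc ((a⁻¹).val)ᵀ * Jstd n * (a⁻¹).val
        = ((a⁻¹).val)ᵀ * ((a.val)ᵀ * Jstd n * a.val) * (a⁻¹).val := by rw [ha]
      _ = (a.val * (a⁻¹).val)ᵀ * Jstd n * (a.val * (a⁻¹).val) := by
          rw [Matrix.transpose_mul]; simp only [Matrix.mul_assoc]
      _ = Jstd n := by rw [hmul]; simp


namespace SpGen

variable {n : ℕ}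

/-- The symplectic form `ω(x, y) = xᵀ J y` on `ℤ^{2n}`. -/
def om (x y : Fin n ⊕ Fin n → ℤ) : ℤ := x ⬝ᵥ (Jstd n *ᵥ y)

lemma om_add_left (x y z : Fin n ⊕ Fin n → ℤ) : om (x + y) z = om x z + om y z := by
  simp [om, add_dotProduct]

lemma om_sub_left (x y z : Fin n ⊕ Fin n → ℤ) : om (x - y) z = om x z - om y z := by
  simp [om, sub_dotProduct]

lemma om_smul_left (c : ℤ) (x z : Fin n ⊕ Fin n → ℤ) : om (c • x) z = c * om x z := by
  rw [om, om, smul_dotProduct, smul_eq_mul]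

lemma om_skew (x y : Fin n ⊕ Fin n → ℤ) : om x y = -om y x := by
  have hJ : (Jstd n)ᵀ = -Jstd n := by
    simp [Jstd, fromBlocks_transpose, fromBlocks_neg]
  unfold om
  rw [dotProduct_mulVec, ← mulVec_transpose, hJ, neg_mulVec, neg_dotProduct, dotProduct_comm]

lemma om_self (x : Fin n ⊕ Fin n → ℤ) : om x x = 0 := by
  have := om_skew x x
  omega

lemma om_add_right (x y z : Fin n ⊕ Fin n → ℤ) : om z (x + y) = om z x + om z y := by
  simp [om, mulVec_add, dotProduct_add]

lemma om_sub_right (x y z : Fin n ⊕ Fin n → ℤ) : om z (x - y) = om z x - om z y := by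
  simp [om, mulVec_sub, dotProduct_sub]

lemma om_smul_right (c : ℤ) (x z : Fin n ⊕ Fin n → ℤ) : om z (c • x) = c * om z x := by
  rw [om, om, mulVec_smul, dotProduct_smul, smul_eq_mul]

/-- The action of `Sp_{2n}(ℤ)` on column vectors. -/
def act (g : SpZ n) (x : Fin n ⊕ Fin n → ℤ) : Fin n ⊕ Fin n → ℤ :=
  (g : GL (Fin n ⊕ Fin n) ℤ).val *ᵥ x

lemma act_one (x : Fin n ⊕ Fin n → ℤ) : act 1 x = x := by simp [act]

lemma act_mul (g h : SpZ n) (x : Fin n ⊕ Fin n → ℤ) : act (g * h) x = act g (act h x) := by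
  simp [act, mulVec_mulVec]

lemma act_ext_single {g h : SpZ n}
    (H : ∀ i, act g (Pi.single i 1) = act h (Pi.single i 1)) : g = h := by
  apply Subtype.ext
  apply Units.ext
  ext i j
  simpa [act] using congrFun (H j) i

lemma om_act (g : SpZ n) (x y : Fin n ⊕ Fin n → ℤ) : om (act g x) (act g y) = om x y := by
  have hg : (g.1.val)ᵀ * Jstd n * g.1.val = Jstd n := g.2
  unfold om act
  rw [← vecMul_transpose, ← dotProduct_mulVec, mulVec_mulVec, mulVec_mulVec, hg]

/-- The matrix of the transvection `x ↦ x + t ω(z,x) z`. -/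
def tvMat (z : Fin n ⊕ Fin n → ℤ) (t : ℤ) : Matrix (Fin n ⊕ Fin n) (Fin n ⊕ Fin n) ℤ :=
  1 + t • vecMulVec z (z ᵥ* Jstd n)

lemma tvMat_mulVec (z : Fin n ⊕ Fin n → ℤ) (t : ℤ) (x : Fin n ⊕ Fin n → ℤ) :
    tvMat z t *ᵥ x = x + (t * om z x) • z := by
  rw [tvMat, add_mulVec, one_mulVec, smul_mulVec, vecMulVec_mulVec, om, dotProduct_mulVec,
    mul_smul, op_smul_eq_smul]

lemma tvMat_mul_neg (z : Fin n ⊕ Fin n → ℤ) (t : ℤ) : tvMat z t * tvMat z (-t) = 1 := by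
  apply Matrix.ext_of_mulVec_single
  intro i
  rw [← mulVec_mulVec, tvMat_mulVec, tvMat_mulVec, one_mulVec]
  simp only [om_add_right, om_smul_right, om_self]
  module

lemma tvMat_symplectic (z : Fin n ⊕ Fin n → ℤ) (t : ℤ) :
    (tvMat z t)ᵀ * Jstd n * tvMat z t = Jstd n := by
  have key (x y : Fin n ⊕ Fin n → ℤ) : om (tvMat z t *ᵥ x) (tvMat z t *ᵥ y) = om x y := by
    simp only [tvMat_mulVec, om_add_right, om_smul_right, om_self, om_add_left, om_smul_left]
    rw [om_skew x z]
    ring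
  ext i j
  have := key (Pi.single i 1) (Pi.single j 1)
  unfold om at this
  rw [← vecMul_transpose, ← dotProduct_mulVec, mulVec_mulVec, mulVec_mulVec] at this
  simpa using this

/-- The transvection `x ↦ x + t ω(z,x) z` as an element of `Sp_{2n}(ℤ)`. -/
def tv (z : Fin n ⊕ Fin n → ℤ) (t : ℤ) : SpZ n :=
  ⟨⟨tvMat z t, tvMat z (-t), tvMat_mul_neg z t, by simpa using tvMat_mul_neg z (-t)⟩,
    tvMat_symplectic z t⟩

lemma act_tv (z : Fin n ⊕ Fin n → ℤ) (t : ℤ) (x : Fin n ⊕ Fin n → ℤ) :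
    act (tv z t) x = x + (t * om z x) • z := tvMat_mulVec z t x

lemma tv_add (z : Fin n ⊕ Fin n → ℤ) (s t : ℤ) : tv z (s + t) = tv z s * tv z t := by
  apply act_ext_single
  intro i
  simp only [act_mul, act_tv, om_add_right, om_smul_right, om_self]
  module

lemma tv_congr (z : Fin n ⊕ Fin n → ℤ) {a t : ℤ} (h : a ∣ t) (i j : Fin n ⊕ Fin n) :
    a ∣ ((tv z t : GL (Fin n ⊕ Fin n) ℤ).val i j - if i = j then 1 else 0) := by
  change a ∣ (tvMat z t i j - _)
  simp only [tvMat, Matrix.add_apply, Matrix.one_apply, Matrix.smul_apply, add_sub_cancel_left,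
    smul_eq_mul]
  exact h.mul_right _

/-- The group `G_L` generated by the transvections along vectors of `L`. -/
def tvGroup (L : AddSubgroup (Fin n ⊕ Fin n → ℤ)) : Subgroup (SpZ n) :=
  Subgroup.closure {g | ∃ z ∈ L, ∃ t, g = tv z t}

variable {L : AddSubgroup (Fin n ⊕ Fin n → ℤ)}

lemma tv_mem {z : Fin n ⊕ Fin n → ℤ} (hz : z ∈ L) (t : ℤ) : tv z t ∈ tvGroup L :=
  Subgroup.subset_closure ⟨z, hz, t, rfl⟩

lemma act_of_orthogonal {h : SpZ n} (hh : h ∈ tvGroup L) {x : Fin n ⊕ Fin n → ℤ}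
    (hx : ∀ z ∈ L, om z x = 0) : act h x = x := by
  induction hh using Subgroup.closure_induction with
  | mem g hg =>
    obtain ⟨z, hz, t, rfl⟩ := hg
    simp [act_tv, hx z hz]
  | one => exact act_one x
  | mul g h _ _ hg hh => rw [act_mul, hh, hg]
  | inv g _ hg =>
    conv_lhs => rw [← hg]
    rw [← act_mul, inv_mul_cancel, act_one]

lemma exists_map_of_isUnit {v w : Fin n ⊕ Fin n → ℤ} (hv : v ∈ L) (hw : w ∈ L)
    (h : IsUnit (om w v)) : ∃ k ∈ tvGroup L, act k w = v := by
  refine ⟨tv (v - w) (-om w v), tv_mem (L.sub_mem hv hw) _, ?_⟩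
  rw [act_tv, om_sub_left, om_self, om_skew v w]
  have : om w v * om w v = 1 := Int.isUnit_mul_self h
  rw [show -om w v * (-om w v - 0) = 1 by linarith]
  module

/-- Were `ω(z, v)` divisible by `d` for all `z` with `ω(z, w) = 1`, it would be so for all
`z ∈ L`, because such `z` span `L`; unimodularity of `v` then makes `d` a unit. -/
lemma isUnit_or_exists {v w : Fin n ⊕ Fin n → ℤ}
    (uv : ∃ z ∈ L, om z v = 1) (uw : ∃ z ∈ L, om z w = 1) (d : ℤ) :
    IsUnit d ∨ ∃ z ∈ L, om z w = 1 ∧ ¬ d ∣ om z v := by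
  by_contra! hcon
  obtain ⟨hd, hall⟩ := hcon
  obtain ⟨y, hy, hyv⟩ := uv
  obtain ⟨z, hz, hzw⟩ := uw
  have h1 := hall z hz hzw
  have h2 := hall (y + (1 - om y w) • z) (L.add_mem hy (L.zsmul_mem hz _))
    (by rw [om_add_left, om_smul_left, hzw]; ring)
  rw [om_add_left, om_smul_left, hyv] at h2
  exact hd (isUnit_of_dvd_one ((Int.dvd_add_left (h1.mul_left _)).1 h2))

lemma exists_map_of_om_ne_zero {v : Fin n ⊕ Fin n → ℤ} (hv : v ∈ L)
    (uv : ∃ z ∈ L, om z v = 1) (N : ℕ) :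
    ∀ w ∈ L, (∃ z ∈ L, om z w = 1) → om w v ≠ 0 → (om w v).natAbs = N →
      ∃ k ∈ tvGroup L, act k w = v := by
  induction N using Nat.strong_induction_on with
  | _ N ih =>
    intro w hw uw hne hN
    rcases isUnit_or_exists uv uw (om w v) with h | ⟨z, hz, hzw, hnd⟩
    · exact exists_map_of_isUnit hv hw h
    -- the vector `w'` below pairs with `v` to the remainder of `om z v` modulo `om w v`
    · set w' := z - (om z v / om w v) • w with hw'
      have hw'L : w' ∈ L := L.sub_mem hz (L.zsmul_mem hw _)
      have hw'w : om w' w = 1 := by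
        rw [hw', om_sub_left, om_smul_left, om_self, hzw]; ring
      have hww' : om w w' = -1 := by rw [om_skew, hw'w]
      have hr : om w' v = om z v % om w v := by
        rw [hw', om_sub_left, om_smul_left, Int.emod_def]; ring
      have h0 : om w' v ≠ 0 := by
        rw [hr]; exact fun h => hnd (Int.dvd_of_emod_eq_zero h)
      have hlt : (om w' v).natAbs < N := by
        have h1 := Int.emod_nonneg (om z v) hne
        have h2 := Int.emod_lt_abs (om z v) hne
        rw [Int.abs_eq_natAbs] at h2
        rw [hr]; omega
      have uw' : ∃ z ∈ L, om z w' = 1 :=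
        ⟨-w, L.neg_mem hw, by rw [← neg_one_smul ℤ w, om_smul_left, hww']; rfl⟩
      obtain ⟨k, hk, hkv⟩ := ih _ hlt w' hw'L uw' h0 rfl
      obtain ⟨l, hl, hlw⟩ := exists_map_of_isUnit hw'L hw (by rw [hww']; exact isUnit_one.neg)
      exact ⟨k * l, mul_mem hk hl, by rw [act_mul, hlw, hkv]⟩

lemma exists_map_of_unimodular {v w : Fin n ⊕ Fin n → ℤ} (hv : v ∈ L) (hw : w ∈ L)
    (uv : ∃ z ∈ L, om z v = 1) (uw : ∃ z ∈ L, om z w = 1) :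
    ∃ k ∈ tvGroup L, act k w = v := by
  by_cases hne : om w v = 0
  · obtain h | ⟨z, hz, hzw, hnd⟩ := isUnit_or_exists uv uw 0
    · exact absurd h not_isUnit_zero
    · have hwz : om w z = -1 := by rw [om_skew, hzw]
      have uz : ∃ y ∈ L, om y z = 1 :=
        ⟨-w, L.neg_mem hw, by rw [← neg_one_smul ℤ w, om_smul_left, hwz]; rfl⟩
      obtain ⟨k, hk, hkv⟩ :=
        exists_map_of_om_ne_zero hv uv _ z hz uz (fun h => hnd (by rw [h])) rfl
      obtain ⟨l, hl, hlw⟩ := exists_map_of_isUnit hz hw (by rw [hwz]; exact isUnit_one.neg)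
      exact ⟨k * l, mul_mem hk hl, by rw [act_mul, hlw, hkv]⟩
  · exact exists_map_of_om_ne_zero hv uv _ w hw uw hne rfl

lemma act_mem {h : SpZ n} (hh : h ∈ tvGroup L) : ∀ {x : Fin n ⊕ Fin n → ℤ},
    x ∈ L → act h x ∈ L := by
  induction hh using Subgroup.closure_induction'' with
  | mem g hg =>
    intro x hx
    obtain ⟨z, hz, t, rfl⟩ := hg
    rw [act_tv]
    exact L.add_mem hx (L.zsmul_mem hz _)
  | inv_mem g hg =>
    intro x hx
    obtain ⟨z, hz, t, rfl⟩ := hg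
    have : (tv z t)⁻¹ = tv z (-t) := Subtype.ext (Units.ext rfl)
    rw [this, act_tv]
    exact L.add_mem hx (L.zsmul_mem hz _)
  | one => intro x hx; rwa [act_one]
  | mul g h _ _ hg hh => intro x hx; rw [act_mul]; exact hg (hh hx)

lemma exists_map_pair {e f e' f' : Fin n ⊕ Fin n → ℤ} (he : e ∈ L) (hf : f ∈ L)
    (he' : e' ∈ L) (hf' : f' ∈ L) (hef : om e f = 1) (hef' : om e' f' = 1) :
    ∃ k ∈ tvGroup L, act k e' = e ∧ act k f' = f := by
  have uni {x y : Fin n ⊕ Fin n → ℤ} (hy : y ∈ L) (h : om x y = 1) : ∃ z ∈ L, om z x = 1 :=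
    ⟨-y, L.neg_mem hy, by rw [← neg_one_smul ℤ y, om_smul_left, om_skew, h]; rfl⟩
  obtain ⟨k, hk, hke⟩ := exists_map_of_unimodular he he' (uni hf hef) (uni hf' hef')
  set p := act k f' with hp
  have hpL : p ∈ L := act_mem hk hf'
  have hep : om e p = 1 := by rw [hp, ← hke, om_act, hef']
  -- `T_{e,t}` fixes `e` and adds `t e` to `p`; this `t` makes the pairing with `f` equal to `1`
  set q := p + (1 - om p f) • e with hq
  have hqL : q ∈ L := L.add_mem hpL (L.zsmul_mem he _)
  have hqf : om q f = 1 := by rw [hq, om_add_left, om_smul_left, hef]; ring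
  have heq : om e q = 1 := by rw [hq, om_add_right, om_smul_right, hep, om_self]; ring
  have h1p : act (tv e (1 - om p f)) p = q := by rw [act_tv, hep, mul_one]
  have h1e : act (tv e (1 - om p f)) e = e := by rw [act_tv, om_self]; simp
  have h2q : act (tv (f - q) (-1)) q = f := by
    rw [act_tv, om_sub_left, om_self, om_skew f q, hqf]; module
  have h2e : act (tv (f - q) (-1)) e = e := by
    rw [act_tv, om_skew, om_sub_right, hef, heq]; simp
  refine ⟨tv (f - q) (-1) * (tv e (1 - om p f) * k),
    mul_mem (tv_mem (L.sub_mem hf hqL) _) (mul_mem (tv_mem he _) hk), ?_, ?_⟩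
  · rw [act_mul, act_mul, hke, h1e, h2e]
  · rw [act_mul, act_mul, ← hp, h1p, h2q]

/-- The standard vector `e_j`. -/
def eb (j : Fin n) : Fin n ⊕ Fin n → ℤ := Pi.single (Sum.inl j) 1

/-- The standard vector `f_j`, dual to `e_j`. -/
def fb (j : Fin n) : Fin n ⊕ Fin n → ℤ := Pi.single (Sum.inr j) 1

lemma om_eb_fb (i j : Fin n) : om (eb i) (fb j) = if i = j then 1 else 0 := by
  simp [om, eb, fb, Jstd, Matrix.one_apply]

lemma om_eb_eb (i j : Fin n) : om (eb i) (eb j) = 0 := by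
  simp [om, eb, Jstd]

lemma om_fb_fb (i j : Fin n) : om (fb i) (fb j) = 0 := by
  simp [om, fb, Jstd]

/-- The orthogonal complement of the hyperbolic pairs `(e_i, f_i)`, `i ∈ S`. -/
def perp (S : Finset (Fin n)) : AddSubgroup (Fin n ⊕ Fin n → ℤ) where
  carrier := {z | ∀ i ∈ S, om z (eb i) = 0 ∧ om z (fb i) = 0}
  zero_mem' := by intro i _; simp [om]
  add_mem' := by
    intro x y hx hy i hi
    simp [om_add_left, hx i hi, hy i hi]
  neg_mem' := by
    intro x hx i hi
    rw [← neg_one_smul ℤ x]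
    simp only [om_smul_left, hx i hi, mul_zero, and_self]

lemma exists_fix (g : SpZ n) (S : Finset (Fin n)) :
    ∃ h ∈ tvGroup (n := n) ⊤, ∀ i ∈ S, act (h * g) (eb i) = eb i ∧ act (h * g) (fb i) = fb i := by
  induction S using Finset.induction_on with
  | empty => exact ⟨1, one_mem _, by simp⟩
  | insert j S hj ih =>
    obtain ⟨h, hh, hfix⟩ := ih
    have hne (i) (hi : i ∈ S) : i ≠ j := fun hij => hj (hij ▸ hi)
    have he : eb j ∈ perp S := fun i hi => by
      simp [om_eb_eb, om_eb_fb, (hne i hi).symm]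
    have hf : fb j ∈ perp S := fun i hi => by
      simp [om_fb_fb, om_skew (fb j) (eb i), om_eb_fb, hne i hi]
    have hact {x} (hx : x ∈ perp S) : act (h * g) x ∈ perp S := fun i hi => by
      obtain ⟨h1, h2⟩ := hfix i hi
      constructor
      · rw [← h1, om_act]; exact (hx i hi).1
      · rw [← h2, om_act]; exact (hx i hi).2
    have hef : om (eb j) (fb j) = 1 := by simp [om_eb_fb]
    obtain ⟨k, hk, hke, hkf⟩ := exists_map_pair he hf (hact he) (hact hf) hef
      (by rw [om_act, hef])
    refine ⟨k * h, mul_mem (Subgroup.closure_mono ?_ hk) hh, ?_⟩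
    · rintro _ ⟨z, _, t, rfl⟩
      exact ⟨z, AddSubgroup.mem_top z, t, rfl⟩
    · intro i hi
      rw [mul_assoc, act_mul k, act_mul k]
      rcases Finset.mem_insert.1 hi with rfl | hi
      · exact ⟨hke, hkf⟩
      · rw [(hfix i hi).1, (hfix i hi).2]
        exact ⟨act_of_orthogonal hk fun z hz => (hz i hi).1,
          act_of_orthogonal hk fun z hz => (hz i hi).2⟩

lemma tvGroup_top : tvGroup (n := n) ⊤ = ⊤ := by
  rw [eq_top_iff]
  intro g _
  obtain ⟨h, hh, hfix⟩ := exists_fix g Finset.univ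
  have : h * g = 1 := by
    apply act_ext_single
    rintro (i | i)
    · rw [act_one]; exact (hfix i (Finset.mem_univ i)).1
    · rw [act_one]; exact (hfix i (Finset.mem_univ i)).2
  rw [eq_inv_of_mul_eq_one_right this]
  exact inv_mem hh

end SpGen

/-- For `n ≥ 1` and coprime positive integers `a`, `b`, the principal
congruence subgroups of levels `a` and `b` generate all of `Sp_{2n}(ℤ)`. -/
theorem coprime_congruence_subgroups_generate_sp (n a b : ℕ)
    (hn : 1 ≤ n) (ha : 1 ≤ a) (hb : 1 ≤ b) (hab : Nat.Coprime a b) :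
    Subgroup.closure
      ({g : SpZ n | ∀ i j : Fin n ⊕ Fin n,
          (a : ℤ) ∣ ((g : GL (Fin n ⊕ Fin n) ℤ).val i j - if i = j then 1 else 0)} ∪
       {g : SpZ n | ∀ i j : Fin n ⊕ Fin n,
          (b : ℤ) ∣ ((g : GL (Fin n ⊕ Fin n) ℤ).val i j - if i = j then 1 else 0)}) = ⊤ := by
  rw [eq_top_iff, ← SpGen.tvGroup_top, SpGen.tvGroup, Subgroup.closure_le]
  rintro _ ⟨z, _, t, rfl⟩
  obtain ⟨u, v, huv⟩ := Nat.isCoprime_iff_coprime.2 hab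
  have ht : t = t * u * a + t * v * b := by
    rw [mul_assoc, mul_assoc, ← mul_add, huv, mul_one]
  rw [ht, SpGen.tv_add]
  exact mul_mem
    (Subgroup.subset_closure (Or.inl (SpGen.tv_congr z (Dvd.intro_left _ rfl))))
    (Subgroup.subset_closure (Or.inr (SpGen.tv_congr z (Dvd.intro_left _ rfl))))
end

section
/- Let n ≥ 3, let 1 ≤ m < n, and let k ≥ 1. Let F(k) be the subgroup of SL_n(ℤ) generated by U⁺(kℤ), U⁻(kℤ) and M(kℤ), and let Γ_k be the intersection of all congruence subgroups of SL_n(ℤ) containing F(k). Then Γ_k is itself a congruence subgroup of SL_n(ℤ); in particular there exists N ≥ 1 with SL_n(Nℤ) ⊆ Γ_k, and Γ_k has finite index in SL_n(ℤ). -/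
/-!
The level `k⁴` works uniformly: every congruence subgroup `H ⊇ F(k)` contains `SL_n(k⁴ℤ)`, hence
so does the intersection `Γ_k`; finite index follows since `SL_n(ℤ/N)` is finite.

`F(k)` contains all elementary matrices `E_ij(t)` with `k² ∣ t`: for `i`, `j` in different blocks
they lie in `U⁺(kℤ)` or `U⁻(kℤ)`, and inside a block they are commutators of two such matrices
(`hasElem_F`). Let `L` be a level of `H` and reduce modulo `L`. It suffices that a matrix of
determinant one over `R = ℤ/L` congruent to `1` modulo `c²`, `c = k²`, is a product of elementary
matrices with off-diagonal entries in `(c)` (`mem_of_congr_one`). This is Gaussian elimination.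
The diagonal pivot is prime to `c`, so it generates the unit ideal together with `c²` times the
other entries of its column, and as `R` has stable range one (`zmod_exists_isUnit_add`), adding
`c²`-multiples of other rows makes the pivot a unit `u ≡ 1 mod c²`. Its row and column are then
cleared, and the pivot is normalised by a torus element `diag(u⁻¹, u)`, which is a product of four
elementary matrices with entries in `(c)` (`exists_torus`).
-/

open Matrix

/-! ### Elementary operations available in a subgroup of `SL` -/

section Elementary

variable {ι R : Type*} [Fintype ι] [DecidableEq ι] [CommRing R]
  {S : Subgroup (SpecialLinearGroup ι R)} {c : R}

/-- `HasElem S c` says that `S` contains every elementary matrix whose off-diagonal entry is a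
multiple of `c`. -/
def HasElem (S : Subgroup (SpecialLinearGroup ι R)) (c : R) : Prop :=
  ∀ (i j : ι) (hij : i ≠ j) (t : R), c ∣ t → SpecialLinearGroup.transvection hij t ∈ S

/-- Adding multiples `v i` of row `p` to all other rows simultaneously. -/
lemma exists_rows_add (hS : HasElem S c) (p : ι) (v : ι → R) (hp : v p = 0)
    (hv : ∀ i, c ∣ v i) :
    ∃ h ∈ S, ∀ (M : Matrix ι ι R) (i j : ι), ((h : Matrix ι ι R) * M) i j
      = M i j + v i * M p j := by
  have key : ∀ s : Finset ι, ∃ h ∈ S, ∀ (M : Matrix ι ι R) (i j : ι),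
      ((h : Matrix ι ι R) * M) i j = M i j + (if i ∈ s then v i else 0) * M p j := by
    intro s
    induction s using Finset.induction_on with
    | empty => exact ⟨1, S.one_mem, by simp⟩
    | insert a s ha ih =>
      obtain ⟨h, hh, hM⟩ := ih
      by_cases hap : a = p
      · refine ⟨h, hh, fun M i j => ?_⟩
        rw [hM]
        by_cases hi : i = p
        · subst hi; simp [hp]
        · simp [hap, hi]
      · refine ⟨SpecialLinearGroup.transvection hap (v a) * h,
          S.mul_mem (hS _ _ _ _ (hv a)) hh, fun M i j => ?_⟩
        rw [Matrix.SpecialLinearGroup.coe_mul, SpecialLinearGroup.transvection_coe, Matrix.mul_assoc]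
        change ((Matrix.transvection a p (v a) * _ : Matrix ι ι R)) i j = _
        by_cases hi : i = a
        · subst hi
          rw [Matrix.transvection_mul_apply_same, hM, hM]
          by_cases hps : p ∈ s <;> simp [ha, hp]
        · rw [Matrix.transvection_mul_apply_of_ne _ _ _ _ hi, hM]
          simp [hi]
  obtain ⟨h, hh, hM⟩ := key Finset.univ
  exact ⟨h, hh, by simpa using hM⟩

/-- Adding a linear combination of the other rows to row `p`. -/
lemma exists_row_add_sum (hS : HasElem S c) (p : ι) (w : ι → R) (hp : w p = 0)
    (hw : ∀ i, c ∣ w i) :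
    ∃ h ∈ S, ∀ (M : Matrix ι ι R) (i j : ι), ((h : Matrix ι ι R) * M) i j
      = M i j + if i = p then ∑ l, w l * M l j else 0 := by
  have key : ∀ s : Finset ι, ∃ h ∈ S, ∀ (M : Matrix ι ι R) (i j : ι),
      ((h : Matrix ι ι R) * M) i j = M i j + if i = p then ∑ l ∈ s, w l * M l j else 0 := by
    intro s
    induction s using Finset.induction_on with
    | empty => exact ⟨1, S.one_mem, by simp⟩
    | insert a s ha ih =>
      obtain ⟨h, hh, hM⟩ := ih
      by_cases hap : p = a
      · refine ⟨h, hh, fun M i j => ?_⟩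
        rw [hM, Finset.sum_insert ha, ← hap, hp]
        simp
      · refine ⟨SpecialLinearGroup.transvection hap (w a) * h,
          S.mul_mem (hS _ _ _ _ (hw a)) hh, fun M i j => ?_⟩
        rw [Matrix.SpecialLinearGroup.coe_mul, SpecialLinearGroup.transvection_coe, Matrix.mul_assoc]
        change ((Matrix.transvection p a (w a) * _ : Matrix ι ι R)) i j = _
        by_cases hi : i = p
        · subst hi
          rw [Matrix.transvection_mul_apply_same, hM, hM, if_neg (Ne.symm hap),
            Finset.sum_insert ha]
          simp; ring
        · rw [Matrix.transvection_mul_apply_of_ne _ _ _ _ hi, hM]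
          simp [hi]
  exact key Finset.univ

/-- Adding multiples `w j` of column `p` to all other columns simultaneously. -/
lemma exists_cols_add (hS : HasElem S c) (p : ι) (w : ι → R) (hp : w p = 0)
    (hw : ∀ i, c ∣ w i) :
    ∃ h ∈ S, ∀ (M : Matrix ι ι R) (i j : ι), (M * (h : Matrix ι ι R)) i j
      = M i j + M i p * w j := by
  have key : ∀ s : Finset ι, ∃ h ∈ S, ∀ (M : Matrix ι ι R) (i j : ι),
      (M * (h : Matrix ι ι R)) i j = M i j + M i p * (if j ∈ s then w j else 0) := by
    intro s
    induction s using Finset.induction_on with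
    | empty => exact ⟨1, S.one_mem, by simp⟩
    | insert a s ha ih =>
      obtain ⟨h, hh, hM⟩ := ih
      by_cases hap : p = a
      · refine ⟨h, hh, fun M i j => ?_⟩
        rw [hM]
        by_cases hj : j = p
        · subst hj; simp [hp]
        · simp [← hap, hj]
      · refine ⟨h * SpecialLinearGroup.transvection hap (w a),
          S.mul_mem hh (hS _ _ _ _ (hw a)), fun M i j => ?_⟩
        rw [Matrix.SpecialLinearGroup.coe_mul, SpecialLinearGroup.transvection_coe, ← Matrix.mul_assoc]
        change ((_ * Matrix.transvection p a (w a) : Matrix ι ι R)) i j = _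
        by_cases hj : j = a
        · subst hj
          rw [Matrix.mul_transvection_apply_same, hM, hM]
          simp [ha, hp]; ring
        · rw [Matrix.mul_transvection_apply_of_ne _ _ _ _ hj, hM]
          simp [hj]
  obtain ⟨h, hh, hM⟩ := key Finset.univ
  exact ⟨h, hh, by simpa using hM⟩

/-- The torus element with entries `w` at `p` and `w' = w⁻¹` at `q`, for `w ≡ 1 mod c²`, is a
product of four elementary matrices with off-diagonal entries divisible by `c`. -/
lemma exists_torus (hS : HasElem S c) {p q : ι} (hpq : p ≠ q) (w w' : R) (hw : w * w' = 1)
    (hc : c ^ 2 ∣ w - 1) :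
    ∃ h ∈ S, ∀ (M : Matrix ι ι R) (i j : ι), ((h : Matrix ι ι R) * M) i j
      = (if i = p then w else if i = q then w' else 1) * M i j := by
  -- `w = 1 + a b` with `a = c` and `b = c t`; then `E_pq(a) E_qp(b)` has pivot `w`
  obtain ⟨t, ht⟩ := hc
  have hk : w' * (1 + c ^ 2 * t) = 1 := by linear_combination hw - w' * ht
  refine ⟨SpecialLinearGroup.transvection hpq.symm (-(c * t * w')) *
    (SpecialLinearGroup.transvection hpq c * (SpecialLinearGroup.transvection hpq.symm (c * t) *
      SpecialLinearGroup.transvection hpq (-(c * w')))), ?_, fun M i j => ?_⟩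
  · refine S.mul_mem (hS _ _ _ _ ?_) (S.mul_mem (hS _ _ _ _ dvd_rfl)
      (S.mul_mem (hS _ _ _ _ ?_) (hS _ _ _ _ ?_)))
    · exact ⟨-(t * w'), by ring⟩
    · exact ⟨t, rfl⟩
    · exact ⟨-w', by ring⟩
  · simp only [Matrix.SpecialLinearGroup.coe_mul, SpecialLinearGroup.transvection_coe, Matrix.mul_assoc]
    change (Matrix.transvection q p _ * (Matrix.transvection p q _ *
      (Matrix.transvection q p _ * (Matrix.transvection p q _ * M))) : Matrix ι ι R) i j = _
    by_cases hi : i = p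
    · subst hi
      simp [hpq, hpq.symm]
      linear_combination (-M i j) * ht - c * M q j * hk
    · by_cases hi' : i = q
      · subst hi'
        simp [hpq, hpq.symm]
        linear_combination (-(c * t * M p j) + M i j * (w' * (1 + c ^ 2 * t) - 1 - w')) * hk
      · simp [hi, hi']

end Elementary

/-! ### Stable range and Gaussian elimination -/

/-- `ℤ/L` has stable range one. -/
lemma zmod_exists_isUnit_add (L : ℕ) [NeZero L] (x y : ZMod L) (h : IsCoprime x y) :
    ∃ t, IsUnit (x + t * y) := by
  set d := Nat.gcd y.val L with hd
  have hdL : d ∣ L := Nat.gcd_dvd_right _ _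
  have hy : ZMod.castHom hdL (ZMod d) y = 0 := by
    rw [← ZMod.natCast_zmod_val y, map_natCast, ZMod.natCast_eq_zero_iff]
    exact Nat.gcd_dvd_left _ _
  have hx : IsUnit (ZMod.castHom hdL (ZMod d) x) := by
    have := h.map (ZMod.castHom hdL (ZMod d))
    rwa [hy, isCoprime_zero_right] at this
  -- lift the unit `x mod d` to a unit modulo `L`; the difference is a multiple of `d`
  obtain ⟨v, hv⟩ := ZMod.unitsMap_surjective hdL hx.unit
  have hv' : ZMod.castHom hdL (ZMod d) (v : ZMod L) = ZMod.castHom hdL (ZMod d) x := by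
    have := congrArg Units.val hv
    simpa [ZMod.unitsMap_def] using this
  obtain ⟨s, hs⟩ : (d : ℕ) ∣ ((v : ZMod L) - x).val := by
    rw [← ZMod.natCast_eq_zero_iff, ← map_natCast (ZMod.castHom hdL (ZMod d)),
      ZMod.natCast_zmod_val, map_sub, hv', sub_self]
  have hs' : (v : ZMod L) - x = d * s := by
    rw [← ZMod.natCast_zmod_val ((v : ZMod L) - x), hs, Nat.cast_mul]
  have hb : (d : ZMod L) = y * (Nat.gcdA y.val L : ZMod L) := by
    have := congrArg (Int.cast : ℤ → ZMod L) (Nat.gcd_eq_gcd_ab y.val L)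
    push_cast at this
    simpa using this
  refine ⟨(Nat.gcdA y.val L : ZMod L) * s, ?_⟩
  convert v.isUnit using 1
  linear_combination (-1 : ZMod L) * hs' - (s : ZMod L) * hb

section Elimination

variable {ι R : Type*} [Fintype ι] [DecidableEq ι] [CommRing R]
  {S : Subgroup (SpecialLinearGroup ι R)} {c : R}

/-- Gaussian elimination: if `R` has stable range one and `S` contains all elementary matrices
with off-diagonal entry in `(c)`, then `S` contains every matrix congruent to `1` modulo `c²`.
The induction is on the set `s` of indices whose row and column already agree with the
identity. -/
lemma mem_of_congr_one (hR : ∀ x y : R, IsCoprime x y → ∃ t, IsUnit (x + t * y))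
    (hS : HasElem S c) (d : ℕ) :
    ∀ (s : Finset ι) (g : SpecialLinearGroup ι R), sᶜ.card = d →
      (∀ i j, c ^ 2 ∣ g.1 i j - (1 : Matrix ι ι R) i j) →
      (∀ i j, (i ∈ s ∨ j ∈ s) → g.1 i j = (1 : Matrix ι ι R) i j) → g ∈ S := by
  induction d with
  | zero =>
    intro s g hd _ hs
    have hs' : s = Finset.univ := by simpa using hd
    have : g = 1 := by
      ext i j
      simpa using hs i j (by simp [hs'])
    rw [this]
    exact S.one_mem
  | succ d ih =>
    intro s g hd hg hs
    obtain ⟨p, hp⟩ : sᶜ.Nonempty := by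
      rw [← Finset.card_pos]; omega
    by_cases hq : ∃ q ∈ sᶜ, p ≠ q
    · obtain ⟨q, hqs, hpq⟩ := hq
      rw [Finset.mem_compl] at hp hqs
      -- make the pivot a unit
      obtain ⟨g₁, hg₁S, hg₁, hs₁, hu⟩ : ∃ g₁ : SpecialLinearGroup ι R, (g₁ ∈ S → g ∈ S) ∧
          (∀ i j, c ^ 2 ∣ g₁.1 i j - (1 : Matrix ι ι R) i j) ∧
          (∀ i j, (i ∈ s ∨ j ∈ s) → g₁.1 i j = (1 : Matrix ι ι R) i j) ∧
          IsUnit (g₁.1 p p) := by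
        set y : ι → R := fun i => (g⁻¹).1 p i with hy
        have hsum : ∑ i, y i * g.1 i p = 1 := by
          have : ((g⁻¹ * g : SpecialLinearGroup ι R)).1 p p = 1 := by simp
          rwa [Matrix.SpecialLinearGroup.coe_mul, Matrix.mul_apply] at this
        set z : ι → R := fun i => if i = p ∨ i ∈ s then 0 else y i with hz
        have hsum' : y p * g.1 p p + ∑ i, z i * g.1 i p = 1 := by
          refine Eq.trans ?_ hsum
          rw [← Finset.add_sum_erase Finset.univ (fun i => z i * g.1 i p) (Finset.mem_univ p),
            ← Finset.add_sum_erase Finset.univ (fun i => y i * g.1 i p) (Finset.mem_univ p)]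
          have h1 : z p = 0 := by simp [hz]
          rw [h1, zero_mul, zero_add]
          congr 1
          refine Finset.sum_congr rfl fun i hi => ?_
          have hip : i ≠ p := Finset.ne_of_mem_erase hi
          by_cases his : i ∈ s
          · rw [hs i p (Or.inl his), Matrix.one_apply_ne hip]; simp
          · simp [hz, hip, his]
        have hcop : IsCoprime (g.1 p p) (c ^ 2 * ∑ i, z i * g.1 i p) := by
          refine IsCoprime.mul_right ?_ ⟨y p, 1, by rw [one_mul]; exact hsum'⟩
          obtain ⟨r, hr⟩ := hg p p
          rw [Matrix.one_apply_eq] at hr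
          exact ⟨1, -r, by linear_combination hr⟩
        obtain ⟨t, ht⟩ := hR _ _ hcop
        obtain ⟨h, hhS, hh⟩ := exists_row_add_sum hS p (fun i => c ^ 2 * (t * z i))
          (by simp [hz]) (fun i => ⟨c * (t * z i), by ring⟩)
        refine ⟨h * g, fun H => (S.mul_mem_cancel_left hhS).1 H, fun i j => ?_,
          fun i j hij => ?_, ?_⟩
        · rw [Matrix.SpecialLinearGroup.coe_mul, hh, add_sub_right_comm]
          refine dvd_add (hg i j) ?_
          split_ifs
          · exact Finset.dvd_sum fun l _ => ⟨t * z l * g.1 l j, by ring⟩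
          · exact dvd_zero _
        · rw [Matrix.SpecialLinearGroup.coe_mul, hh, hs i j hij, add_eq_left]
          split_ifs with hip
          · refine Finset.sum_eq_zero fun l _ => ?_
            have hj : j ∈ s := hij.resolve_left (hip ▸ hp)
            rw [hs l j (Or.inr hj)]
            by_cases hlj : l = j
            · simp [hz, hlj, hj]
            · rw [Matrix.one_apply_ne hlj, mul_zero]
          · rfl
        · rw [Matrix.SpecialLinearGroup.coe_mul, hh, if_pos rfl]
          convert ht using 2
          rw [Finset.mul_sum, Finset.mul_sum]
          exact Finset.sum_congr rfl fun l _ => by ring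
      obtain ⟨u, hu⟩ := hu
      have hcu : c ^ 2 ∣ (u : R) - 1 := by
        have := hg₁ p p
        rwa [← hu, Matrix.one_apply_eq] at this
      have hcu' : c ^ 2 ∣ ((u⁻¹ : Rˣ) : R) - 1 := by
        obtain ⟨r, hr⟩ := hcu
        exact ⟨-r * (u⁻¹ : Rˣ), by linear_combination (-(u⁻¹ : Rˣ) : R) * hr + u.mul_inv⟩
      have hoff : ∀ i j, i ≠ j → c ^ 2 ∣ g₁.1 i j := fun i j hij => by
        simpa [Matrix.one_apply_ne hij] using hg₁ i j
      have hcc : c ∣ c ^ 2 := Dvd.intro_left c (by ring)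
      -- clear column `p`, then row `p`
      obtain ⟨h₂, hh₂S, hh₂⟩ := exists_rows_add hS p
        (fun i => if i = p then 0 else -(u⁻¹ : Rˣ) * g₁.1 i p) (by simp) (fun i => by
          split_ifs with h
          · exact dvd_zero _
          · exact hcc.trans ((hoff i p h).mul_left _))
      obtain ⟨h₃, hh₃S, hh₃⟩ := exists_cols_add hS p
        (fun j => if j = p then 0 else -(u⁻¹ : Rˣ) * g₁.1 p j) (by simp) (fun j => by
          split_ifs with h
          · exact dvd_zero _
          · exact hcc.trans ((hoff p j (Ne.symm h)).mul_left _))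
      -- normalise the pivot
      obtain ⟨h₄, hh₄S, hh₄⟩ := exists_torus hS hpq ((u⁻¹ : Rˣ) : R) u (by simp) hcu'
      have hu1 : (u : R) * (u⁻¹ : Rˣ) = 1 := by simp
      set B : Matrix ι ι R := (h₂ * g₁ * h₃ : SpecialLinearGroup ι R).1 with hB
      have hBe : ∀ i j, B i j = if i = p then (if j = p then (u : R) else 0) else
          if j = p then 0 else g₁.1 i j - (u⁻¹ : Rˣ) * g₁.1 i p * g₁.1 p j := by
        intro i j
        rw [hB, Matrix.SpecialLinearGroup.coe_mul, hh₃, Matrix.SpecialLinearGroup.coe_mul, hh₂, hh₂]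
        by_cases hi : i = p
        · by_cases hj : j = p
          · simp [hi, hj, hu]
          · simp [hi, hj, ← hu]
        · by_cases hj : j = p
          · simp only [hi, hj, ← hu, if_true, if_false]
            linear_combination (-g₁.1 i p) * hu1
          · simp only [hi, hj, ← hu, if_false]
            linear_combination ((u⁻¹ : Rˣ) * g₁.1 i p * g₁.1 p j) * hu1
      have hfin : h₄ * (h₂ * g₁ * h₃) ∈ S := by
        refine ih (insert p s) _ ?_ (fun i j => ?_) (fun i j hij => ?_)
        · rw [Finset.compl_insert, Finset.card_erase_of_mem (by simpa using hp), hd]; rfl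
        · rw [Matrix.SpecialLinearGroup.coe_mul, hh₄, ← hB, hBe]
          by_cases hi : i = p
          · by_cases hj : j = p
            · simp [hi, hj, Matrix.one_apply]
            · simp [hi, hj, Ne.symm hj]
          · by_cases hj : j = p
            · simp [hi, hj]
            · have h1 : c ^ 2 ∣ g₁.1 i j - (u⁻¹ : Rˣ) * g₁.1 i p * g₁.1 p j
                  - (1 : Matrix ι ι R) i j := by
                rw [sub_right_comm]
                exact dvd_sub (hg₁ i j) ((hoff p j (Ne.symm hj)).mul_left _)
              simp only [hi, hj, if_false]
              split_ifs with hiq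
              · have := dvd_add (h1.mul_left (u : R)) (hcu.mul_right ((1 : Matrix ι ι R) i j))
                convert this using 1; ring
              · simpa using h1
        · rw [Matrix.SpecialLinearGroup.coe_mul, hh₄, ← hB, hBe]
          by_cases hi : i = p
          · by_cases hj : j = p
            · simp [hi, hj, Matrix.one_apply]
            · simp [hi, hj, Ne.symm hj]
          · by_cases hj : j = p
            · simp [hi, hj]
            · have hij' : i ∈ s ∨ j ∈ s := by simpa [hi, hj] using hij
              have h0 : g₁.1 i p * g₁.1 p j = 0 := by
                rcases hij' with h | h
                · rw [hs₁ i p (Or.inl h), Matrix.one_apply_ne hi, zero_mul]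
                · rw [hs₁ p j (Or.inr h), Matrix.one_apply_ne (Ne.symm hj), mul_zero]
              simp only [hi, hj, if_false]
              rw [mul_assoc, h0, mul_zero, sub_zero, hs₁ i j hij']
              split_ifs with hiq
              · have : i ≠ j := by
                  rintro rfl
                  exact hqs (hiq ▸ (or_self_iff.1 hij'))
                rw [Matrix.one_apply_ne this, mul_zero]
              · rw [one_mul]
      exact hg₁S ((S.mul_mem_cancel_left hh₂S).1 ((S.mul_mem_cancel_right hh₃S).1
        ((S.mul_mem_cancel_left hh₄S).1 hfin)))
    · -- only one index is left, and the determinant forces the last pivot to be `1`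
      push Not at hq
      have hmem : ∀ i, i ≠ p → i ∈ s := fun i hi => by
        by_contra h
        exact hi (hq i (by simpa using h)).symm
      have hdiag : g.1 = Matrix.diagonal (fun i => if i = p then g.1 p p else 1) := by
        ext i j
        by_cases hi : i = p
        · by_cases hj : j = p
          · simp [hi, hj]
          · rw [hs i j (Or.inr (hmem j hj)), Matrix.one_apply_ne (by rw [hi]; exact Ne.symm hj),
              Matrix.diagonal_apply_ne _ (by rw [hi]; exact Ne.symm hj)]
        · rw [hs i j (Or.inl (hmem i hi))]
          by_cases hij : i = j
          · subst hij; simp [hi]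
          · rw [Matrix.one_apply_ne hij, Matrix.diagonal_apply_ne _ hij]
      have hdet : g.1 p p = 1 := by
        have h1 := g.2
        rw [hdiag, Matrix.det_diagonal, Finset.prod_ite_eq' Finset.univ p] at h1
        simpa using h1
      have : g = 1 := by
        ext i j
        rw [hdiag, hdet]
        simp
      rw [this]
      exact S.one_mem

end Elimination

/-! ### Elementary matrices in `F(k)` -/

/-- Two indices in different blocks: the elementary matrix lies in `U⁺(kℤ)` or `U⁻(kℤ)`. -/
lemma transvection_mem_F_of_ne_block {n m k : ℕ} (h : m ≤ n) {i j : Fin n} (hij : i ≠ j)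
    (hb : ¬((i : ℕ) < m ↔ (j : ℕ) < m)) (t : ℤ) (ht : (k : ℤ) ∣ t) :
    SpecialLinearGroup.transvection hij t ∈ Fgroup n m k h := by
  have hent : ∀ a b : Fin n, (SpecialLinearGroup.transvection hij t).1 a b =
      (if a = b then 1 else 0) + if i = a ∧ j = b then t else 0 := by
    intro a b
    rw [SpecialLinearGroup.transvection_coe, Matrix.add_apply, Matrix.one_apply,
      Matrix.single_apply]
  refine Subgroup.subset_closure (Or.inl ?_)
  by_cases hi : (i : ℕ) < m
  · left
    intro a b
    have hj : ¬ (j : ℕ) < m := fun hj => hb ⟨fun _ => hj, fun _ => hi⟩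
    rw [hent]
    by_cases hab : a = b
    · subst hab
      have : ¬ (i = a ∧ j = a) := fun h => hij (h.1.trans h.2.symm)
      simp [this]
    · by_cases hc : i = a ∧ j = b
      · obtain ⟨rfl, rfl⟩ := hc
        simp [hij, hi, not_lt.1 hj, ht]
      · simp [hab, hc]
  · right
    intro a b
    have hj : (j : ℕ) < m := by
      by_contra hj
      exact hb ⟨fun h => absurd h hi, fun h => absurd h hj⟩
    rw [hent]
    by_cases hab : a = b
    · subst hab
      have : ¬ (i = a ∧ j = a) := fun h => hij (h.1.trans h.2.symm)
      simp [this]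
    · by_cases hc : i = a ∧ j = b
      · obtain ⟨rfl, rfl⟩ := hc
        simp [hij, hj, not_lt.1 hi, ht]
      · simp [hab, hc]

/-- The commutator relation `[E_il(a), E_lj(b)] = E_ij(ab)`. -/
lemma transvection_commutator_s15 {ι R : Type*} [Fintype ι] [DecidableEq ι] [CommRing R]
    {i j l : ι} (hij : i ≠ j) (hil : i ≠ l) (hlj : l ≠ j) (a b : R) :
    SpecialLinearGroup.transvection hij (a * b) =
      SpecialLinearGroup.transvection hil a * SpecialLinearGroup.transvection hlj b *
      SpecialLinearGroup.transvection hil (-a) * SpecialLinearGroup.transvection hlj (-b) := by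
  apply Subtype.ext
  simp only [Matrix.SpecialLinearGroup.coe_mul, SpecialLinearGroup.transvection_coe]
  simp [Matrix.mul_add, Matrix.add_mul, hij.symm, hil.symm, hlj.symm,
    ← Matrix.single_neg]
  abel

/-- `F(k)` contains every elementary matrix with off-diagonal entry in `(k²)`. Inside a block it
arises as a commutator through an index of the other block. -/
lemma hasElem_F {n m k : ℕ} (hm : 1 ≤ m) (hmn : m < n) :
    HasElem (Fgroup n m k hmn.le) ((k : ℤ) ^ 2) := by
  rintro i j hij t ⟨r, rfl⟩
  by_cases hb : ((i : ℕ) < m ↔ (j : ℕ) < m)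
  · obtain ⟨l, hl⟩ : ∃ l : Fin n, ¬((i : ℕ) < m ↔ (l : ℕ) < m) := by
      by_cases hi : (i : ℕ) < m
      · exact ⟨⟨m, hmn⟩, by simp [hi]⟩
      · exact ⟨⟨0, by omega⟩, by simp only [hi, false_iff]; simp; omega⟩
    have hl' : ¬((l : ℕ) < m ↔ (j : ℕ) < m) := fun h => hl (hb.trans h.symm)
    have hil : i ≠ l := by rintro rfl; exact hl Iff.rfl
    have hlj : l ≠ j := by rintro rfl; exact hl' Iff.rfl
    have : (k : ℤ) ^ 2 * r = k * (k * r) := by ring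
    rw [this, transvection_commutator_s15 hij hil hlj]
    refine Subgroup.mul_mem _ (Subgroup.mul_mem _ (Subgroup.mul_mem _ ?_ ?_) ?_) ?_ <;>
      refine transvection_mem_F_of_ne_block _ _ (by assumption) _ ?_
    · exact dvd_rfl
    · exact ⟨r, rfl⟩
    · exact ⟨-1, by ring⟩
    · exact ⟨-r, by ring⟩
  · exact transvection_mem_F_of_ne_block _ _ hb _ ⟨k * r, by ring⟩

/-! ### Reduction modulo the level -/

/-- Any congruence subgroup containing `F(k)` contains the principal congruence subgroup of the
level `k⁴`, whatever its own level `L` is: modulo `L` every matrix of that subgroup is a product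
of elementary matrices from `F(k)`. -/
lemma mem_of_congr {n m k : ℕ} (hm : 1 ≤ m) (hmn : m < n)
    (H : Subgroup (Matrix.SpecialLinearGroup (Fin n) ℤ)) (hH : IsCongruenceSubgroup n H)
    (hF : Fgroup n m k hmn.le ≤ H) (g : Matrix.SpecialLinearGroup (Fin n) ℤ)
    (hg : ∀ i j : Fin n, ((k ^ 4 : ℕ) : ℤ) ∣ (g.1 i j - if i = j then 1 else 0)) : g ∈ H := by
  obtain ⟨L, hL, hLH⟩ := hH
  have : NeZero L := ⟨by omega⟩
  let φ := SpecialLinearGroup.map (n := Fin n) (Int.castRingHom (ZMod L))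
  have hφ : ∀ (x : Matrix.SpecialLinearGroup (Fin n) ℤ) (i j : Fin n),
      (φ x).1 i j = ((x.1 i j : ℤ) : ZMod L) := fun _ _ _ => rfl
  have hel : HasElem (H.map φ) ((k : ZMod L) ^ 2) := by
    rintro i j hij t ⟨r, rfl⟩
    refine ⟨SpecialLinearGroup.transvection hij ((k : ℤ) ^ 2 * (r.val : ℤ)),
      hF (hasElem_F hm hmn i j hij _ (Dvd.intro _ rfl)), ?_⟩
    ext a b
    rw [hφ, SpecialLinearGroup.transvection_coe, SpecialLinearGroup.transvection_coe,
      Matrix.add_apply, Matrix.add_apply, Matrix.one_apply, Matrix.one_apply,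
      Matrix.single_apply, Matrix.single_apply]
    split_ifs <;> simp
  have hmem : φ g ∈ H.map φ := by
    refine mem_of_congr_one (zmod_exists_isUnit_add L) hel _ ∅ (φ g) rfl (fun i j => ?_)
      (by simp)
    obtain ⟨r, hr⟩ := hg i j
    refine ⟨(r : ZMod L), ?_⟩
    have := congrArg (Int.cast : ℤ → ZMod L) hr
    rw [hφ, Matrix.one_apply]
    push_cast at this
    rw [this]
    ring
  obtain ⟨x, hx, hxg⟩ := hmem
  refine (H.mul_mem_cancel_left (H.inv_mem hx)).1 (hLH (x⁻¹ * g) fun i j => ?_)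
  have h1 : φ (x⁻¹ * g) = 1 := by rw [map_mul, map_inv, hxg, inv_mul_cancel]
  rw [← ZMod.intCast_zmod_eq_zero_iff_dvd]
  have h2 : (φ (x⁻¹ * g)).1 i j = (1 : Matrix (Fin n) (Fin n) (ZMod L)) i j := by
    rw [h1]; rfl
  rw [hφ, Matrix.one_apply] at h2
  push_cast
  rw [h2, sub_self]

/-- A congruence subgroup contains the kernel of reduction to the finite group `SL_n(ℤ/N)`. -/
lemma IsCongruenceSubgroup.finiteIndex {n : ℕ}
    {H : Subgroup (Matrix.SpecialLinearGroup (Fin n) ℤ)} (hH : IsCongruenceSubgroup n H) :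
    H.FiniteIndex := by
  obtain ⟨N, hN, hNH⟩ := hH
  have : NeZero N := ⟨by omega⟩
  let φ := SpecialLinearGroup.map (n := Fin n) (Int.castRingHom (ZMod N))
  have hle : φ.ker ≤ H := by
    intro g hg
    refine hNH g fun i j => ?_
    rw [← ZMod.intCast_zmod_eq_zero_iff_dvd]
    have h2 : (φ g).1 i j = (1 : Matrix (Fin n) (Fin n) (ZMod N)) i j := by
      rw [MonoidHom.mem_ker.1 hg]; rfl
    rw [Matrix.one_apply] at h2
    push_cast
    rw [← h2]
    exact sub_self _
  have : φ.ker.FiniteIndex := inferInstance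
  exact Subgroup.finiteIndex_of_le hle

/-- For `n ≥ 3`, `1 ≤ m < n`, `k ≥ 1`: the congruence closure `Γ_k` of `F(k)`
is itself a congruence subgroup of `SL_n(ℤ)` (it contains some principal congruence subgroup
`SL_n(Nℤ)` with `N ≥ 1`) and it has finite index in `SL_n(ℤ)`. -/
theorem congruence_closure_is_congruence_and_finite_index (n m k : ℕ)
    (hn : 3 ≤ n) (hm : 1 ≤ m) (hmn : m < n) (hk : 1 ≤ k) :
    IsCongruenceSubgroup n (GammaCl n m k hmn.le) ∧ (GammaCl n m k hmn.le).FiniteIndex := by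
  have hcong : IsCongruenceSubgroup n (GammaCl n m k hmn.le) := by
    refine ⟨k ^ 4, Nat.one_le_pow _ _ hk, fun g hg => ?_⟩
    rw [GammaCl, Subgroup.mem_sInf]
    rintro H ⟨hH, hF⟩
    exact mem_of_congr hm hmn H hH hF g hg
  exact ⟨hcong, hcong.finiteIndex⟩
end

section
/- Let n ≥ 3, let 1 ≤ m < n, and for each k ≥ 1 let F(k) be the subgroup of SL_n(ℤ) generated by U⁺(kℤ), U⁻(kℤ) and M(kℤ), regarded as a subgroup of SL_n(ℚ). Then for every x ∈ SL_n(ℚ) and every integer k ≥ 1 there exists an integer l = l(k,x) ≥ 1 such that x·F(k)·x⁻¹ contains F(l). -/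
/-!
Call an invertible rational matrix `M` good if for every `k` some `F(l)` satisfies `M⁻¹ F(l) M ⊆ F(k)`.
Good matrices are closed under products, and every invertible rational matrix is a product of
diagonal matrices and transvections, so it suffices that these are good (`good_diagonal`,
`good_transvection`). Determinant one is irrelevant for `M`, and this is why goodness is phrased for
matrices, through the equation `g M = M u`, rather than for elements of `SL_n(ℚ)`.

`F(l)` is generated by `M(l)` and the elementary matrices `e_{ij}(l t)` for all `i ≠ j`
(`FgroupQ_le`), and the two kinds of generators are treated separately.

* Elementary matrices: conjugation by a diagonal matrix rescales them. Conjugation of `e_{ij}(s)` by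
  `e_{ab}(q)` multiplies it by at most one further elementary matrix, except for `(i,j) = (b,a)`.
  Since `n ≥ 3`, there is a third index `c`, and `e_{ba}(s s')` is the commutator of `e_{bc}(s)` and
  `e_{ca}(s')`, which reduces this case to the others (`transvection_conj_transvection`).
* `M(l)`: conjugation by a block diagonal matrix keeps `M(ℚ)` stable, and once `l` clears the
  denominators the conjugates are integral and congruent to `1` mod `k` (`Mblock_conj_blockDiag`).
  A transvection `1 + X` across the blocks normalizes `M(ℚ) U±(ℚ)`, and
  `(1 + X)⁻¹ g (1 + X) = g (1 + g⁻¹ (g X - X g))` has its unipotent part in `U±(k)`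
  (`Mblock_conj_cross`).
-/

open Matrix

/-- `F(k)` regarded as a subgroup of `SL_n(ℚ)`, via the inclusion `SL_n(ℤ) → SL_n(ℚ)`. -/
def FgroupQ (n m k : ℕ) (h : m ≤ n) : Subgroup (Matrix.SpecialLinearGroup (Fin n) ℚ) :=
  Subgroup.closure
    (Matrix.SpecialLinearGroup.map (n := Fin n) (Int.castRingHom ℚ) ''
      (Uplus n m k ∪ Uminus n m k ∪ Mblock n m k h))

namespace ConjF

variable {n m : ℕ}

/-! ### Block diagonal matrices and `M(k)` -/

/-- `A` is block diagonal for the partition of the indices into `{i | i < m}` and its complement. -/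
def BlockDiag (m : ℕ) {R : Type*} [Zero R] (A : Matrix (Fin n) (Fin n) R) : Prop :=
  ∀ i j : Fin n, ¬((i : ℕ) < m ↔ (j : ℕ) < m) → A i j = 0

lemma blockDiag_iff_commute {R : Type*} [CommRing R] (A : Matrix (Fin n) (Fin n) R) :
    BlockDiag m A ↔
      Commute A (diagonal fun i : Fin n => if (i : ℕ) < m then (1 : R) else 0) := by
  constructor
  · intro h
    ext i j
    have := h i j
    simp only [mul_diagonal, diagonal_mul]
    by_cases hi : (i : ℕ) < m <;> by_cases hj : (j : ℕ) < m <;> simp_all [Nat.not_lt.2]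
  · intro h i j hij
    have := congrFun (congrFun h.eq i) j
    simp only [mul_diagonal, diagonal_mul] at this
    by_cases hi : (i : ℕ) < m <;> by_cases hj : (j : ℕ) < m <;> simp_all

lemma BlockDiag.mul {R : Type*} [CommRing R] {A B : Matrix (Fin n) (Fin n) R}
    (hA : BlockDiag m A) (hB : BlockDiag m B) : BlockDiag m (A * B) := by
  rw [blockDiag_iff_commute] at *
  exact hA.mul_left hB

lemma BlockDiag.of_mul_eq_one {R : Type*} [CommRing R] {A B : Matrix (Fin n) (Fin n) R}
    (hA : BlockDiag m A) (hAB : A * B = 1) : BlockDiag m B := by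
  have hBA : B * A = 1 := mul_eq_one_comm.mp hAB
  rw [blockDiag_iff_commute] at *
  set E := diagonal fun i : Fin n => if (i : ℕ) < m then (1 : R) else 0
  calc B * E = B * E * (A * B) := by rw [hAB, mul_one]
    _ = B * (E * A) * B := by noncomm_ring
    _ = B * A * E * B := by rw [← hA.eq]; noncomm_ring
    _ = E * B := by rw [hBA, one_mul]

/-- Principal submatrices indexed by the range of `f` are multiplicative when the left factor has
no entry leading out of that range. -/
lemma submatrix_mul_of_block {R : Type*} [CommRing R] {r : ℕ} (f : Fin r → Fin n)
    (hf : Function.Injective f) (A B : Matrix (Fin n) (Fin n) R)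
    (hA : ∀ i j, j ∉ Set.range f → A (f i) j = 0) :
    (A * B).submatrix f f = A.submatrix f f * B.submatrix f f := by
  ext i j
  simp only [submatrix_apply, mul_apply]
  symm
  refine Finset.sum_of_injOn f hf.injOn (by simp) ?_ (by simp)
  intro c _ hc
  rw [hA i c (by simpa using hc), zero_mul]

lemma det_submatrix_of_conj {r : ℕ} (f : Fin r → Fin n)
    (hf : Function.Injective f) (g h : Matrix (Fin n) (Fin n) ℤ) (P Q : Matrix (Fin n) (Fin n) ℚ)
    (hg0 : ∀ i j, j ∉ Set.range f → g (f i) j = 0)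
    (hP0 : ∀ i j, j ∉ Set.range f → P (f i) j = 0)
    (hPQ : P * Q = 1)
    (hgh : g.map (Int.cast : ℤ → ℚ) * P = P * h.map (Int.cast : ℤ → ℚ))
    (hg : (g.submatrix f f).det = 1) : (h.submatrix f f).det = 1 := by
  have h1 := congrArg (fun M => (M.submatrix f f).det) hgh
  have h2 := congrArg (fun M => (M.submatrix f f).det) hPQ
  rw [submatrix_mul_of_block f hf _ _ hP0, det_mul] at h1 h2
  rw [submatrix_mul_of_block f hf _ _ (by intro i j hj; simp [hg0 i j hj]), det_mul] at h1
  rw [submatrix_one f hf, det_one] at h2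
  have e : ∀ M : Matrix (Fin n) (Fin n) ℤ,
      ((M.map (Int.cast : ℤ → ℚ)).submatrix f f).det = ((M.submatrix f f).det : ℚ) := by
    intro M
    exact ((Int.castRingHom ℚ).map_det (M.submatrix f f)).symm
  rw [e, e, hg] at h1
  have hne : (P.submatrix f f).det ≠ 0 := left_ne_zero_of_mul_eq_one h2
  have : (1 : ℚ) = ((h.submatrix f f).det : ℚ) := by
    apply mul_left_cancel₀ hne
    rw [← h1]; push_cast; ring
  exact_mod_cast this.symm

/-- `Mblock` with the congruence written as `g = 1 + k Z` and the diagonal blocks as submatrices. -/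
lemma mem_Mblock_iff {k : ℕ} (h : m ≤ n) (g : SpecialLinearGroup (Fin n) ℤ) :
    g ∈ Mblock n m k h ↔ BlockDiag m g.1 ∧
      (∃ Z : Matrix (Fin n) (Fin n) ℤ, g.1 = 1 + (k : ℤ) • Z) ∧
      (g.1.submatrix (Fin.castLE h) (Fin.castLE h)).det = 1 ∧
      (g.1.submatrix (fun i : Fin (n - m) => (⟨m + (i : ℕ), by have := i.2; omega⟩ : Fin n))
        (fun i : Fin (n - m) => (⟨m + (i : ℕ), by have := i.2; omega⟩ : Fin n))).det = 1 := by
  refine and_congr Iff.rfl (and_congr ?_ Iff.rfl)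
  constructor
  · intro H
    choose Z hZ using H
    refine ⟨of Z, ?_⟩
    ext i j
    have := hZ i j
    simp only [Matrix.add_apply, one_apply, Matrix.smul_apply, of_apply, smul_eq_mul]
    linarith
  · rintro ⟨Z, hZ⟩ i j
    rw [hZ, Matrix.add_apply, Matrix.smul_apply, one_apply, add_sub_cancel_left]
    exact dvd_mul_right _ _

lemma range_castLE (h : m ≤ n) (i : Fin n) : i ∈ Set.range (Fin.castLE h) ↔ (i : ℕ) < m := by
  constructor
  · rintro ⟨j, rfl⟩; exact j.2
  · intro hi; exact ⟨⟨i, hi⟩, rfl⟩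

lemma range_shift (h : m ≤ n) (i : Fin n) :
    i ∈ Set.range (fun i : Fin (n - m) => (⟨m + (i : ℕ), by have := i.2; omega⟩ : Fin n)) ↔
      ¬ (i : ℕ) < m := by
  constructor
  · rintro ⟨j, rfl⟩; simp
  · intro hi; exact ⟨⟨i - m, by omega⟩, Fin.ext (by simp; omega)⟩

lemma shift_injective (h : m ≤ n) : Function.Injective
    (fun i : Fin (n - m) => (⟨m + (i : ℕ), by have := i.2; omega⟩ : Fin n)) := by
  intro i j hij
  have := congrArg Fin.val hij
  exact Fin.ext (by simpa using this)

lemma map_one_add_smul (z : ℤ) (Z : Matrix (Fin n) (Fin n) ℤ) :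
    (1 + z • Z).map (Int.cast : ℤ → ℚ) = 1 + (z : ℚ) • Z.map (Int.cast : ℤ → ℚ) := by
  ext i j
  simp only [map_apply, Matrix.add_apply, Matrix.smul_apply, one_apply, smul_eq_mul, Int.cast_add,
    Int.cast_mul, apply_ite (Int.cast : ℤ → ℚ), Int.cast_one, Int.cast_zero]

lemma map_num (P : Matrix (Fin n) (Fin n) ℚ) :
    P.num.map (Int.cast : ℤ → ℚ) = (P.den : ℚ) • P := by
  have hd : (P.den : ℚ) ≠ 0 := by exact_mod_cast P.den_ne_zero
  ext i j
  have := P.num_div_den i j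
  rw [div_eq_iff hd] at this
  rw [map_apply, this, Matrix.smul_apply, smul_eq_mul, mul_comm]

/-- Conjugation by a block diagonal rational matrix sends `M(l)` into `M(k)`, as soon as `l/k`
clears the denominators of that matrix and of its inverse. -/
lemma Mblock_conj_blockDiag (h : m ≤ n) (P Q : Matrix (Fin n) (Fin n) ℚ) (hP : BlockDiag m P)
    (hPQ : P * Q = 1) (k : ℕ) (hk : 1 ≤ k) :
    ∃ d : ℕ, 1 ≤ d ∧ ∀ l, d ∣ l → ∀ g ∈ Mblock n m l h, ∃ u ∈ Mblock n m k h,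
      g.1.map (Int.cast : ℤ → ℚ) * P = P * u.1.map (Int.cast : ℤ → ℚ) := by
  have hQP : Q * P = 1 := mul_eq_one_comm.mp hPQ
  have hQ : BlockDiag m Q := hP.of_mul_eq_one hPQ
  refine ⟨k * (P.den * Q.den), Nat.mul_pos hk (Nat.mul_pos
    (Nat.pos_of_ne_zero P.den_ne_zero) (Nat.pos_of_ne_zero Q.den_ne_zero)), ?_⟩
  rintro l ⟨c, rfl⟩ g hg
  obtain ⟨hgB, ⟨Z, hZ⟩, hg1, hg2⟩ := (mem_Mblock_iff h g).1 hg
  set U : Matrix (Fin n) (Fin n) ℤ := 1 + (k : ℤ) • ((c : ℤ) • (Q.num * Z * P.num)) with hU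
  have hUQ : U.map (Int.cast : ℤ → ℚ) = Q * g.1.map (Int.cast : ℤ → ℚ) * P := by
    have e1 : U.map (Int.cast : ℤ → ℚ) =
        1 + (k : ℚ) • ((c : ℚ) • (Q.num.map (Int.cast : ℤ → ℚ) * Z.map (Int.cast : ℤ → ℚ) *
          P.num.map (Int.cast : ℤ → ℚ))) := by
      rw [← map_mul_intCast, ← map_mul_intCast, hU, smul_smul, map_one_add_smul, smul_smul]
      push_cast
      rfl
    have e2 : g.1.map (Int.cast : ℤ → ℚ) =
        1 + ((k : ℚ) * (P.den * Q.den) * c) • Z.map (Int.cast : ℤ → ℚ) := by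
      rw [hZ, map_one_add_smul]
      push_cast
      rfl
    rw [e1, e2, map_num, map_num, mul_add, add_mul, mul_one, hQP]
    simp only [smul_mul_assoc, mul_smul_comm, smul_smul]
    congr 2
    ring
  have hconj : g.1.map (Int.cast : ℤ → ℚ) * P = P * U.map (Int.cast : ℤ → ℚ) := by
    rw [hUQ, ← mul_assoc, ← mul_assoc, hPQ, one_mul]
  have hdet : U.det = 1 := by
    have h1 := congrArg det hUQ
    have h2 := congrArg det hQP
    rw [det_mul, det_one] at h2
    have e : ∀ M : Matrix (Fin n) (Fin n) ℤ,
      (M.map (Int.cast : ℤ → ℚ)).det = (M.det : ℚ) := fun M =>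
        ((Int.castRingHom ℚ).map_det M).symm
    rw [det_mul, det_mul, e, e, g.2] at h1
    have : (U.det : ℚ) = 1 := by rw [h1]; push_cast; linarith
    exact_mod_cast this
  have hUB : BlockDiag m U := by
    have hgQ : BlockDiag m (g.1.map (Int.cast : ℤ → ℚ)) := by
      intro i j hij
      simp [hgB i j hij]
    have := (hQ.mul hgQ).mul hP
    rw [← hUQ] at this
    intro i j hij
    have := this i j hij
    simpa using this
  refine ⟨⟨U, hdet⟩, (mem_Mblock_iff h _).2 ⟨hUB, ⟨_, hU⟩, ?_, ?_⟩, hconj⟩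
  · refine det_submatrix_of_conj _ (Fin.castLE_injective h) g.1 U P Q ?_ ?_ hPQ hconj hg1
    · intro i j hj
      rw [range_castLE] at hj
      exact hgB _ _ (by simp [hj])
    · intro i j hj
      rw [range_castLE] at hj
      exact hP _ _ (by simp [hj])
  · refine det_submatrix_of_conj _ (shift_injective h) g.1 U P Q ?_ ?_ hPQ hconj hg2
    · intro i j hj
      rw [range_shift h, not_not] at hj
      exact hgB _ _ (by simp [hj])
    · intro i j hj
      rw [range_shift h, not_not] at hj
      exact hP _ _ (by simp [hj])

/-! ### Elementary matrices and generation of `F(k)` -/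

lemma det_submatrix_transvection {r : ℕ} (f : Fin r → Fin n) (hf : Function.Injective f)
    {i j : Fin n} (hij : i ≠ j) (c : ℤ) :
    ((transvection i j c).submatrix f f).det = 1 := by
  by_cases hi : i ∈ Set.range f
  · by_cases hj : j ∈ Set.range f
    · obtain ⟨a, rfl⟩ := hi
      obtain ⟨b, rfl⟩ := hj
      have : (transvection (f a) (f b) c).submatrix f f = transvection a b c := by
        ext x y
        simp [transvection, one_apply, single_apply, hf.eq_iff]
      rw [this, det_transvection_of_ne]
      exact fun e => hij (congrArg f e)
    · have : (transvection i j c).submatrix f f = 1 := by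
        ext x y
        have : j ≠ f y := fun e => hj ⟨y, e.symm⟩
        simp [transvection, one_apply, hf.eq_iff, this]
      rw [this, det_one]
  · have : (transvection i j c).submatrix f f = 1 := by
      ext x y
      have : i ≠ f x := fun e => hi ⟨x, e.symm⟩
      simp [transvection, one_apply, hf.eq_iff, this]
    rw [this, det_one]

lemma transvection_mem (h : m ≤ n) (k : ℕ) {i j : Fin n} (hij : i ≠ j) (t : ℤ) :
    SpecialLinearGroup.transvection hij ((k : ℚ) * t) ∈ FgroupQ n m k h := by
  apply Subgroup.subset_closure
  refine ⟨SpecialLinearGroup.transvection hij ((k : ℤ) * t), ?_, ?_⟩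
  · by_cases hi : (i : ℕ) < m <;> by_cases hj : (j : ℕ) < m
    · right
      rw [mem_Mblock_iff]
      refine ⟨?_, ⟨single i j t, ?_⟩, det_submatrix_transvection _ (Fin.castLE_injective h) hij _,
        det_submatrix_transvection _ (shift_injective h) hij _⟩
      · intro a b hab
        simp only [SpecialLinearGroup.transvection_coe, Matrix.add_apply, one_apply, single_apply]
        grind
      · simp [SpecialLinearGroup.transvection_coe]
    · left; left
      intro a b
      simp only [SpecialLinearGroup.transvection_coe, Matrix.add_apply, one_apply, single_apply]
      have := dvd_mul_right (k : ℤ) t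
      have := dvd_zero (k : ℤ)
      grind
    · left; right
      intro a b
      simp only [SpecialLinearGroup.transvection_coe, Matrix.add_apply, one_apply, single_apply]
      have := dvd_mul_right (k : ℤ) t
      have := dvd_zero (k : ℤ)
      grind
    · right
      rw [mem_Mblock_iff]
      refine ⟨?_, ⟨single i j t, ?_⟩, det_submatrix_transvection _ (Fin.castLE_injective h) hij _,
        det_submatrix_transvection _ (shift_injective h) hij _⟩
      · intro a b hab
        simp only [SpecialLinearGroup.transvection_coe, Matrix.add_apply, one_apply, single_apply]
        grind
      · simp [SpecialLinearGroup.transvection_coe]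
  · ext a b
    simp [SpecialLinearGroup.transvection_coe, one_apply, single_apply,
      apply_ite (Int.cast : ℤ → ℚ)]

/-- The part of `Y` whose row index satisfies `p` and whose column index does not. -/
def offBlock {R : Type*} [Zero R] (p : Fin n → Prop) [DecidablePred p]
    (Y : Matrix (Fin n) (Fin n) R) : Matrix (Fin n) (Fin n) R :=
  of fun i j => if p i ∧ ¬ p j then Y i j else 0

/-- A unipotent `1 + kY` with `Y` supported in an off-diagonal block is a product of elementary
matrices of level `k`, because `Y ↦ 1 + Y` turns sums into products there. -/
lemma exists_unipotent (p : Fin n → Prop) [DecidablePred p] (k : ℕ)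
    (H : Subgroup (SpecialLinearGroup (Fin n) ℚ))
    (hH : ∀ (i j : Fin n) (hij : i ≠ j) (t : ℤ),
      SpecialLinearGroup.transvection hij ((k : ℚ) * t) ∈ H)
    (Y : Matrix (Fin n) (Fin n) ℤ) :
    ∃ u ∈ H, u.1 = 1 + (k : ℚ) • (offBlock p Y).map (Int.cast : ℤ → ℚ) := by
  induction Y using Matrix.induction_on' with
  | h_zero =>
    refine ⟨1, H.one_mem, ?_⟩
    ext i j
    simp [offBlock]
  | h_add A B hA hB =>
    obtain ⟨u, hu, hu'⟩ := hA
    obtain ⟨v, hv, hv'⟩ := hB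
    refine ⟨u * v, H.mul_mem hu hv, ?_⟩
    have h0 : (offBlock p A).map (Int.cast : ℤ → ℚ) * (offBlock p B).map (Int.cast : ℤ → ℚ) = 0 := by
      ext i j
      rw [mul_apply]
      apply Finset.sum_eq_zero
      intro c _
      by_cases hc : p c <;> simp [offBlock, hc]
    have h1 : (offBlock p (A + B)).map (Int.cast : ℤ → ℚ) =
        (offBlock p A).map (Int.cast : ℤ → ℚ) + (offBlock p B).map (Int.cast : ℤ → ℚ) := by
      ext i j
      by_cases hc : p i ∧ ¬ p j <;> simp [offBlock, hc]
    change u.1 * v.1 = _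
    rw [hu', hv', h1, mul_add, add_mul, add_mul, smul_mul_smul_comm, h0]
    simp only [mul_one, one_mul, smul_zero, add_zero, smul_add]
    abel
  | h_std_basis i j x =>
    by_cases hp : p i ∧ ¬ p j
    · have hij : i ≠ j := fun e => hp.2 (e ▸ hp.1)
      refine ⟨_, hH i j hij x, ?_⟩
      rw [SpecialLinearGroup.transvection_coe]
      ext a b
      simp only [offBlock, Matrix.add_apply, Matrix.smul_apply, map_apply, of_apply, single_apply, smul_eq_mul]
      by_cases hab : i = a ∧ j = b
      · obtain ⟨rfl, rfl⟩ := hab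
        simp [hp]
      · simp [hab]
    · refine ⟨1, H.one_mem, ?_⟩
      ext a b
      simp only [offBlock, Matrix.add_apply, Matrix.smul_apply, map_apply, of_apply, single_apply, smul_eq_mul]
      by_cases hab : i = a ∧ j = b
      · obtain ⟨rfl, rfl⟩ := hab
        simp [hp]
      · simp [hab]

lemma unipotent_mem (p : Fin n → Prop) [DecidablePred p] (k : ℕ)
    (H : Subgroup (SpecialLinearGroup (Fin n) ℚ))
    (hH : ∀ (i j : Fin n) (hij : i ≠ j) (t : ℤ),
      SpecialLinearGroup.transvection hij ((k : ℚ) * t) ∈ H)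
    (g : SpecialLinearGroup (Fin n) ℤ) (hd : ∀ i, g.1 i i = 1)
    (h0 : ∀ i j, i ≠ j → ¬ (p i ∧ ¬ p j) → g.1 i j = 0)
    (hk : ∀ i j, p i ∧ ¬ p j → (k : ℤ) ∣ g.1 i j) :
    SpecialLinearGroup.map (Int.castRingHom ℚ) g ∈ H := by
  have hY : ∀ i j : Fin n, ∃ y : ℤ, p i ∧ ¬ p j → g.1 i j = k * y := by
    intro i j
    by_cases hc : p i ∧ ¬ p j
    · obtain ⟨y, hy⟩ := hk i j hc
      exact ⟨y, fun _ => hy⟩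
    · exact ⟨0, fun h => absurd h hc⟩
  choose Y hY using hY
  obtain ⟨u, hu, hu'⟩ := exists_unipotent p k H hH (of Y)
  have hg : g.1 = 1 + (k : ℤ) • offBlock p (of Y) := by
    ext i j
    simp only [Matrix.add_apply, Matrix.smul_apply, offBlock, of_apply, smul_eq_mul]
    by_cases hij : i = j
    · subst hij
      simp [hd]
    · by_cases hc : p i ∧ ¬ p j
      · rw [if_pos hc, hY i j hc, one_apply_ne hij, zero_add]
      · rw [if_neg hc, h0 i j hij hc, one_apply_ne hij, mul_zero, zero_add]
  suffices e : SpecialLinearGroup.map (Int.castRingHom ℚ) g = u from e ▸ hu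
  apply Subtype.ext
  change g.1.map (Int.cast : ℤ → ℚ) = u.1
  rw [hu', hg, map_one_add_smul, Int.cast_natCast]

/-- To contain `F(k)`, a subgroup only needs the elementary matrices of level `k` and `M(k)`. -/
lemma FgroupQ_le (h : m ≤ n) (k : ℕ) (H : Subgroup (SpecialLinearGroup (Fin n) ℚ))
    (hH : ∀ (i j : Fin n) (hij : i ≠ j) (t : ℤ),
      SpecialLinearGroup.transvection hij ((k : ℚ) * t) ∈ H)
    (hM : ∀ g ∈ Mblock n m k h, SpecialLinearGroup.map (Int.castRingHom ℚ) g ∈ H) :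
    FgroupQ n m k h ≤ H := by
  rw [FgroupQ, Subgroup.closure_le]
  rintro _ ⟨g, (hg | hg) | hg, rfl⟩
  · refine unipotent_mem (fun i : Fin n => (i : ℕ) < m) k H hH g ?_ ?_ ?_
    · intro i
      simpa using hg i i
    · intro i j hij hc
      have := hg i j
      rwa [if_neg hij, if_neg (by omega)] at this
    · intro i j hc
      have := hg i j
      rwa [if_neg (by rintro rfl; exact hc.2 hc.1), if_pos (by omega)] at this
  · refine unipotent_mem (fun i : Fin n => ¬ (i : ℕ) < m) k H hH g ?_ ?_ ?_
    · intro i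
      simpa using hg i i
    · intro i j hij hc
      have := hg i j
      rwa [if_neg hij, if_neg (by omega)] at this
    · intro i j hc
      have := hg i j
      rwa [if_neg (by rintro rfl; exact hc.2 hc.1), if_pos (by omega)] at this
  · exact hM g hg

/-! ### Good matrices -/

/-- The elements `g` with `M⁻¹ g M ∈ H`, written without inverting `M`. -/
def conjSubgroup (M : Matrix (Fin n) (Fin n) ℚ) (H : Subgroup (SpecialLinearGroup (Fin n) ℚ)) :
    Subgroup (SpecialLinearGroup (Fin n) ℚ) where
  carrier := {g | ∃ u ∈ H, g.1 * M = M * u.1}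
  one_mem' := ⟨1, H.one_mem, by simp⟩
  mul_mem' := by
    rintro a b ⟨u, hu, hau⟩ ⟨v, hv, hbv⟩
    refine ⟨u * v, H.mul_mem hu hv, ?_⟩
    change a.1 * b.1 * M = M * (u.1 * v.1)
    rw [mul_assoc, hbv, ← mul_assoc, hau,
      mul_assoc]
  inv_mem' := by
    rintro a ⟨u, hu, hau⟩
    refine ⟨u⁻¹, H.inv_mem hu, ?_⟩
    have h1 : (a⁻¹).1 * a.1 = 1 := congrArg Subtype.val (inv_mul_cancel a)
    have h2 : u.1 * (u⁻¹).1 = 1 := congrArg Subtype.val (mul_inv_cancel u)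
    calc (a⁻¹).1 * M = (a⁻¹).1 * (M * u.1) * (u⁻¹).1 := by
          rw [mul_assoc, mul_assoc, h2, mul_one]
      _ = M * (u⁻¹).1 := by rw [← hau, ← mul_assoc, h1, one_mul]

/-- For every `k`, some `M⁻¹ F(l) M` lies in `F(k)`. -/
def Good (h : m ≤ n) (M : Matrix (Fin n) (Fin n) ℚ) : Prop :=
  ∀ k : ℕ, 1 ≤ k → ∃ l : ℕ, 1 ≤ l ∧ FgroupQ n m l h ≤ conjSubgroup M (FgroupQ n m k h)

lemma Good.mul {h : m ≤ n} {A B : Matrix (Fin n) (Fin n) ℚ} (hA : Good h A) (hB : Good h B) :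
    Good h (A * B) := by
  intro k hk
  obtain ⟨l, hl, hl'⟩ := hB k hk
  obtain ⟨r, hr, hr'⟩ := hA l hl
  refine ⟨r, hr, fun g hg => ?_⟩
  obtain ⟨u, hu, hgu⟩ := hr' hg
  obtain ⟨v, hv, huv⟩ := hl' hu
  exact ⟨v, hv, by rw [← mul_assoc, hgu, mul_assoc, huv, mul_assoc]⟩

lemma good_of {h : m ≤ n} {M : Matrix (Fin n) (Fin n) ℚ}
    (H1 : ∀ k : ℕ, 1 ≤ k → ∃ d : ℕ, 1 ≤ d ∧ ∀ l, d ∣ l → ∀ (i j : Fin n) (hij : i ≠ j) (t : ℤ),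
      SpecialLinearGroup.transvection hij ((l : ℚ) * t) ∈ conjSubgroup M (FgroupQ n m k h))
    (H2 : ∀ k : ℕ, 1 ≤ k → ∃ d : ℕ, 1 ≤ d ∧ ∀ l, d ∣ l → ∀ g ∈ Mblock n m l h,
      SpecialLinearGroup.map (Int.castRingHom ℚ) g ∈ conjSubgroup M (FgroupQ n m k h)) :
    Good h M := by
  intro k hk
  obtain ⟨d, hd, hd'⟩ := H1 k hk
  obtain ⟨e, he, he'⟩ := H2 k hk
  exact ⟨d * e, Nat.mul_pos hd he, FgroupQ_le h _ _ (hd' _ (dvd_mul_right _ _))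
    (he' _ (dvd_mul_left _ _))⟩

lemma Mblock_blockDiag_mem (h : m ≤ n) (P Q : Matrix (Fin n) (Fin n) ℚ) (hP : BlockDiag m P)
    (hPQ : P * Q = 1) (k : ℕ) (hk : 1 ≤ k) :
    ∃ d : ℕ, 1 ≤ d ∧ ∀ l, d ∣ l → ∀ g ∈ Mblock n m l h,
      SpecialLinearGroup.map (Int.castRingHom ℚ) g ∈ conjSubgroup P (FgroupQ n m k h) := by
  obtain ⟨d, hd, hd'⟩ := Mblock_conj_blockDiag h P Q hP hPQ k hk
  refine ⟨d, hd, fun l hl g hg => ?_⟩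
  obtain ⟨u, hu, hgu⟩ := hd' l hl g hg
  exact ⟨_, Subgroup.subset_closure ⟨u, Or.inr hu, rfl⟩, hgu⟩

lemma good_diagonal (h : m ≤ n) (D : Fin n → ℚ) (hD : det (diagonal D) ≠ 0) :
    Good h (diagonal D) := by
  have hD' : ∀ i, D i ≠ 0 := by
    rw [det_diagonal, Finset.prod_ne_zero_iff] at hD
    exact fun i => hD i (Finset.mem_univ i)
  refine good_of ?_ fun k hk => Mblock_blockDiag_mem h _ (diagonal fun i => (D i)⁻¹) ?_ ?_ k hk
  · intro k hk
    set R : Matrix (Fin n) (Fin n) ℚ := of fun i j => (D i)⁻¹ * D j with hR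
    have hden : (R.den : ℚ) ≠ 0 := by exact_mod_cast R.den_ne_zero
    refine ⟨k * R.den, Nat.mul_pos hk (Nat.pos_of_ne_zero R.den_ne_zero), ?_⟩
    rintro l ⟨c, rfl⟩ i j hij t
    refine ⟨_, transvection_mem h k hij (c * t * R.num i j), ?_⟩
    have h1 := R.num_div_den i j
    rw [div_eq_iff hden] at h1
    rw [SpecialLinearGroup.transvection_coe, SpecialLinearGroup.transvection_coe]
    rw [add_mul, mul_add, one_mul, mul_one]
    congr 1
    ext a b
    rw [mul_diagonal, diagonal_mul]
    simp only [single_apply]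
    split_ifs with hab
    · obtain ⟨rfl, rfl⟩ := hab
      push_cast
      rw [h1, hR, of_apply]
      have := hD' i
      field_simp
    · simp
  · intro i j hij
    exact diagonal_apply_ne _ (by rintro rfl; exact hij Iff.rfl)
  · rw [diagonal_mul_diagonal, ← diagonal_one]
    congr 1
    ext i
    exact mul_inv_cancel₀ (hD' i)

/-! ### Conjugation by transvections -/

lemma single_mul_single_zero (a b c d : Fin n) (x y : ℚ) (hbc : b ≠ c) :
    single a b x * single c d y = 0 := by
  simp [hbc]

lemma single_eq_neg (a b : Fin n) {x y : ℚ} (hxy : x = -y) : single a b x = -single a b y := by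
  ext i j
  rw [Matrix.neg_apply, single_apply, single_apply, hxy]
  split_ifs <;> simp

/-- Elementary matrices against a transvection `e_{ab}(q)`. Every `e_{ij}` with `(i,j) ≠ (b,a)` is
handled by the commutator formula; `e_{ba}` is the commutator of `e_{bc}` and `e_{ca}` for a third
index `c`. -/
lemma transvection_conj_transvection (hn : 3 ≤ n) (h : m ≤ n) {a b : Fin n} (hab : a ≠ b) (q : ℚ)
    (k : ℕ) (hk : 1 ≤ k) :
    ∃ d : ℕ, 1 ≤ d ∧ ∀ l, d ∣ l → ∀ (i j : Fin n) (hij : i ≠ j) (t : ℤ),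
      SpecialLinearGroup.transvection hij ((l : ℚ) * t) ∈
        conjSubgroup (transvection a b q) (FgroupQ n m k h) := by
  have hq : (q.den : ℚ) ≠ 0 := by exact_mod_cast q.den_ne_zero
  have hqd : (q.den : ℚ) * q = q.num := Rat.den_mul_eq_num q
  -- elementary matrices other than `e_{ba}`
  have key : ∀ (i j : Fin n) (hij : i ≠ j) (t : ℤ), ¬ (i = b ∧ j = a) →
      SpecialLinearGroup.transvection hij (((k * q.den : ℕ) : ℚ) * t) ∈
        conjSubgroup (transvection a b q) (FgroupQ n m k h) := by
    intro i j hij t hne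
    have hself := transvection_mem h k hij (q.den * t)
    by_cases hib : i = b
    · subst hib
      have hja : j ≠ a := fun e => hne ⟨rfl, e⟩
      refine ⟨_, mul_mem (transvection_mem h k hja.symm (-(q.num * t))) hself, ?_⟩
      change (1 + single i j (((k * q.den : ℕ) : ℚ) * t)) * (1 + single a i q) =
        (1 + single a i q) * ((1 + single a j ((k : ℚ) * ((-(q.num * t) : ℤ) : ℚ))) *
          (1 + single i j ((k : ℚ) * ((q.den * t : ℤ) : ℚ))))
      have e0 : single a i q * single i j ((k : ℚ) * ((q.den * t : ℤ) : ℚ)) =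
          - single a j ((k : ℚ) * ((-(q.num * t) : ℤ) : ℚ)) := by
        rw [single_mul_single_same]
        apply single_eq_neg
        push_cast
        rw [← hqd]
        ring
      have e1 := single_mul_single_zero i j a i
        ((k : ℚ) * ((q.den * t : ℤ) : ℚ)) q hja
      have e2 := single_mul_single_zero a i a j q
        ((k : ℚ) * ((-(q.num * t) : ℤ) : ℚ)) hab.symm
      have e3 := single_mul_single_zero a j i j (((k : ℚ) * ((-(q.num * t) : ℤ) : ℚ)))
        ((k : ℚ) * ((q.den * t : ℤ) : ℚ)) hij.symm
      have e4 : (((k * q.den : ℕ) : ℚ) * t) = ((k : ℚ) * ((q.den * t : ℤ) : ℚ)) := by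
        push_cast; ring
      rw [e4]
      generalize single a j ((k : ℚ) * ((-(q.num * t) : ℤ) : ℚ)) = V at *
      generalize single i j ((k : ℚ) * ((q.den * t : ℤ) : ℚ)) = T at *
      generalize single a i q = X at *
      simp only [mul_add, add_mul, mul_one, one_mul, e0, e1, e2, e3, mul_zero]
      abel
    · by_cases hja : j = a
      · subst hja
        refine ⟨_, mul_mem (transvection_mem h k hib (q.num * t)) hself, ?_⟩
        change (1 + single i j (((k * q.den : ℕ) : ℚ) * t)) * (1 + single j b q) =
          (1 + single j b q) * ((1 + single i b ((k : ℚ) * ((q.num * t : ℤ) : ℚ))) *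
            (1 + single i j ((k : ℚ) * ((q.den * t : ℤ) : ℚ))))
        have e4 : (((k * q.den : ℕ) : ℚ) * t) = ((k : ℚ) * ((q.den * t : ℤ) : ℚ)) := by
          push_cast; ring
        have e0 : single i j ((k : ℚ) * ((q.den * t : ℤ) : ℚ)) * single j b q =
            single i b ((k : ℚ) * ((q.num * t : ℤ) : ℚ)) := by
          rw [single_mul_single_same]
          congr 1
          push_cast
          rw [← hqd]
          ring
        have e1 := single_mul_single_zero j b i j q
          ((k : ℚ) * ((q.den * t : ℤ) : ℚ)) (Ne.symm hib)
        have e2 := single_mul_single_zero j b i b q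
          ((k : ℚ) * ((q.num * t : ℤ) : ℚ)) (Ne.symm hib)
        have e3 := single_mul_single_zero i b i j ((k : ℚ) * ((q.num * t : ℤ) : ℚ))
          ((k : ℚ) * ((q.den * t : ℤ) : ℚ)) (Ne.symm hib)
        rw [e4]
        generalize single i b ((k : ℚ) * ((q.num * t : ℤ) : ℚ)) = V at *
        generalize single i j ((k : ℚ) * ((q.den * t : ℤ) : ℚ)) = T at *
        generalize single j b q = X at *
        simp only [mul_add, add_mul, mul_one, one_mul, e0, e1, e2, e3, mul_zero]
        abel
      · refine ⟨_, hself, ?_⟩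
        have e4 : (((k * q.den : ℕ) : ℚ) * t) = ((k : ℚ) * ((q.den * t : ℤ) : ℚ)) := by
          push_cast; ring
        change (1 + single i j (((k * q.den : ℕ) : ℚ) * t)) * (1 + single a b q) =
          (1 + single a b q) * (1 + single i j ((k : ℚ) * ((q.den * t : ℤ) : ℚ)))
        have e0 := single_mul_single_zero i j a b ((k : ℚ) * ((q.den * t : ℤ) : ℚ)) q hja
        have e1 := single_mul_single_zero a b i j q ((k : ℚ) * ((q.den * t : ℤ) : ℚ))
          (Ne.symm hib)
        rw [e4]
        simp only [mul_add, add_mul, mul_one, one_mul, e0, e1]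
        abel
  set d := k * q.den with hd
  refine ⟨d * d, ?_, ?_⟩
  · have : 1 ≤ d := Nat.mul_pos hk q.den_pos
    exact Nat.mul_pos this this
  rintro l ⟨e, rfl⟩ i j hij t
  by_cases hne : i = b ∧ j = a
  · obtain ⟨rfl, rfl⟩ := hne
    obtain ⟨c, hci, hcj⟩ : ∃ c : Fin n, c ≠ i ∧ c ≠ j := by
      have : ∃ c : Fin n, c ∉ ({i, j} : Finset (Fin n)) := by
        by_contra! hc
        have h1 : (Finset.univ : Finset (Fin n)) ⊆ {i, j} := fun c _ => hc c
        have h2 := Finset.card_le_card h1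
        have h3 := Finset.card_le_two (a := i) (b := j)
        rw [Finset.card_univ, Fintype.card_fin] at h2
        omega
      obtain ⟨c, hc⟩ := this
      exact ⟨c, by simp at hc; tauto⟩
    set H := conjSubgroup (transvection j i q) (FgroupQ n m k h)
    have A1 := key i c hci.symm 1 (fun h => hcj h.2)
    have A2 := key i c hci.symm (-1) (fun h => hcj h.2)
    have B1 := key c j hcj (e * t) (fun h => hci h.1)
    have B2 := key c j hcj (-(e * t)) (fun h => hci h.1)
    convert H.mul_mem (H.mul_mem A1 B1) (H.mul_mem A2 B2) using 1
    apply Subtype.ext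
    change 1 + single i j (((d * d * e : ℕ) : ℚ) * t) =
      (1 + single i c ((d : ℚ) * ((1 : ℤ) : ℚ))) * (1 + single c j ((d : ℚ) * ((e * t : ℤ) : ℚ))) *
        ((1 + single i c ((d : ℚ) * ((-1 : ℤ) : ℚ))) *
          (1 + single c j ((d : ℚ) * ((-(e * t) : ℤ) : ℚ))))
    have n1 : single i c ((d : ℚ) * ((-1 : ℤ) : ℚ)) = - single i c ((d : ℚ) * ((1 : ℤ) : ℚ)) := by
      apply single_eq_neg; push_cast; ring
    have n2 : single c j ((d : ℚ) * ((-(e * t) : ℤ) : ℚ)) =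
        - single c j ((d : ℚ) * ((e * t : ℤ) : ℚ)) := by
      apply single_eq_neg; push_cast; ring
    have n3 : single i j (((d * d * e : ℕ) : ℚ) * t) =
        single i c ((d : ℚ) * ((1 : ℤ) : ℚ)) * single c j ((d : ℚ) * ((e * t : ℤ) : ℚ)) := by
      rw [single_mul_single_same]; congr 1; push_cast; ring
    have m1 := single_mul_single_zero i c i c ((d : ℚ) * ((1 : ℤ) : ℚ))
        ((d : ℚ) * ((1 : ℤ) : ℚ)) hci
    have m2 := single_mul_single_zero c j c j ((d : ℚ) * ((e * t : ℤ) : ℚ))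
        ((d : ℚ) * ((e * t : ℤ) : ℚ)) hcj.symm
    have m3 := single_mul_single_zero c j i c ((d : ℚ) * ((e * t : ℤ) : ℚ))
        ((d : ℚ) * ((1 : ℤ) : ℚ)) hij.symm
    rw [n1, n2, n3]
    generalize single i c ((d : ℚ) * ((1 : ℤ) : ℚ)) = X at *
    generalize single c j ((d : ℚ) * ((e * t : ℤ) : ℚ)) = T at *
    have m4 : ∀ S, T * (X * S) = 0 := fun S => by rw [← mul_assoc, m3, zero_mul]
    have m5 : ∀ S, X * (X * S) = 0 := fun S => by rw [← mul_assoc, m1, zero_mul]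
    simp only [mul_add, add_mul, mul_one, one_mul, mul_neg, neg_mul, mul_assoc, m1, m2, m3, m4, m5,
      mul_zero]
    abel
  · convert key i j hij (d * e * t) hne using 2
    push_cast
    ring

/-- `M(l)` against a transvection `1 + X` lying across the two blocks:
`(1 + X)⁻¹ g (1 + X) = g (1 + g⁻¹ (g X - X g))`, and the last factor is unipotent of level `k`. -/
lemma Mblock_conj_cross (h : m ≤ n) {a b : Fin n} (p : Fin n → Prop) [DecidablePred p]
    (hp : ∀ i j : Fin n, (p i ↔ p j) ↔ ((i : ℕ) < m ↔ (j : ℕ) < m))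
    (ha : p a) (hb : ¬ p b) (q : ℚ) (k : ℕ) (hk : 1 ≤ k) :
    ∃ d : ℕ, 1 ≤ d ∧ ∀ l, d ∣ l → ∀ g ∈ Mblock n m l h,
      SpecialLinearGroup.map (Int.castRingHom ℚ) g ∈
        conjSubgroup (transvection a b q) (FgroupQ n m k h) := by
  refine ⟨k * q.den, Nat.mul_pos hk q.den_pos, ?_⟩
  rintro l ⟨c, rfl⟩ g hg
  have hkl : k ∣ k * q.den * c := ⟨q.den * c, by ring⟩
  have hgk : g ∈ Mblock n m k h := by
    obtain ⟨h1, h2, h3⟩ := hg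
    exact ⟨h1, fun i j => (Int.natCast_dvd_natCast.2 hkl).trans (h2 i j), h3⟩
  obtain ⟨hgB, ⟨Z, hZ⟩, -, -⟩ := (mem_Mblock_iff h g).1 hg
  have hgi : g.1 * (g⁻¹).1 = 1 := congrArg Subtype.val (mul_inv_cancel g)
  have hiB : BlockDiag m (g⁻¹).1 := hgB.of_mul_eq_one hgi
  set X' : Matrix (Fin n) (Fin n) ℤ := single a b q.num with hX'
  set W : Matrix (Fin n) (Fin n) ℤ := (c : ℤ) • (Z * X' - X' * Z) with hW
  set Y := (g⁻¹).1 * W with hY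
  obtain ⟨u, hu, hu'⟩ := exists_unipotent p k (FgroupQ n m k h)
    (fun i j hij t => transvection_mem h k hij t) Y
  have hqd : (q.den : ℚ) * q = q.num := Rat.den_mul_eq_num q
  have hlW : ((k * q.den : ℕ) : ℤ) • W = g.1 * X' - X' * g.1 := by
    rw [hZ, hW]
    simp only [add_mul, mul_add, one_mul, mul_one, smul_mul_assoc, mul_smul_comm, smul_smul]
    push_cast
    rw [smul_sub]
    abel
  have hpb : ∀ A : Matrix (Fin n) (Fin n) ℤ, BlockDiag m A → ∀ i j, ¬ (p i ↔ p j) → A i j = 0 :=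
    fun A hA i j hij => hA i j (by rwa [← hp])
  -- the commutator `g X' - X' g` lies in the same off-diagonal block as `X'`
  have hWs : ∀ i j, ¬ (p i ∧ ¬ p j) → W i j = 0 := by
    intro i j hij
    have h1 := congrFun (congrFun hlW i) j
    have h2 : (g.1 * X') i j = 0 := by
      by_cases hj : j = b
      · subst hj
        rw [hX', mul_single_apply_same, hpb _ hgB i a (by tauto), zero_mul]
      · rw [hX', mul_single_apply_of_ne _ _ _ _ _ hj]
    have h3 : (X' * g.1) i j = 0 := by
      by_cases hi : i = a
      · subst hi
        rw [hX', single_mul_apply_same, hpb _ hgB b j (by tauto), mul_zero]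
      · rw [hX', single_mul_apply_of_ne _ _ _ _ _ hi]
    rw [Matrix.smul_apply, Matrix.sub_apply, h2, h3, sub_zero, smul_eq_mul] at h1
    refine (mul_eq_zero.1 h1).resolve_left ?_
    have : 0 < k * q.den := Nat.mul_pos hk q.den_pos
    exact_mod_cast this.ne'
  have hYs : offBlock p Y = Y := by
    ext i j
    simp only [offBlock, of_apply]
    split_ifs with hij
    · rfl
    · rw [hY, mul_apply]
      symm
      apply Finset.sum_eq_zero
      intro r _
      by_cases hr : p r ∧ ¬ p j
      · rw [hpb _ hiB i r (by tauto), zero_mul]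
      · rw [hWs r j hr, mul_zero]
  rw [hYs] at hu'
  refine ⟨SpecialLinearGroup.map (Int.castRingHom ℚ) g * u,
    mul_mem (Subgroup.subset_closure ⟨g, Or.inr hgk, rfl⟩) hu, ?_⟩
  set G : Matrix (Fin n) (Fin n) ℚ := g.1.map (Int.cast : ℤ → ℚ) with hG
  change G * transvection a b q = transvection a b q * (G * u.1)
  set X : Matrix (Fin n) (Fin n) ℚ := single a b q with hX
  have hgY : g.1 * Y = W := by rw [hY, ← mul_assoc, hgi, one_mul]
  have hGY : G * Y.map (Int.cast : ℤ → ℚ) = W.map (Int.cast : ℤ → ℚ) := by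
    rw [hG, ← map_mul_intCast, hgY]
  have hXX' : X'.map (Int.cast : ℤ → ℚ) = (q.den : ℚ) • X := by
    ext i j
    simp only [hX', hX, map_apply, Matrix.smul_apply, single_apply, smul_eq_mul, mul_ite, hqd]
    split_ifs <;> simp
  have hkW : (k : ℚ) • W.map (Int.cast : ℤ → ℚ) = G * X - X * G := by
    have hq : (q.den : ℚ) ≠ 0 := by exact_mod_cast q.den_ne_zero
    have h1 := congrArg (fun M : Matrix (Fin n) (Fin n) ℤ => M.map (Int.cast : ℤ → ℚ)) hlW
    have h2 : (((k * q.den : ℕ) : ℤ) • W).map (Int.cast : ℤ → ℚ) =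
        (q.den : ℚ) • ((k : ℚ) • W.map (Int.cast : ℤ → ℚ)) := by
      ext i j
      simp only [map_apply, Matrix.smul_apply, smul_eq_mul]
      push_cast
      ring
    have h3 : (g.1 * X' - X' * g.1).map (Int.cast : ℤ → ℚ) = (q.den : ℚ) • (G * X - X * G) := by
      rw [Matrix.map_sub _ (by simp), map_mul_intCast, map_mul_intCast, hXX', smul_sub,
        mul_smul_comm, smul_mul_assoc]
    rw [h2, h3] at h1
    exact smul_right_injective _ hq h1
  have hXX : X * X = 0 := single_mul_single_zero _ _ _ _ _ _ (by rintro rfl; exact hb ha)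
  have hXGX : X * G * X = 0 := by
    rw [hX, single_mul_mul_single, hG, map_apply, hpb _ hgB b a (by tauto)]
    simp
  have hGu : G * u.1 = G + (G * X - X * G) := by
    rw [hu', mul_add, mul_one, mul_smul_comm, hGY, hkW]
  rw [hGu, transvection, ← hX]
  simp only [mul_add, add_mul, mul_sub, mul_one, one_mul, ← mul_assoc, hXX, hXGX]
  noncomm_ring

lemma good_transvection (hn : 3 ≤ n) (h : m ≤ n) (t : TransvectionStruct (Fin n) ℚ) :
    Good h t.toMatrix := by
  obtain ⟨a, b, hab, q⟩ := t
  rw [TransvectionStruct.toMatrix_mk]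
  refine good_of (fun k hk => transvection_conj_transvection hn h hab q k hk) fun k hk => ?_
  by_cases hc : (a : ℕ) < m ↔ (b : ℕ) < m
  · refine Mblock_blockDiag_mem h _ (transvection a b (-q)) ?_ ?_ k hk
    · intro i j hij
      simp only [transvection, Matrix.add_apply, one_apply, single_apply]
      grind
    · rw [transvection_mul_transvection_same _ _ hab]; simp
  · by_cases ha : (a : ℕ) < m
    · exact Mblock_conj_cross h (fun i => (i : ℕ) < m) (fun _ _ => Iff.rfl) ha (by tauto) q k hk
    · exact Mblock_conj_cross h (fun i => ¬ (i : ℕ) < m) (fun _ _ => not_iff_not) ha (by tauto) q k hk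

end ConjF

/-- For `n ≥ 3`, `1 ≤ m < n`, every `x ∈ SL_n(ℚ)` and every `k ≥ 1`, there
exists `l = l(k,x) ≥ 1` such that `x·F(k)·x⁻¹ ⊇ F(l)`. -/
theorem conjugate_of_F_contains_some_F (n m : ℕ) (hn : 3 ≤ n) (hm : 1 ≤ m) (hmn : m < n) :
    ∀ (x : Matrix.SpecialLinearGroup (Fin n) ℚ) (k : ℕ), 1 ≤ k →
      ∃ l : ℕ, 1 ≤ l ∧
        (FgroupQ n m l hmn.le : Set (Matrix.SpecialLinearGroup (Fin n) ℚ)) ⊆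
          (fun h => x * h * x⁻¹) '' (FgroupQ n m k hmn.le : Set (Matrix.SpecialLinearGroup (Fin n) ℚ)) := by
  intro x
  have hx : ConjF.Good hmn.le x.1 :=
    Matrix.diagonal_transvection_induction_of_det_ne_zero _ x.1 (by simp [x.2])
      (ConjF.good_diagonal hmn.le) (ConjF.good_transvection hn hmn.le)
      fun _ _ _ _ hA hB => hA.mul hB
  intro k hk
  obtain ⟨l, hl, hF⟩ := hx k hk
  refine ⟨l, hl, fun g hg => ?_⟩
  obtain ⟨u, hu, hgu⟩ := hF hg
  refine ⟨u, hu, ?_⟩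
  have : g * x = x * u := Subtype.ext hgu
  exact mul_inv_eq_of_eq_mul this.symm
end
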